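/- arXiv:1508.03154 — 4 statements merged into one kernel-verified Lean document; each statement's English description precedes it below -/
import Mathlib

section
/- Suppose f is irreducible in ℤ[u^{±1}] and noncyclotomic. Then for every positive integer k the set P_k(α_f) = {x ∈ X_f : α_f^k x = x} of points of period k is finite, and the topological entropy of α_f satisfies h(α_f) = lim_{k→∞} (1/k)·log |P_k(α_f)|. -/
open Filter Topology Polynomial

noncomputable section

/-- The circle `ℝ/ℤ`. -/
abbrev Torus := AddCircle (1 : ℝ)

/-- The shift `σ` on `𝕋^ℤ`: `(σ x)_n = x_{n+1}`. -/
def shiftT (x : ℤ → Torus) : ℤ → Torus := fun n => x (n + 1)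

/-- `f(σ)` acting on `𝕋^ℤ`. -/
def fsT (f : Polynomial ℤ) (x : ℤ → Torus) : ℤ → Torus :=
  fun n => ∑ k ∈ Finset.range (f.natDegree + 1), f.coeff k • x (n + (k : ℤ))

/-- `X_f = ker f(σ) ⊆ 𝕋^ℤ`. -/
def Xf (f : Polynomial ℤ) : Set (ℤ → Torus) := {x | ∀ n, fsT f x n = 0}

/-- `f` is noncyclotomic: no complex root of `f` is a root of unity. -/
def Noncyclotomic (f : Polynomial ℤ) : Prop :=
  ∀ θ : ℂ, Polynomial.aeval θ f = 0 → ∀ n : ℕ, 0 < n → θ ^ n ≠ 1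

/-- The set of points of `X_f` of period `k` under `α_f = σ|_{X_f}`. -/
def Pk (f : Polynomial ℤ) (k : ℕ) : Set (ℤ → Torus) :=
  {x | x ∈ Xf f ∧ ∀ n : ℤ, x (n + (k : ℤ)) = x n}


/-!
Reducing modulo `1` the real sequences of period `k` whose image under `f(σ)` is integral gives
`P_k(α_f)`. The inverse of `f(σ)` on sequences of period `k` has norm at most `k / c`, where `c` is
the minimum of `|f|` on the `k`-th roots of unity. The crucial estimate is that `c ≥ exp (-εk)` for
every `ε > 0` and all large `k`. It follows from Gelfond's method: a root `θ` of `f` very close to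
a root of unity `exp (2πib/k)` would be a common zero of many integer polynomials, obtained by the
pigeonhole principle from an exponential polynomial in `z` and `exp (2πiz/k)` that is tiny on a
large disc. Liouville's inequality turns tiny values at `θ` into zeros, and there are more of these
than a Vandermonde determinant allows.

Upper bound for the entropy: the coordinates `x_0, …, x_{k-1}` of a point of `X_f`, continued with
period `k`, satisfy the equations defining `X_f` except at `deg f` places. Rounding the errors there
to multiples of `1/q` with `q` about `exp (2εk)` leaves at most `|P_k| q ^ deg f` windows up to
small perturbations. Lower bound: distinct points of `P_k` differ at some coordinate by at least the
inverse of the length of `f`, since otherwise `f(σ)` would map the small lift of their difference to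
integers of absolute value less than `1`, hence to `0`.
-/

section Liouville

/-- The length of an integer polynomial: the sum of the absolute values of its coefficients. -/
def l1Norm (Q : ℤ[X]) : ℝ := Q.sum fun _ a => |(a : ℝ)|

theorem l1Norm_eq_sum_range {Q : ℤ[X]} {n : ℕ} (hn : Q.natDegree < n) :
    l1Norm Q = ∑ i ∈ Finset.range n, |(Q.coeff i : ℝ)| :=
  sum_over_range' Q (by simp) n hn

theorem one_le_l1Norm {Q : ℤ[X]} (hQ : Q ≠ 0) : 1 ≤ l1Norm Q := by
  rw [l1Norm_eq_sum_range (Nat.lt_succ_self _)]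
  calc (1 : ℝ) ≤ |(Q.leadingCoeff : ℝ)| := by
        exact_mod_cast Int.one_le_abs (leadingCoeff_ne_zero.mpr hQ)
    _ ≤ _ := Finset.single_le_sum (f := fun i => |(Q.coeff i : ℝ)|) (fun _ _ => abs_nonneg _)
        (Finset.self_mem_range_succ _)

theorem l1Norm_sum_C_mul_X_pow_le {ι : Type*} (s : Finset ι) (c : ι → ℤ) (e : ι → ℕ) :
    l1Norm (∑ i ∈ s, C (c i) * X ^ e i) ≤ ∑ i ∈ s, |(c i : ℝ)| := by
  classical
  set Q := ∑ i ∈ s, C (c i) * X ^ e i with hQ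
  have hcoeff (n : ℕ) : |(Q.coeff n : ℝ)| ≤ ∑ i ∈ s, if n = e i then |(c i : ℝ)| else 0 := by
    simp only [hQ, finsetSum_coeff, coeff_C_mul_X_pow, Int.cast_sum]
    refine (Finset.abs_sum_le_sum_abs _ _).trans_eq (Finset.sum_congr rfl fun i _ => ?_)
    split_ifs <;> simp
  rw [l1Norm_eq_sum_range (Nat.lt_succ_self _)]
  refine (Finset.sum_le_sum fun n _ => hcoeff n).trans ?_
  rw [Finset.sum_comm]
  refine Finset.sum_le_sum fun i _ => ?_
  rw [Finset.sum_ite_eq']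
  split_ifs <;> simp

theorem norm_aeval_le {z : ℂ} {ρ : ℝ} (hρ : 1 ≤ ρ) (hz : ‖z‖ ≤ ρ) {Q : ℤ[X]} {D : ℕ}
    (hD : Q.natDegree ≤ D) : ‖aeval z Q‖ ≤ l1Norm Q * ρ ^ D := by
  rw [aeval_eq_sum_range' (Nat.lt_succ_of_le hD), l1Norm_eq_sum_range (Nat.lt_succ_of_le hD),
    Finset.sum_mul]
  refine norm_sum_le_of_le _ fun i hi => ?_
  rw [zsmul_eq_mul, norm_mul, norm_pow, Complex.norm_intCast]
  gcongr
  exact (pow_le_pow_left₀ (norm_nonneg _) hz i).trans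
    (pow_le_pow_right₀ hρ (Nat.lt_succ_iff.mp (Finset.mem_range.mp hi)))

theorem norm_pow_sub_pow_le {𝕜 : Type*} [NormedField 𝕜] {x y : 𝕜} {ρ : ℝ} (hx : ‖x‖ ≤ ρ)
    (hy : ‖y‖ ≤ ρ) (n : ℕ) :
    ‖x ^ n - y ^ n‖ ≤ n * ρ ^ (n - 1) * ‖x - y‖ := by
  have hρ : 0 ≤ ρ := (norm_nonneg x).trans hx
  rw [← Commute.geom_sum₂_mul (Commute.all x y), norm_mul]
  gcongr
  calc ‖∑ i ∈ Finset.range n, x ^ i * y ^ (n - 1 - i)‖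
      ≤ ∑ _ ∈ Finset.range n, ρ ^ (n - 1) := norm_sum_le_of_le _ fun _ hi => by
        rw [norm_mul, norm_pow, norm_pow,
          ← Nat.add_sub_cancel' (Nat.le_sub_one_of_lt (Finset.mem_range.mp hi)), pow_add,
          Nat.add_sub_cancel_left]
        gcongr
    _ = n * ρ ^ (n - 1) := by simp

theorem norm_aeval_sub_aeval_le {x y : ℂ} {ρ : ℝ} (hρ : 1 ≤ ρ) (hx : ‖x‖ ≤ ρ) (hy : ‖y‖ ≤ ρ)
    {Q : ℤ[X]} {D : ℕ} (hD : Q.natDegree ≤ D) :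
    ‖aeval x Q - aeval y Q‖ ≤ l1Norm Q * (D * ρ ^ D * ‖x - y‖) := by
  have hD' := Nat.lt_succ_of_le hD
  rw [aeval_eq_sum_range' hD', aeval_eq_sum_range' hD', l1Norm_eq_sum_range hD',
    ← Finset.sum_sub_distrib, Finset.sum_mul]
  refine norm_sum_le_of_le _ fun i hi => ?_
  have hi : i ≤ D := Nat.lt_succ_iff.mp (Finset.mem_range.mp hi)
  rw [← smul_sub, zsmul_eq_mul, norm_mul, Complex.norm_intCast]
  gcongr
  refine (norm_pow_sub_pow_le hx hy i).trans ?_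
  gcongr
  omega

theorem isIntegral_pow_mul_aeval {R K : Type*} [CommRing R] [CommRing K] [Algebra R K] {a : R}
    {t : K} (h : IsIntegral R (a • t)) {Q : R[X]} {D : ℕ} (hD : Q.natDegree ≤ D) :
    IsIntegral R (algebraMap R K a ^ D * aeval t Q) := by
  rw [aeval_eq_sum_range' (Nat.lt_succ_of_le hD), Finset.mul_sum]
  refine IsIntegral.sum _ fun i hi => ?_
  have hi : i ≤ D := Nat.lt_succ_iff.mp (Finset.mem_range.mp hi)
  have heq : algebraMap R K a ^ D * Q.coeff i • t ^ i
      = algebraMap R K (a ^ (D - i) * Q.coeff i) * (a • t) ^ i := by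
    rw [← Nat.sub_add_cancel hi, pow_add, Nat.add_sub_cancel, Algebra.smul_def, Algebra.smul_def,
      map_mul, map_pow, mul_pow]
    ring
  rw [heq]
  exact isIntegral_algebraMap.mul (h.pow i)

theorem one_le_prod_norm_embeddings {K : Type*} [Field K] [NumberField K] {x : K} (hx : x ≠ 0)
    (hxint : IsIntegral ℤ x) : 1 ≤ ∏ σ : K →ₐ[ℚ] ℂ, ‖σ x‖ := by
  obtain ⟨y, hy⟩ := IsIntegrallyClosed.isIntegral_iff.mp (Algebra.isIntegral_norm ℚ hxint)
  have hy0 : y ≠ 0 := by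
    rintro rfl
    exact hx (Algebra.norm_eq_zero_iff.mp (hy.symm.trans (map_zero _)))
  rw [← norm_prod, ← Algebra.norm_eq_prod_embeddings, ← hy]
  simpa using (by exact_mod_cast Int.one_le_abs hy0 : (1 : ℝ) ≤ |(y : ℝ)|)

theorem prod_le_pow_card_mul {ι : Type*} [Fintype ι] {u : ι → ℝ} {E v : ℝ} (hu0 : ∀ i, 0 ≤ u i)
    (hu : ∀ i, u i ≤ E) {i₀ : ι} (hi₀ : u i₀ ≤ E * v) :
    ∏ i, u i ≤ E ^ Fintype.card ι * v := by
  classical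
  calc ∏ i, u i = u i₀ * ∏ i ∈ Finset.univ.erase i₀, u i :=
        (Finset.mul_prod_erase _ _ (Finset.mem_univ i₀)).symm
    _ ≤ (E * v) * ∏ _ ∈ Finset.univ.erase i₀, E :=
        mul_le_mul hi₀ (Finset.prod_le_prod (fun i _ => hu0 i) fun i _ => hu i)
          (Finset.prod_nonneg fun i _ => hu0 i) ((hu0 i₀).trans hi₀)
    _ = (E * ∏ _ ∈ Finset.univ.erase i₀, E) * v := by ring
    _ = E ^ Fintype.card ι * v := by
        rw [Finset.mul_prod_erase _ (fun _ => E) (Finset.mem_univ i₀), Finset.prod_const,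
          Finset.card_univ]

/-- Liouville's inequality with constants `C` and `d`: a nonzero value at `θ` of an integer
polynomial of degree `D` and length `ℓ` has absolute value at least `C ^ (-D) * ℓ ^ (-d)`. -/
def LiouvilleBound (θ : ℂ) (C : ℝ) (d : ℕ) : Prop :=
  ∀ Q : ℤ[X], aeval θ Q ≠ 0 → 1 ≤ C ^ Q.natDegree * l1Norm Q ^ d * ‖aeval θ Q‖

theorem exists_liouvilleBound_of_numberField {K : Type*} [Field K] [NumberField K] (t : K)
    (σ₀ : K →ₐ[ℚ] ℂ) : ∃ C d, LiouvilleBound (σ₀ t) C d := by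
  obtain ⟨a, ha, hint⟩ := ((IsFractionRing.isAlgebraic_iff ℤ ℚ K).mpr
    (Algebra.IsAlgebraic.isAlgebraic t)).exists_integral_multiple
  set ρ : ℝ := 1 + ∑ σ : K →ₐ[ℚ] ℂ, ‖σ t‖
  have hρ1 : 1 ≤ ρ := le_add_of_nonneg_right (Finset.sum_nonneg fun _ _ => norm_nonneg _)
  have hρ (σ : K →ₐ[ℚ] ℂ) : ‖σ t‖ ≤ ρ :=
    (Finset.single_le_sum (f := fun σ : K →ₐ[ℚ] ℂ => ‖σ t‖) (fun _ _ => norm_nonneg _)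
      (Finset.mem_univ σ)).trans (le_add_of_nonneg_left zero_le_one)
  have ha1 : (1 : ℝ) ≤ |(a : ℝ)| := by exact_mod_cast Int.one_le_abs ha
  refine ⟨(|(a : ℝ)| * ρ) ^ Fintype.card (K →ₐ[ℚ] ℂ), Fintype.card (K →ₐ[ℚ] ℂ),
    fun Q hQ => ?_⟩
  set D := Q.natDegree
  set E : ℝ := |(a : ℝ)| ^ D * (l1Norm Q * ρ ^ D)
  have hQ0 : Q ≠ 0 := by rintro rfl; exact hQ (map_zero _)
  have : (1 : ℝ) ≤ |(a : ℝ)| ^ D := one_le_pow₀ ha1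
  have hE : |(a : ℝ)| ^ D ≤ E := le_mul_of_one_le_right (by positivity)
    (one_le_mul_of_one_le_of_one_le (one_le_l1Norm hQ0) (one_le_pow₀ hρ1))
  let x : K := algebraMap ℤ K a ^ D * aeval t Q
  have hx (σ : K →ₐ[ℚ] ℂ) : ‖σ x‖ = |(a : ℝ)| ^ D * ‖aeval (σ t) Q‖ := by
    have := aeval_algHom_apply (σ.restrictScalars ℤ) t Q
    simp_all [x]
  have hx0 : x ≠ 0 := fun h => by
    have := hx σ₀
    rw [h, map_zero, norm_zero] at this
    exact mul_ne_zero (by positivity) (norm_ne_zero_iff.mpr hQ) this.symm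
  have hxE (σ : K →ₐ[ℚ] ℂ) : ‖σ x‖ ≤ E := by
    rw [hx]
    exact mul_le_mul_of_nonneg_left (norm_aeval_le hρ1 (hρ σ) le_rfl) (by positivity)
  calc (1 : ℝ) ≤ ∏ σ : K →ₐ[ℚ] ℂ, ‖σ x‖ :=
        one_le_prod_norm_embeddings hx0 (isIntegral_pow_mul_aeval hint le_rfl)
    _ ≤ E ^ Fintype.card (K →ₐ[ℚ] ℂ) * ‖aeval (σ₀ t) Q‖ :=
        prod_le_pow_card_mul (fun σ => norm_nonneg (σ x)) hxE
          ((hx σ₀).trans_le (mul_le_mul_of_nonneg_right hE (norm_nonneg _)))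
    _ = _ := by simp only [E, mul_pow, ← pow_mul, mul_comm D]; ring

theorem exists_liouvilleBound {θ : ℂ} (hθ : IsAlgebraic ℤ θ) : ∃ C d, LiouvilleBound θ C d := by
  have hθQ : IsAlgebraic ℚ θ := hθ.extendScalars (algebraMap ℤ ℚ).injective_int
  have : FiniteDimensional ℚ (IntermediateField.adjoin ℚ {θ}) :=
    IntermediateField.adjoin.finiteDimensional hθQ.isIntegral
  have : NumberField (IntermediateField.adjoin ℚ {θ}) := { to_finiteDimensional := by convert this }
  exact exists_liouvilleBound_of_numberField (IntermediateField.AdjoinSimple.gen ℚ θ)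
    (algebraMap (IntermediateField.adjoin ℚ {θ}) ℂ).toRatAlgHom

theorem LiouvilleBound.mono {θ : ℂ} {C C' : ℝ} {d : ℕ} (h : LiouvilleBound θ C d) (hC : |C| ≤ C') :
    LiouvilleBound θ C' d := fun Q hQ => by
  have hQ0 : Q ≠ 0 := by rintro rfl; exact hQ (map_zero _)
  have hl : 0 ≤ l1Norm Q := zero_le_one.trans (one_le_l1Norm hQ0)
  have hpow : C ^ Q.natDegree ≤ C' ^ Q.natDegree := by
    calc C ^ Q.natDegree ≤ |C| ^ Q.natDegree := (le_abs_self _).trans_eq (abs_pow _ _)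
      _ ≤ C' ^ Q.natDegree := by gcongr
  refine (h Q hQ).trans ?_
  gcongr

/-- Liouville's inequality excludes small nonzero values at `θ`, and `Q(θ)` is close to `Q(ζ)`. -/
theorem LiouvilleBound.aeval_eq_zero {θ ζ : ℂ} {C δ ℓ : ℝ} {d D : ℕ} (h : LiouvilleBound θ C d)
    (hC : 4 ≤ C) (hζ : ‖ζ‖ = 1) (hδ : δ ≤ 1) (hθζ : ‖θ - ζ‖ ≤ δ) {Q : ℤ[X]}
    (hD : Q.natDegree ≤ D) (hℓ : l1Norm Q ≤ ℓ)
    (hsmall : C ^ D * ℓ ^ d * (‖aeval ζ Q‖ + ℓ * C ^ D * δ) < 1) : aeval θ Q = 0 := by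
  by_contra hne
  have hQ0 : Q ≠ 0 := by rintro rfl; exact hne (map_zero _)
  have hQ1 := one_le_l1Norm hQ0
  have hℓ0 : 0 ≤ ℓ := by linarith
  have hθ : ‖θ‖ ≤ 2 := by
    have := norm_add_le (θ - ζ) ζ
    rw [sub_add_cancel] at this
    linarith
  have hD4 : (D : ℝ) * 2 ^ D ≤ C ^ D := by
    calc (D : ℝ) * 2 ^ D ≤ 2 ^ D * 2 ^ D := by
          gcongr; exact_mod_cast Nat.lt_two_pow_self.le
      _ = 4 ^ D := by rw [← mul_pow]; norm_num
      _ ≤ C ^ D := by gcongr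
  have hval : ‖aeval θ Q‖ ≤ ‖aeval ζ Q‖ + ℓ * C ^ D * δ := by
    calc ‖aeval θ Q‖ ≤ ‖aeval ζ Q‖ + ‖aeval θ Q - aeval ζ Q‖ := norm_le_norm_add_norm_sub' _ _
      _ ≤ ‖aeval ζ Q‖ + l1Norm Q * (D * 2 ^ D * ‖θ - ζ‖) := by
          gcongr
          exact norm_aeval_sub_aeval_le one_le_two hθ (hζ.le.trans one_le_two) hD
      _ ≤ ‖aeval ζ Q‖ + ℓ * (C ^ D * δ) := by gcongr
      _ = _ := by ring
  refine absurd hsmall (not_lt.mpr ((h Q hne).trans ?_))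
  gcongr
  linarith

end Liouville

section SmallLinearForms

theorem floor_div_mem_Icc {t w : ℝ} {H : ℕ} (hw : 0 < w) (ht : |t| ≤ w * H) :
    ⌊t / w⌋ ∈ Finset.Icc (-H : ℤ) H := by
  have htw := abs_le.mp ht
  rw [Finset.mem_Icc, Int.le_floor, ← Int.lt_add_one_iff, Int.floor_lt, le_div_iff₀ hw,
    div_lt_iff₀ hw]
  push_cast
  constructor <;> linarith

variable {ι J : Type*} [Fintype ι]

theorem abs_sum_mul_le {c a : ι → ℝ} {N W : ℝ} (hN : 0 ≤ N) (hc : ∀ i, |c i| ≤ N)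
    (ha : ∑ i, |a i| ≤ W) : |∑ i, c i * a i| ≤ W * N := by
  calc |∑ i, c i * a i| ≤ ∑ i, |a i| * N := by
        refine (Finset.abs_sum_le_sum_abs _ _).trans (Finset.sum_le_sum fun i _ => ?_)
        rw [abs_mul, mul_comm]
        gcongr
        exact hc i
    _ ≤ W * N := by
        rw [← Finset.sum_mul]
        gcongr

variable [Fintype J]

theorem exists_int_vec_abs_sum_mul_le (a : J → ι → ℝ) {W : ℝ} (hW : 0 < W)
    (ha : ∀ j, ∑ i, |a j i| ≤ W) {N H : ℕ} (hH : 0 < H)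
    (hcard : (2 * H + 1) ^ Fintype.card J < (N + 1) ^ Fintype.card ι) :
    ∃ c : ι → ℤ, c ≠ 0 ∧ (∀ i, |c i| ≤ N) ∧ ∀ j, |∑ i, c i * a j i| ≤ W * N / H := by
  classical
  have hN : 0 < N := Nat.pos_of_ne_zero fun h => by
    rw [h, zero_add, one_pow] at hcard
    exact (Nat.pos_of_neZero ((2 * H + 1) ^ Fintype.card J)).not_ge (Nat.lt_one_iff.mp hcard).le
  set w : ℝ := W * N / H
  have hw : 0 < w := by positivity
  have hwH : w * H = W * N := div_mul_cancel₀ _ (by positivity)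
  let form (c : ι → ℤ) (j : J) : ℝ := ∑ i, c i * a j i
  let cube : Finset (ι → ℤ) := Fintype.piFinset fun _ => Finset.Icc 0 (N : ℤ)
  let boxes : Finset (J → ℤ) := Fintype.piFinset fun _ => Finset.Icc (-H : ℤ) H
  have hform (c) (hc : c ∈ cube) (j) : |form c j| ≤ w * H := by
    refine hwH ▸ abs_sum_mul_le N.cast_nonneg (fun i => ?_) (ha j)
    have hci := Finset.mem_Icc.mp (Fintype.mem_piFinset.mp hc i)
    rw [abs_of_nonneg (by exact_mod_cast hci.1)]
    exact_mod_cast hci.2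
  have hmaps (c) (hc : c ∈ cube) : (fun j => ⌊form c j / w⌋) ∈ boxes :=
    Fintype.mem_piFinset.mpr fun j => floor_div_mem_Icc hw (hform c hc j)
  obtain ⟨c, hc, c', hc', hne, hbox⟩ :=
    Finset.exists_ne_map_eq_of_card_lt_of_maps_to (s := cube) (t := boxes) (by
      simp only [cube, boxes, Fintype.card_piFinset, Finset.prod_const, Finset.card_univ,
        Int.card_Icc]
      convert hcard using 2 <;> omega) hmaps
  refine ⟨c - c', sub_ne_zero.mpr hne, fun i => ?_, fun j => ?_⟩
  · have hi := Finset.mem_Icc.mp (Fintype.mem_piFinset.mp hc i)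
    have hi' := Finset.mem_Icc.mp (Fintype.mem_piFinset.mp hc' i)
    rw [Pi.sub_apply, abs_le]
    constructor <;> linarith
  · have hsub : ∑ i, ((c - c') i : ℝ) * a j i = (form c j / w - form c' j / w) * w := by
      rw [← sub_div, div_mul_cancel₀ _ hw.ne', ← Finset.sum_sub_distrib]
      refine Finset.sum_congr rfl fun i _ => ?_
      rw [Pi.sub_apply]
      push_cast
      ring
    rw [hsub, abs_mul, abs_of_pos hw]
    exact mul_le_of_le_one_left hw.le (Int.abs_sub_lt_one_of_floor_eq_floor (congrFun hbox j)).le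

theorem exists_int_vec_norm_sum_mul_le (a : J → ι → ℂ) {W : ℝ} (hW : 0 < W)
    (ha : ∀ j, ∑ i, ‖a j i‖ ≤ W) {N H : ℕ} (hH : 0 < H)
    (hcard : (2 * H + 1) ^ (2 * Fintype.card J) < (N + 1) ^ Fintype.card ι) :
    ∃ c : ι → ℤ, c ≠ 0 ∧ (∀ i, |c i| ≤ N) ∧ ∀ j, ‖∑ i, c i * a j i‖ ≤ 2 * (W * N / H) := by
  obtain ⟨c, hc0, hcN, hc⟩ := exists_int_vec_abs_sum_mul_le (J := J ⊕ J)
    (Sum.elim (fun j i => (a j i).re) fun j i => (a j i).im) hW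
    (Sum.rec (fun j => (Finset.sum_le_sum fun i _ => Complex.abs_re_le_norm _).trans (ha j))
      fun j => (Finset.sum_le_sum fun i _ => Complex.abs_im_le_norm _).trans (ha j)) hH
    (by rwa [Fintype.card_sum, ← two_mul])
  refine ⟨c, hc0, hcN, fun j => (Complex.norm_le_abs_re_add_abs_im _).trans ?_⟩
  rw [two_mul]
  exact add_le_add (by simpa using hc (.inl j)) (by simpa using hc (.inr j))

end SmallLinearForms

section SmallCombination

theorem norm_le_of_hasSum_mul_pow {β : ℕ → ℂ} {w s : ℂ} (hs : HasSum (fun n => β n * w ^ n) s)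
    (hw : ‖w‖ ≤ Real.exp (-1)) {A A' : ℝ} {T : ℕ} (hA' : 0 ≤ A') (hβ : ∀ n, ‖β n‖ ≤ A)
    (hβ' : ∀ n < T, ‖β n‖ ≤ A') : ‖s‖ ≤ 2 * (A' + A * Real.exp (-T)) := by
  set r := Real.exp (-1)
  have hr : r ≤ 1 / 2 := by linarith [Real.exp_neg_one_lt_half]
  have hA : 0 ≤ A := (norm_nonneg _).trans (hβ 0)
  have hgeom : HasSum (fun n => r ^ n) (1 - r)⁻¹ :=
    hasSum_geometric_of_lt_one (Real.exp_pos _).le (by linarith)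
  have hgeom2 : (1 - r)⁻¹ ≤ 2 := inv_le_of_inv_le₀ two_pos (by linarith)
  have hterm {n : ℕ} {c : ℝ} (hc : ‖β n‖ ≤ c) : ‖β n * w ^ n‖ ≤ c * r ^ n := by
    rw [norm_mul, norm_pow]
    exact mul_le_mul hc (pow_le_pow_left₀ (norm_nonneg _) hw n) (by positivity)
      ((norm_nonneg _).trans hc)
  have hhead : ‖∑ n ∈ Finset.range T, β n * w ^ n‖ ≤ A' * 2 := by
    refine (norm_sum_le_of_le _ fun n hn => hterm (hβ' n (Finset.mem_range.mp hn))).trans ?_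
    rw [← Finset.mul_sum]
    gcongr
    exact (sum_le_hasSum _ (fun n _ => by positivity) hgeom).trans hgeom2
  have htail : ‖s - ∑ n ∈ Finset.range T, β n * w ^ n‖ ≤ A * r ^ T * 2 := by
    refine (((hasSum_nat_add_iff' T).mpr hs).norm_le_of_bounded (hgeom.mul_left (A * r ^ T))
      fun n => (hterm (hβ _)).trans_eq ?_).trans (by gcongr)
    rw [pow_add]
    ring
  have hrT : r ^ T = Real.exp (-T) := by rw [← Real.exp_nat_mul, mul_neg_one]
  calc ‖s‖ ≤ ‖∑ n ∈ Finset.range T, β n * w ^ n‖ + ‖s - ∑ n ∈ Finset.range T, β n * w ^ n‖ :=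
        norm_le_norm_add_norm_sub' _ _
    _ ≤ A' * 2 + A * r ^ T * 2 := add_le_add hhead htail
    _ = _ := by rw [hrT]; ring

theorem exists_hasSum_mul_div_pow {φ : ℂ → ℂ} {R U : ℝ} (hR : 0 < R)
    (hφ : DiffContOnCl ℂ φ (Metric.ball 0 R)) (hU : ∀ z ∈ Metric.sphere (0 : ℂ) R, ‖φ z‖ ≤ U) :
    ∃ α : ℕ → ℂ, (∀ n, ‖α n‖ ≤ U) ∧ ∀ z, ‖z‖ < R → HasSum (fun n => α n * (z / R) ^ n) (φ z) := by
  have hR0 : (R : ℂ) ≠ 0 := Complex.ofReal_ne_zero.mpr hR.ne'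
  refine ⟨fun n => (n.factorial : ℂ)⁻¹ * R ^ n * iteratedDeriv n φ 0, fun n => ?_, fun z hz => ?_⟩
  · have hn := Complex.norm_iteratedDeriv_le_of_forall_mem_sphere_norm_le n hR hφ hU
    rw [norm_mul, norm_mul, norm_inv, norm_pow, Complex.norm_natCast, Complex.norm_real,
      Real.norm_of_nonneg hR.le]
    calc _ ≤ (n.factorial : ℝ)⁻¹ * R ^ n * (n.factorial * U / R ^ n) := by gcongr
      _ = U := by field_simp
  · have hterm (n : ℕ) : (n.factorial : ℂ)⁻¹ * R ^ n * iteratedDeriv n φ 0 * (z / R) ^ n =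
        (n.factorial : ℂ)⁻¹ • (z - 0) ^ n • iteratedDeriv n φ 0 := by
      rw [sub_zero, smul_eq_mul, smul_eq_mul, div_pow]
      field_simp
    simpa only [hterm] using Complex.hasSum_taylorSeries_on_ball hφ.differentiableOn
      (by simpa using hz : z ∈ Metric.ball (0 : ℂ) R)

theorem exists_int_combination_norm_le {ι : Type*} [Fintype ι] {φ : ι → ℂ → ℂ} {ρ U : ℝ}
    (hρ : 0 < ρ) (hU : 0 < U) (hφ : ∀ i, DiffContOnCl ℂ (φ i) (Metric.ball 0 (Real.exp 1 * ρ)))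
    (hφU : ∀ i, ∀ z ∈ Metric.sphere (0 : ℂ) (Real.exp 1 * ρ), ‖φ i z‖ ≤ U)
    {T N H : ℕ} (hH : 0 < H) (hcard : (2 * H + 1) ^ (2 * T) < (N + 1) ^ Fintype.card ι) :
    ∃ c : ι → ℤ, c ≠ 0 ∧ (∀ i, |c i| ≤ N) ∧ ∀ z : ℂ, ‖z‖ ≤ ρ →
      ‖∑ i, c i * φ i z‖ ≤ 2 * (Fintype.card ι * U * N) * (2 / H + Real.exp (-T)) := by
  have hR : 0 < Real.exp 1 * ρ := by positivity
  choose α hαU hα using fun i => exists_hasSum_mul_div_pow hR (hφ i) (hφU i)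
  have hι : 0 < Fintype.card ι := Nat.pos_of_ne_zero fun h => by
    rw [h, pow_zero] at hcard
    exact (Nat.pos_of_neZero ((2 * H + 1) ^ (2 * T))).not_ge (Nat.lt_one_iff.mp hcard).le
  obtain ⟨c, hc0, hcN, hc⟩ := exists_int_vec_norm_sum_mul_le (J := Fin T) (fun n i => α i n)
    (W := Fintype.card ι * U) (by positivity)
    (fun n => (Finset.sum_le_sum fun i _ => hαU i n).trans_eq (by simp)) hH (by simpa using hcard)
  refine ⟨c, hc0, hcN, fun z hz => ?_⟩
  have hsum : HasSum (fun n => (∑ i, c i * α i n) * (z / (Real.exp 1 * ρ : ℝ)) ^ n)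
      (∑ i, c i * φ i z) := by
    simp only [Finset.sum_mul, mul_assoc]
    refine hasSum_sum fun i _ => (hα i z (hz.trans_lt ?_)).mul_left _
    exact lt_mul_of_one_lt_left hρ (Real.one_lt_exp_iff.mpr one_pos)
  have hβ (n : ℕ) : ‖∑ i, c i * α i n‖ ≤ Fintype.card ι * U * N := by
    refine (norm_sum_le_of_le _ fun i _ => ?_).trans_eq (b := ∑ _ : ι, N * U) (by simp; ring)
    rw [norm_mul, Complex.norm_intCast]
    gcongr
    · exact_mod_cast hcN i
    · exact hαU i n
  refine (norm_le_of_hasSum_mul_pow hsum ?_ (by positivity) hβ fun n hn => hc ⟨n, hn⟩).trans_eq ?_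
  · rw [norm_div, Complex.norm_real, Real.norm_of_nonneg hR.le, div_le_iff₀ hR, ← mul_assoc,
      ← Real.exp_add]
    simpa using hz
  · ring

end SmallCombination

section ZeroEstimate

theorem coeff_prod_sum_of_natDegree_le {R ι : Type*} [CommSemiring R] (s : Finset ι) (p : ι → R[X])
    (d : ι → ℕ) (h : ∀ i ∈ s, (p i).natDegree ≤ d i) :
    (∏ i ∈ s, p i).coeff (∑ i ∈ s, d i) = ∏ i ∈ s, (p i).coeff (d i) := by
  classical
  induction s using Finset.induction_on with
  | empty => simp
  | insert a s ha ih =>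
    have hs (i) (hi : i ∈ s) := h i (Finset.mem_insert_of_mem hi)
    rw [Finset.prod_insert ha, Finset.sum_insert ha, Finset.prod_insert ha, ← ih hs]
    exact coeff_mul_add_eq_of_natDegree_le (h a (Finset.mem_insert_self a s))
      ((natDegree_prod_le s p).trans (Finset.sum_le_sum hs))

section Det

variable {R n : Type*} [CommRing R] [Fintype n] [DecidableEq n] {A : Matrix n n R[X]} {d : n → ℕ}

theorem natDegree_det_le_sum (h : ∀ i j, (A i j).natDegree ≤ d i) :
    A.det.natDegree ≤ ∑ i, d i := by
  rw [Matrix.det_apply]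
  refine natDegree_sum_le_of_forall_le _ _ fun σ _ => (natDegree_smul_le _ _).trans ?_
  rw [← Equiv.sum_comp σ d]
  exact (natDegree_prod_le _ _).trans (Finset.sum_le_sum fun j _ => h (σ j) j)

theorem coeff_det_sum_of_natDegree_le (h : ∀ i j, (A i j).natDegree ≤ d i) :
    A.det.coeff (∑ i, d i) = (Matrix.of fun i j => (A i j).coeff (d i)).det := by
  simp only [Matrix.det_apply, finsetSum_coeff, coeff_smul, Matrix.of_apply]
  refine Finset.sum_congr rfl fun σ _ => ?_
  rw [← Equiv.sum_comp σ d, coeff_prod_sum_of_natDegree_le _ _ _ fun j _ => h (σ j) j]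

end Det

variable {K : Type*} [CommRing K] [IsDomain K]

/-- The determinant of the matrix with entries `x i ^ j * p i (X + β * j)` has a nonzero leading
coefficient, of Vandermonde type, and vanishes at every `w a`. -/
theorem card_le_sum_natDegree_of_forall_sum_eq_zero {n : ℕ} [NeZero n] {x : Fin n → K}
    (hx : Function.Injective x) (hx0 : ∀ i, x i ≠ 0) {p : Fin n → K[X]} (hp : ∀ i, p i ≠ 0) (β : K)
    {P : Type*} {s : Finset P} {w : P → K} (hw : Set.InjOn w s) (r : P → ℕ)
    (hzero : ∀ a ∈ s, ∀ j < n, ∑ i, (p i).eval (w a + β * j) * x i ^ (r a + j) = 0) :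
    s.card ≤ ∑ i, (p i).natDegree := by
  classical
  let A : Matrix (Fin n) (Fin n) K[X] :=
    Matrix.of fun i j => C (x i ^ (j : ℕ)) * taylor (β * (j : ℕ)) (p i)
  have hdeg (i j) : (A i j).natDegree ≤ (p i).natDegree :=
    (natDegree_C_mul_le _ _).trans_eq (natDegree_taylor _ _)
  have hcoeff (i j) : (A i j).coeff (p i).natDegree
      = (p i).leadingCoeff * Matrix.vandermonde x i j := by
    simp only [A, Matrix.of_apply, coeff_C_mul, Matrix.vandermonde_apply]
    rw [← natDegree_taylor (p i) (β * (j : ℕ)), coeff_natDegree, leadingCoeff_taylor, mul_comm]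
  have hdet : A.det ≠ 0 := fun h => by
    have hc := coeff_det_sum_of_natDegree_le hdeg
    simp only [hcoeff, h, coeff_zero] at hc
    rw [Matrix.det_mul_column] at hc
    exact mul_ne_zero (Finset.prod_ne_zero_iff.mpr fun i _ => leadingCoeff_ne_zero.mpr (hp i))
      (Matrix.det_vandermonde_ne_zero_iff.mpr hx) hc.symm
  have hroot (a) (ha : a ∈ s) : A.det.eval (w a) = 0 := by
    rw [← coe_evalRingHom, RingHom.map_det]
    refine Matrix.exists_vecMul_eq_zero_iff.mp ⟨fun i => x i ^ r a,
      fun h => pow_ne_zero _ (hx0 0) (congrFun h 0), funext fun j => ?_⟩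
    rw [Pi.zero_apply, ← hzero a ha j j.2, Matrix.vecMul, dotProduct]
    refine Finset.sum_congr rfl fun i _ => ?_
    simp only [A, RingHom.mapMatrix_apply, Matrix.map_apply, Matrix.of_apply, coe_evalRingHom,
      eval_mul, eval_C, taylor_eval]
    ring
  have hsub : (s.image w).val ⊆ A.det.roots := fun z hz => by
    obtain ⟨a, ha, rfl⟩ := Finset.mem_image.mp hz
    exact (mem_roots hdet).mpr (hroot a ha)
  calc s.card = (s.image w).card := (Finset.card_image_of_injOn hw).symm
    _ ≤ A.det.natDegree := card_le_degree_of_subset_roots hsub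
    _ ≤ _ := natDegree_det_le_sum hdeg

theorem eq_zero_of_forall_sum_eval_mul_pow_eq_zero {L M : ℕ} {x : Fin M → K}
    (hx : Function.Injective x) (hx0 : ∀ m, x m ≠ 0) {p : Fin M → K[X]}
    (hp : ∀ m, (p m).natDegree < L) (β : K) {P : Type*} {s : Finset P} {w : P → K}
    (hw : Set.InjOn w s) (r : P → ℕ)
    (hzero : ∀ a ∈ s, ∀ j < M, ∑ m, (p m).eval (w a + β * j) * x m ^ (r a + j) = 0)
    (hcard : M * (L - 1) < s.card) : p = 0 := by
  classical
  by_contra hne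
  obtain ⟨m₀, hm₀⟩ := Function.ne_iff.mp hne
  let I := {m : Fin M // p m ≠ 0}
  let e := Fintype.equivFin I
  have hI : Fintype.card I ≤ M := (Fintype.card_subtype_le _).trans_eq (Fintype.card_fin M)
  have : NeZero (Fintype.card I) := ⟨(Fintype.card_pos_iff.mpr ⟨⟨m₀, hm₀⟩⟩).ne'⟩
  have hle := card_le_sum_natDegree_of_forall_sum_eq_zero (x := fun i => x (e.symm i).1)
    (hx.comp (Subtype.val_injective.comp e.symm.injective)) (fun i => hx0 _)
    (p := fun i => p (e.symm i).1) (fun i => (e.symm i).2) β hw r fun a ha j hj => by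
      rw [← hzero a ha j (hj.trans_le hI)]
      refine Finset.sum_of_injOn (fun i => (e.symm i).1)
        (Subtype.val_injective.comp e.symm.injective).injOn (by simp) (fun m _ hm => ?_)
        fun _ _ => rfl
      have hpm : p m = 0 := by_contra fun h => hm ⟨e ⟨m, h⟩, by simp⟩
      rw [hpm, eval_zero, zero_mul]
  refine absurd hcard (not_lt.mpr (hle.trans ?_))
  calc ∑ i, (p (e.symm i).1).natDegree ≤ ∑ _ : Fin (Fintype.card I), (L - 1) :=
        Finset.sum_le_sum fun i _ => Nat.le_sub_one_of_lt (hp _)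
    _ = Fintype.card I * (L - 1) := by simp
    _ ≤ M * (L - 1) := Nat.mul_le_mul_right _ hI

end ZeroEstimate

section AuxiliaryPolynomial

/-- The integer polynomial whose value at a root of unity `ζ = exp (2πi b / k)` is the value at
`z = w` of the exponential polynomial `∑ c (l, m) z ^ l exp (2πi m z / k)`, if `w ≡ b r` modulo `k`.
It carries the smallness of that function over to numbers `θ` close to `ζ`. -/
def auxPoly {L M : ℕ} (c : Fin L × Fin M → ℤ) (w r : ℕ) : ℤ[X] :=
  ∑ i, C (c i * (w : ℤ) ^ (i.1 : ℕ)) * X ^ (r * (i.2 : ℕ))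

variable {L M : ℕ} {c : Fin L × Fin M → ℤ}

theorem aeval_auxPoly (c : Fin L × Fin M → ℤ) (w r : ℕ) (z : ℂ) :
    aeval z (auxPoly c w r) = ∑ i, c i * ((w : ℂ) ^ (i.1 : ℕ) * (z ^ r) ^ (i.2 : ℕ)) := by
  simp [auxPoly, pow_mul, mul_assoc]

theorem natDegree_auxPoly_le (c : Fin L × Fin M → ℤ) (w r : ℕ) :
    (auxPoly c w r).natDegree ≤ r * M :=
  natDegree_sum_le_of_forall_le _ _ fun i _ =>
    (natDegree_C_mul_X_pow_le _ _).trans (Nat.mul_le_mul_left r i.2.2.le)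

theorem l1Norm_auxPoly_le {N W : ℝ} (hc : ∀ i, |(c i : ℝ)| ≤ N) (hW : 1 ≤ W) {w : ℕ}
    (hw : (w : ℝ) ≤ W) (r : ℕ) : l1Norm (auxPoly c w r) ≤ L * M * (N * W ^ L) := by
  refine (l1Norm_sum_C_mul_X_pow_le _ _ _).trans ?_
  calc _ ≤ ∑ _ : Fin L × Fin M, N * W ^ L := by
        refine Finset.sum_le_sum fun i _ => ?_
        push_cast
        rw [abs_mul, abs_pow, Nat.abs_cast]
        exact mul_le_mul (hc i) ((pow_le_pow_left₀ w.cast_nonneg hw _).trans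
          (pow_le_pow_right₀ hW i.1.2.le)) (by positivity) ((abs_nonneg _).trans (hc i))
    _ = _ := by simp

theorem injOn_pow_Iio {M₀ : Type*} [GroupWithZero M₀] {x : M₀} (hx0 : x ≠ 0) {S : ℕ}
    (hx : ∀ n, 0 < n → n < S → x ^ n ≠ 1) : Set.InjOn (x ^ ·) (Set.Iio S) := by
  have hlt {m n : ℕ} (hmn : m < n) (hn : n < S) : x ^ m ≠ x ^ n := fun h => by
    refine hx (n - m) (Nat.sub_pos_of_lt hmn) ((Nat.sub_le n m).trans_lt hn)
      (mul_right_cancel₀ (pow_ne_zero m hx0) ?_)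
    rw [one_mul, ← pow_add, Nat.sub_add_cancel hmn.le, h]
  intro m hm n hn h
  rcases lt_trichotomy m n with hmn | hmn | hmn
  · exact absurd h (hlt hmn hn)
  · exact hmn
  · exact absurd h.symm (hlt hmn hm)

theorem eq_zero_of_aeval_auxPoly_eq_zero {θ : ℂ} (hθ0 : θ ≠ 0) (hθ : ∀ n : ℕ, 0 < n → θ ^ n ≠ 1)
    {b k S : ℕ} (hinj : Set.InjOn (fun a : ℕ × ℕ => b * a.1 + k * a.2)
      (Finset.range S ×ˢ Finset.range S : Finset (ℕ × ℕ)))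
    (hzero : ∀ r < S + M, ∀ s < S, aeval θ (auxPoly c (b * r + k * s) r) = 0)
    (hcard : M * (L - 1) < S * S) : c = 0 := by
  funext ⟨l, m⟩
  let p (m : Fin M) : ℂ[X] := ∑ l : Fin L, C (c (l, m) : ℂ) * X ^ (l : ℕ)
  have hpdeg (m) : (p m).natDegree < L :=
    (natDegree_sum_le_of_forall_le (n := L - 1) _ _ fun l' _ =>
      (natDegree_C_mul_X_pow_le _ _).trans (Nat.le_sub_one_of_lt l'.2)).trans_lt
        (Nat.sub_one_lt_of_lt l.2)
  have hp : p = 0 := eq_zero_of_forall_sum_eval_mul_pow_eq_zero (x := fun m : Fin M => θ ^ (m : ℕ))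
    (fun m m' h => Fin.ext (injOn_pow_Iio hθ0 (fun n hn _ => hθ n hn) m.2 m'.2 h))
    (fun m => pow_ne_zero _ hθ0) hpdeg (b : ℂ)
    (w := fun a : ℕ × ℕ => ((b * a.1 + k * a.2 : ℕ) : ℂ))
    (Nat.cast_injective.comp_injOn hinj) (fun a => a.1) (fun a ha j hj => by
      obtain ⟨hr, hs⟩ := Finset.mem_product.mp ha
      rw [← hzero (a.1 + j) (by have := Finset.mem_range.mp hr; omega) a.2
        (Finset.mem_range.mp hs), aeval_auxPoly, Fintype.sum_prod_type_right]
      refine Finset.sum_congr rfl fun m _ => ?_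
      simp only [p, eval_finsetSum, eval_mul, eval_C, eval_pow, eval_X, Finset.sum_mul]
      refine Finset.sum_congr rfl fun l _ => ?_
      push_cast
      ring) (by simpa using hcard)
  have hcoeff : (p m).coeff l = c (l, m) := by
    simp [p, finsetSum_coeff, coeff_X_pow, Fin.val_inj]
  rw [hp, Pi.zero_apply, coeff_zero] at hcoeff
  exact_mod_cast hcoeff.symm

theorem injOn_mul_add_mul {ω : ℂ} {b k S : ℕ} (hk : 0 < k) (hω : ω ^ k = 1)
    (hS : ∀ r, 0 < r → r < S → (ω ^ b) ^ r ≠ 1) :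
    Set.InjOn (fun a : ℕ × ℕ => b * a.1 + k * a.2)
      (Finset.range S ×ˢ Finset.range S : Finset (ℕ × ℕ)) := by
  have hω0 : ω ≠ 0 := by rintro rfl; simp [hk.ne'] at hω
  have hpow (a : ℕ × ℕ) : ω ^ (b * a.1 + k * a.2) = (ω ^ b) ^ a.1 := by
    rw [pow_add, pow_mul, pow_mul, hω, one_pow, mul_one]
  rintro ⟨r, s⟩ ha ⟨r', s'⟩ ha' h
  simp only [Finset.coe_product, Finset.coe_range, Set.mem_prod, Set.mem_Iio] at ha ha'
  have hζ : (ω ^ b) ^ r = (ω ^ b) ^ r' := by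
    rw [← hpow (r, s), ← hpow (r', s')]
    exact congrArg (ω ^ ·) h
  obtain rfl : r = r' := injOn_pow_Iio (pow_ne_zero b hω0) hS ha.1 ha'.1 hζ
  simpa [hk.ne'] using h

theorem LiouvilleBound.pow_ne_one {θ ζ : ℂ} {C δ ℓ : ℝ} {d D r : ℕ} (h : LiouvilleBound θ C d)
    (hθ : ∀ n : ℕ, 0 < n → θ ^ n ≠ 1) (hC : 4 ≤ C) (hζ : ‖ζ‖ = 1) (hδ : δ ≤ 1)
    (hθζ : ‖θ - ζ‖ ≤ δ) (hr : 0 < r) (hrD : r ≤ D)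
    (hℓ : 2 ≤ ℓ) (hsmall : C ^ D * ℓ ^ d * (ℓ * C ^ D * δ) < 1) : ζ ^ r ≠ 1 := fun hζr => by
  have hlen : l1Norm (X ^ r - 1) ≤ ℓ := by
    have := l1Norm_sum_C_mul_X_pow_le (Finset.univ : Finset Bool) (fun i => if i then 1 else -1)
      fun i => if i then r else 0
    norm_num [← sub_eq_add_neg] at this
    exact this.trans hℓ
  refine hθ r hr (sub_eq_zero.mp ?_)
  simpa using h.aeval_eq_zero hC hζ hδ hθζ (Q := X ^ r - 1)
    (((natDegree_X_pow_sub_C (n := r) (r := (1 : ℤ))).le).trans hrD) hlen (by simpa [hζr])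

theorem LiouvilleBound.eq_zero_of_norm_aeval_auxPoly_le {θ ω : ℂ} {C δ ℓ η : ℝ} {d D b k S : ℕ}
    (h : LiouvilleBound θ C d) (hθ0 : θ ≠ 0) (hθ : ∀ n : ℕ, 0 < n → θ ^ n ≠ 1) (hC : 4 ≤ C)
    (hk : 0 < k) (hω : ω ^ k = 1) (hδ : δ ≤ 1) (hθω : ‖θ - ω ^ b‖ ≤ δ) (hℓ : 2 ≤ ℓ) (hη : 0 ≤ η)
    (hsmall : C ^ D * ℓ ^ d * (η + ℓ * C ^ D * δ) < 1) (hSD : S ≤ D) (hD : (S + M) * M ≤ D)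
    (hlen : ∀ r < S + M, ∀ s < S, l1Norm (auxPoly c (b * r + k * s) r) ≤ ℓ)
    (hval : ∀ r < S + M, ∀ s < S, ‖aeval (ω ^ b) (auxPoly c (b * r + k * s) r)‖ ≤ η)
    (hcard : M * (L - 1) < S * S) : c = 0 := by
  have hζ : ‖ω ^ b‖ = 1 := by
    rw [norm_pow, Complex.norm_eq_one_of_pow_eq_one hω hk.ne', one_pow]
  have hsmall' {v : ℝ} (hv : v ≤ η) : C ^ D * ℓ ^ d * (v + ℓ * C ^ D * δ) < 1 :=
    (by gcongr : _ ≤ _).trans_lt hsmall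
  have hroot (r : ℕ) (hr : 0 < r) (hrS : r < S) : (ω ^ b) ^ r ≠ 1 :=
    h.pow_ne_one hθ hC hζ hδ hθω hr (hrS.le.trans hSD) hℓ (by simpa using hsmall' hη)
  refine eq_zero_of_aeval_auxPoly_eq_zero hθ0 hθ (injOn_mul_add_mul hk hω hroot)
    (fun r hr s hs => ?_) hcard
  exact h.aeval_eq_zero hC hζ hδ hθω
    ((natDegree_auxPoly_le c _ r).trans ((Nat.mul_le_mul_right M hr.le).trans hD)) (hlen r hr s hs)
    (hsmall' (hval r hr s hs))

end AuxiliaryPolynomial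

section Gelfond

open Complex (I)
open Real (exp log)
open scoped Real

theorem norm_exp_two_pi_mul_I_mul_div_le {z : ℂ} {k B : ℝ} (hk : 0 < k)
    (hz : ‖z‖ ≤ exp 1 * (k * B)) : ‖Complex.exp (2 * π * I * z / k)‖ ≤ exp (18 * B) := by
  have hπ : 2 * π * exp 1 ≤ 18 := by
    nlinarith [Real.pi_lt_d2, Real.exp_one_lt_d9, Real.pi_pos, Real.exp_pos 1]
  have hB : 0 ≤ B := by
    have := (norm_nonneg z).trans hz
    rw [← mul_assoc] at this
    exact nonneg_of_mul_nonneg_right this (by positivity)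
  refine (Complex.norm_exp_le_exp_norm _).trans (Real.exp_le_exp.mpr ?_)
  rw [norm_div, norm_mul, norm_mul, norm_mul, Complex.norm_I, Complex.norm_two,
    Complex.norm_of_nonneg Real.pi_pos.le, Complex.norm_of_nonneg hk.le, mul_one,
    div_le_iff₀ hk]
  calc 2 * π * ‖z‖ ≤ 2 * π * (exp 1 * (k * B)) := by gcongr
    _ = 2 * π * exp 1 * (B * k) := by ring
    _ ≤ 18 * (B * k) := by gcongr
    _ = _ := by ring

theorem exists_norm_aeval_auxPoly_le {L M k T N H : ℕ} {B : ℝ} (hk : 0 < k) (hB : 1 ≤ B)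
    (hH : 0 < H) (hcard : (2 * H + 1) ^ (2 * T) < (N + 1) ^ (L * M)) :
    ∃ c : Fin L × Fin M → ℤ, c ≠ 0 ∧ (∀ i, |c i| ≤ N) ∧
      ∀ b r s : ℕ, ((b * r + k * s : ℕ) : ℝ) ≤ k * B →
        ‖aeval (Complex.exp (2 * π * I / k) ^ b) (auxPoly c (b * r + k * s) r)‖ ≤
          2 * (L * M * ((exp 1 * (k * B)) ^ L * exp (18 * B) ^ M) * N) * (2 / H + exp (-T)) := by
  have hk1 : (1 : ℝ) ≤ k := by exact_mod_cast hk
  have hρ : 1 ≤ exp 1 * (k * B) := one_le_mul_of_one_le_of_one_le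
    (Real.one_le_exp zero_le_one) (one_le_mul_of_one_le_of_one_le hk1 hB)
  obtain ⟨c, hc0, hcN, hc⟩ := exists_int_combination_norm_le (ι := Fin L × Fin M) (ρ := k * B)
    (U := (exp 1 * (k * B)) ^ L * exp (18 * B) ^ M)
    (φ := fun i z => z ^ (i.1 : ℕ) * Complex.exp (2 * π * I * z / k) ^ (i.2 : ℕ))
    (by positivity) (by positivity)
    (fun i => (by fun_prop : Differentiable ℂ _).diffContOnCl) (fun i z hz => by
      rw [mem_sphere_zero_iff_norm] at hz
      rw [norm_mul, norm_pow, norm_pow, hz]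
      gcongr ?_ * ?_
      · exact pow_le_pow_right₀ hρ i.1.2.le
      · refine (pow_le_pow_left₀ (norm_nonneg _)
          (norm_exp_two_pi_mul_I_mul_div_le (by positivity) hz.le) _).trans
          (pow_le_pow_right₀ (Real.one_le_exp (by positivity)) i.2.2.le)) hH (by simpa using hcard)
  refine ⟨c, hc0, hcN, fun b r s hw => ?_⟩
  have hper : Complex.exp (2 * π * I * (b * r + k * s : ℕ) / k) =
      (Complex.exp (2 * π * I / k) ^ b) ^ r := by
    have hk0 : (k : ℂ) ≠ 0 := by exact_mod_cast hk.ne'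
    rw [← pow_mul, ← Complex.exp_nat_mul, Complex.exp_eq_exp_iff_exists_int]
    refine ⟨s, ?_⟩
    push_cast
    field_simp
  have := hc (b * r + k * s : ℕ) (by simpa only [Complex.norm_natCast] using hw)
  simp only [hper, Fintype.card_prod, Fintype.card_fin, Nat.cast_mul] at this
  rwa [aeval_auxPoly]

theorem exp_pow_le_exp_of_mul_le {x y : ℝ} {m : ℕ} (h : m * x ≤ y) : exp x ^ m ≤ exp y := by
  rw [← Real.exp_nat_mul]
  exact Real.exp_le_exp.mpr h

theorem lt_floor_add_one_pow_of_mul_le {E : ℝ} (hE : 6 ≤ E) {K m p : ℕ} (hp : 0 < p)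
    (hm : (K + 1) * m ≤ p) : (2 * ⌈E ^ K⌉₊ + 1) ^ m < (⌊E⌋₊ + 1) ^ p := by
  have hE1 : 1 ≤ E := by linarith
  have hceil : (2 * ⌈E ^ K⌉₊ + 1 : ℝ) ≤ E ^ (K + 1) := by
    have := Nat.ceil_lt_add_one (by positivity : 0 ≤ E ^ K)
    have : 1 ≤ E ^ K := one_le_pow₀ hE1
    nlinarith [pow_succ E K]
  have hreal : (2 * ⌈E ^ K⌉₊ + 1 : ℝ) ^ m < (⌊E⌋₊ + 1) ^ p := by
    calc (2 * ⌈E ^ K⌉₊ + 1 : ℝ) ^ m ≤ (E ^ (K + 1)) ^ m := by gcongr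
      _ = E ^ ((K + 1) * m) := (pow_mul _ _ _).symm
      _ ≤ E ^ p := pow_le_pow_right₀ hE1 hm
      _ < (⌊E⌋₊ + 1) ^ p := by
        gcongr
        exact Nat.lt_floor_add_one E
  exact_mod_cast hreal

section Parameters

variable {n k : ℕ}

theorem six_le_exp_pow_ten (hn : 54 ≤ n) : 6 ≤ exp ((n : ℝ) ^ 10) := by
  have hn' : (54 : ℝ) ≤ n := by exact_mod_cast hn
  have : (n : ℝ) ≤ n ^ 10 := le_self_pow₀ (by linarith) (by norm_num)
  linarith [Real.add_one_le_exp ((n : ℝ) ^ 10)]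

theorem pow_nine_mul_pow_three_le_exp (hn : 54 ≤ n) :
    ((n ^ 9 : ℕ) : ℝ) * (n ^ 3 : ℕ) ≤ exp ((n : ℝ) ^ 10) := by
  have hn' : (54 : ℝ) ≤ n := by exact_mod_cast hn
  calc ((n ^ 9 : ℕ) : ℝ) * (n ^ 3 : ℕ) = (n : ℝ) ^ 12 := by push_cast; ring
    _ ≤ exp n ^ 12 := by gcongr; linarith [Real.add_one_le_exp (n : ℝ)]
    _ ≤ exp ((n : ℝ) ^ 10) := exp_pow_le_exp_of_mul_le <| by
        calc ((12 : ℕ) : ℝ) * n ≤ n ^ 9 * n := by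
              gcongr
              have : (n : ℝ) ≤ n ^ 9 := le_self_pow₀ (by linarith) (by norm_num)
              push_cast
              linarith
          _ = (n : ℝ) ^ 10 := by ring

theorem pow_mul_exp_pow_le_exp_sq (hn : 54 ≤ n) (hkn : 9 * k * (n : ℝ) ^ 6 ≤ exp n) :
    (exp 1 * (k * (3 * (n : ℝ) ^ 6))) ^ n ^ 9 * exp (18 * (3 * (n : ℝ) ^ 6)) ^ n ^ 3 ≤
      exp ((n : ℝ) ^ 10) ^ 2 := by
  have hn' : (54 : ℝ) ≤ n := by exact_mod_cast hn
  have hbase : exp 1 * (k * (3 * (n : ℝ) ^ 6)) ≤ exp n := by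
    refine le_trans ?_ hkn
    calc exp 1 * (k * (3 * (n : ℝ) ^ 6)) ≤ 3 * (k * (3 * (n : ℝ) ^ 6)) := by
          gcongr
          linarith [Real.exp_one_lt_d9]
      _ = _ := by ring
  rw [sq]
  gcongr
  · refine (pow_le_pow_left₀ (by positivity) hbase _).trans
      (exp_pow_le_exp_of_mul_le (le_of_eq ?_))
    push_cast
    ring
  · refine exp_pow_le_exp_of_mul_le ?_
    calc ((n ^ 3 : ℕ) : ℝ) * (18 * (3 * (n : ℝ) ^ 6)) = 54 * (n : ℝ) ^ 9 := by push_cast; ring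
      _ ≤ n * (n : ℝ) ^ 9 := by gcongr
      _ = _ := by ring

theorem pow_two_mul_pow_nine_le_exp {C : ℝ} (hC : 0 < C) (hnC : 2 * log C ≤ n) :
    C ^ (2 * n ^ 9) ≤ exp ((n : ℝ) ^ 10) := by
  calc C ^ (2 * n ^ 9) = exp (log C) ^ (2 * n ^ 9) := by rw [Real.exp_log hC]
    _ ≤ exp ((n : ℝ) ^ 10) := exp_pow_le_exp_of_mul_le <| by
        calc ((2 * n ^ 9 : ℕ) : ℝ) * log C = 2 * log C * (n : ℝ) ^ 9 := by push_cast; ring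
          _ ≤ n * (n : ℝ) ^ 9 := by gcongr
          _ = (n : ℝ) ^ 10 := by ring

theorem l1Norm_auxPoly_le_exp {c : Fin (n ^ 9) × Fin (n ^ 3) → ℤ} (hn : 54 ≤ n)
    (hkn : 9 * k * (n : ℝ) ^ 6 ≤ exp n) (hc : ∀ i, |(c i : ℝ)| ≤ exp ((n : ℝ) ^ 10)) {w : ℕ}
    (hw : (w : ℝ) ≤ k * (3 * (n : ℝ) ^ 6)) (r : ℕ) :
    l1Norm (auxPoly c w r) ≤ exp ((n : ℝ) ^ 10) ^ 3 := by
  have hW : k * (3 * (n : ℝ) ^ 6) ≤ exp n := by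
    refine le_trans ?_ hkn
    rw [← mul_assoc, mul_comm (k : ℝ)]
    gcongr
    norm_num
  calc l1Norm (auxPoly c w r)
      ≤ (n ^ 9 : ℕ) * (n ^ 3 : ℕ) * (exp ((n : ℝ) ^ 10) * exp n ^ n ^ 9) :=
        l1Norm_auxPoly_le hc (Real.one_le_exp n.cast_nonneg) (hw.trans hW) r
    _ ≤ exp ((n : ℝ) ^ 10) * (exp ((n : ℝ) ^ 10) * exp ((n : ℝ) ^ 10)) := by
        gcongr
        · exact pow_nine_mul_pow_three_le_exp hn
        · exact exp_pow_le_exp_of_mul_le (by push_cast; exact (pow_succ _ 9).symm.le)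
    _ = _ := by ring

theorem exists_norm_aeval_auxPoly_le_exp {K : ℕ} (hn : 54 ≤ n) (hnK : 2 * (K + 1) ≤ n) (hk : 0 < k)
    (hkn : 9 * k * (n : ℝ) ^ 6 ≤ exp n) :
    ∃ c : Fin (n ^ 9) × Fin (n ^ 3) → ℤ, c ≠ 0 ∧ (∀ i, |(c i : ℝ)| ≤ exp ((n : ℝ) ^ 10)) ∧
      ∀ b r s : ℕ, ((b * r + k * s : ℕ) : ℝ) ≤ k * (3 * (n : ℝ) ^ 6) →
        ‖aeval (Complex.exp (2 * π * I / k) ^ b) (auxPoly c (b * r + k * s) r)‖ ≤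
          exp ((n : ℝ) ^ 10) ^ 5 / exp ((n : ℝ) ^ 10) ^ K := by
  set E := exp ((n : ℝ) ^ 10)
  have hn1 : (1 : ℝ) ≤ n := by exact_mod_cast (by omega : 1 ≤ n)
  have hE6 : 6 ≤ E := six_le_exp_pow_ten hn
  have hN : (⌊E⌋₊ : ℝ) ≤ E := Nat.floor_le (by positivity)
  have hH : E ^ K ≤ (⌈E ^ K⌉₊ : ℝ) := Nat.le_ceil _
  have hT : exp (-(n ^ 11 : ℕ)) ≤ 1 / E ^ K := by
    rw [Real.exp_neg, ← one_div]
    gcongr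
    refine exp_pow_le_exp_of_mul_le ?_
    calc (K : ℝ) * n ^ 10 ≤ n * (n : ℝ) ^ 10 := by
          gcongr
          exact_mod_cast (by omega : K ≤ n)
      _ = _ := by push_cast; ring
  obtain ⟨c, hc0, hcN, hc⟩ := exists_norm_aeval_auxPoly_le (L := n ^ 9) (M := n ^ 3) (T := n ^ 11)
    (N := ⌊E⌋₊) (H := ⌈E ^ K⌉₊) (B := 3 * (n : ℝ) ^ 6) hk
    (by linarith [one_le_pow₀ hn1 (n := 6)]) (Nat.ceil_pos.mpr (by positivity))
    (lt_floor_add_one_pow_of_mul_le hE6 (by positivity) (by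
      calc (K + 1) * (2 * n ^ 11) = 2 * (K + 1) * n ^ 11 := by ring
        _ ≤ n * n ^ 11 := by gcongr
        _ = n ^ 9 * n ^ 3 := by ring))
  refine ⟨c, hc0, fun i => le_trans (by exact_mod_cast hcN i) hN, fun b r s hw => ?_⟩
  calc _ ≤ _ := hc b r s hw
    _ ≤ 2 * (E * E ^ 2 * E) * (2 / E ^ K + 1 / E ^ K) := by
      gcongr
      · exact pow_nine_mul_pow_three_le_exp hn
      · exact pow_mul_exp_pow_le_exp_sq hn hkn
    _ = 6 * E ^ 4 / E ^ K := by ring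
    _ ≤ E * E ^ 4 / E ^ K := by gcongr
    _ = E ^ 5 / E ^ K := by ring

theorem liouville_smallness {E : ℝ} (hE : 6 ≤ E) (d : ℕ) :
    E * (E ^ 3) ^ d * (E ^ 5 / E ^ (3 * d + 7) + E ^ 3 * E * (1 / E ^ (3 * d + 7))) < 1 := by
  have : 0 < E := by linarith
  calc _ = 1 / E + 1 / E ^ 2 := by
        rw [← pow_mul, pow_add]
        field_simp
    _ ≤ 1 / 6 + 1 / 6 ^ 2 := by gcongr
    _ < 1 := by norm_num

theorem LiouvilleBound.exp_neg_lt_norm_sub_exp_pow {θ : ℂ} {C : ℝ} {d b : ℕ}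
    (h : LiouvilleBound θ C d) (hC : 4 ≤ C) (hθ0 : θ ≠ 0) (hθ : ∀ m : ℕ, 0 < m → θ ^ m ≠ 1)
    (hn : 54 ≤ n) (hnC : 2 * log C ≤ n) (hnd : 2 * (3 * d + 8) ≤ n) (hb : b < k)
    (hkn : 9 * k * (n : ℝ) ^ 6 ≤ exp n) :
    exp (-((3 * d + 7 : ℕ) * (n : ℝ) ^ 10)) < ‖θ - Complex.exp (2 * π * I / k) ^ b‖ := by
  have hk : 0 < k := Nat.zero_lt_of_lt hb
  set E := exp ((n : ℝ) ^ 10)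
  have hE6 : 6 ≤ E := six_le_exp_pow_ten hn
  have hE3 : 2 ≤ E ^ 3 := by linarith [le_self_pow₀ (by linarith : 1 ≤ E) three_ne_zero]
  have hδ : exp (-((3 * d + 7 : ℕ) * (n : ℝ) ^ 10)) = 1 / E ^ (3 * d + 7) := by
    rw [Real.exp_neg, Real.exp_nat_mul, one_div]
  have hδ1 : 1 / E ^ (3 * d + 7) ≤ 1 :=
    div_le_one_of_le₀ (one_le_pow₀ (by linarith)) (by positivity)
  have hCE := pow_two_mul_pow_nine_le_exp (by linarith) hnC
  have hsmall : C ^ (2 * n ^ 9) * (E ^ 3) ^ d * (E ^ 5 / E ^ (3 * d + 7) +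
      E ^ 3 * C ^ (2 * n ^ 9) * (1 / E ^ (3 * d + 7))) < 1 :=
    (by gcongr : _ ≤ _).trans_lt (liouville_smallness hE6 d)
  have hn36 : n ^ 3 ≤ n ^ 6 := Nat.pow_le_pow_right (by omega) (by norm_num)
  have hn69 : n ^ 6 ≤ n ^ 9 := Nat.pow_le_pow_right (by omega) (by norm_num)
  have hw (r) (hr : r < n ^ 6 + n ^ 3) (s) (hs : s < n ^ 6) :
      ((b * r + k * s : ℕ) : ℝ) ≤ k * (3 * (n : ℝ) ^ 6) := by
    exact_mod_cast (by nlinarith : b * r + k * s ≤ k * (3 * n ^ 6))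
  by_contra! hθζ
  rw [hδ] at hθζ
  obtain ⟨c, hc0, hcE, hc⟩ := exists_norm_aeval_auxPoly_le_exp hn hnd hk hkn
  refine hc0 (h.eq_zero_of_norm_aeval_auxPoly_le hθ0 hθ hC hk
    (Complex.isPrimitiveRoot_exp k hk.ne').pow_eq_one hδ1 hθζ hE3 (by positivity) hsmall
    (hn69.trans (Nat.le_mul_of_pos_left _ two_pos)) ?_
    (fun r hr s hs => l1Norm_auxPoly_le_exp hn hkn hcE (hw r hr s hs) r)
    (fun r hr s hs => hc b r s (hw r hr s hs)) ?_)
  · calc (n ^ 6 + n ^ 3) * n ^ 3 ≤ (n ^ 6 + n ^ 6) * n ^ 3 := by gcongr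
      _ = 2 * n ^ 9 := by ring
  · calc n ^ 3 * (n ^ 9 - 1) < n ^ 3 * n ^ 9 := by
          gcongr
          exact Nat.sub_lt (by positivity) one_pos
      _ = n ^ 6 * n ^ 6 := by ring

end Parameters

theorem eventually_mul_pow_le_exp_half (A : ℝ) (j : ℕ) :
    ∀ᶠ n : ℕ in atTop, A * (n : ℝ) ^ j ≤ exp (n / 2) := by
  have h := (isLittleO_pow_exp_pos_mul_atTop j (one_half_pos (α := ℝ))).comp_tendsto
    tendsto_natCast_atTop_atTop
  filter_upwards [h.bound (show 0 < (|A| + 1)⁻¹ by positivity)] with n hn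
  simp only [Function.comp_apply, norm_pow, Real.norm_natCast, Real.norm_eq_abs (exp _),
    Real.abs_exp, one_div_mul_eq_div] at hn
  rw [inv_mul_eq_div, le_div_iff₀' (by positivity)] at hn
  refine le_trans ?_ hn
  gcongr
  linarith [le_abs_self A]

theorem eventually_exists_exp_half_bounds {p : ℕ → Prop} (hp : ∀ᶠ n in atTop, p n) :
    ∀ᶠ k : ℕ in atTop, ∃ n, p n ∧ (k : ℝ) ≤ exp (n / 2) ∧ exp (n / 2) ≤ exp (1 / 2) * k := by
  have htend : Tendsto (fun k : ℕ => ⌈2 * log k⌉₊) atTop atTop :=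
    tendsto_nat_ceil_atTop.comp ((Real.tendsto_log_atTop.comp
      tendsto_natCast_atTop_atTop).const_mul_atTop two_pos)
  filter_upwards [htend.eventually hp, eventually_gt_atTop 0] with k hpk hk
  have hk1 : (1 : ℝ) ≤ k := by exact_mod_cast hk
  refine ⟨_, hpk, ?_, ?_⟩
  · rw [← Real.log_le_iff_le_exp (by linarith)]
    linarith [Nat.le_ceil (2 * log k)]
  · calc exp (⌈2 * log k⌉₊ / 2) ≤ exp (1 / 2 + log k) := by
          gcongr
          linarith [Nat.ceil_lt_add_one (mul_nonneg zero_le_two (Real.log_nonneg hk1))]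
      _ = exp (1 / 2) * k := by rw [Real.exp_add, Real.exp_log (by linarith)]

theorem eventually_exp_neg_mul_le_norm_sub {θ : ℂ} (hθalg : IsAlgebraic ℤ θ)
    (hθ : ∀ n : ℕ, 0 < n → θ ^ n ≠ 1) {ε : ℝ} (hε : 0 < ε) :
    ∀ᶠ k : ℕ in atTop, ∀ ζ : ℂ, ζ ^ k = 1 → exp (-ε * k) ≤ ‖θ - ζ‖ := by
  rcases eq_or_ne θ 0 with rfl | hθ0
  · filter_upwards [eventually_gt_atTop 0] with k hk ζ hζ
    rw [zero_sub, norm_neg, Complex.norm_eq_one_of_pow_eq_one hζ hk.ne', Real.exp_le_one_iff]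
    nlinarith [(k.cast_nonneg : (0 : ℝ) ≤ k)]
  obtain ⟨C, d, hC⟩ := exists_liouvilleBound hθalg
  replace hC := hC.mono (le_max_right 4 |C|)
  filter_upwards [eventually_gt_atTop 0, eventually_exists_exp_half_bounds
    (((eventually_ge_atTop 54).and (eventually_ge_atTop ⌈2 * log (max 4 |C|)⌉₊)).and
    ((eventually_ge_atTop (2 * (3 * d + 8))).and ((eventually_mul_pow_le_exp_half 9 6).and
      (eventually_mul_pow_le_exp_half ((3 * d + 7 : ℕ) * exp (1 / 2) / ε) 10))))]
    with k hk ⟨n, ⟨⟨hn, hnC⟩, hnd, hn6, hn10⟩, hkn, hnk⟩ ζ hζ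
  have : NeZero k := ⟨hk.ne'⟩
  obtain ⟨b, hb, rfl⟩ := (Complex.isPrimitiveRoot_exp k hk.ne').eq_pow_of_pow_eq_one hζ
  refine le_trans (Real.exp_le_exp.mpr ?_) (hC.exp_neg_lt_norm_sub_exp_pow (le_max_left _ _) hθ0 hθ
    hn (Nat.ceil_le.mp hnC) hnd hb ?_).le
  · rw [neg_mul, neg_le_neg_iff]
    refine le_of_mul_le_mul_left ?_ (Real.exp_pos (1 / 2))
    calc exp (1 / 2) * ((3 * d + 7 : ℕ) * (n : ℝ) ^ 10)
        = ε * ((3 * d + 7 : ℕ) * exp (1 / 2) / ε * (n : ℝ) ^ 10) := by field_simp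
      _ ≤ ε * (exp (1 / 2) * k) := mul_le_mul_of_nonneg_left (hn10.trans hnk) hε.le
      _ = exp (1 / 2) * (ε * k) := by ring
  · calc 9 * k * (n : ℝ) ^ 6 = k * (9 * (n : ℝ) ^ 6) := by ring
      _ ≤ exp (n / 2) * exp (n / 2) := by gcongr
      _ = exp n := by rw [← Real.exp_add, add_halves]

theorem pow_card_aroots_le_norm_aeval {f : ℤ[X]} {ζ : ℂ} {δ : ℝ} (hδ : 0 ≤ δ)
    (hf : f ≠ 0) (h : ∀ θ ∈ f.aroots ℂ, δ ≤ ‖θ - ζ‖) :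
    δ ^ (f.aroots ℂ).card ≤ ‖aeval ζ f‖ := by
  have hlead : 1 ≤ ‖(f.map (algebraMap ℤ ℂ)).leadingCoeff‖ := by
    rw [leadingCoeff_map_of_injective (algebraMap ℤ ℂ).injective_int, eq_intCast,
      Complex.norm_intCast]
    exact_mod_cast Int.one_le_abs (leadingCoeff_ne_zero.mpr hf)
  rw [← eval_map_algebraMap, (IsAlgClosed.splits (f.map (algebraMap ℤ ℂ))).eval_eq_prod_roots,
    norm_mul]
  refine le_trans ?_ (le_mul_of_one_le_left (norm_nonneg _) hlead)
  rw [← Multiset.prod_replicate, ← Multiset.map_const', ← normHom_apply, map_multiset_prod,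
    Multiset.map_map]
  refine Multiset.prod_map_le_prod_map₀ _ _ (fun _ _ => hδ) fun θ hθ => ?_
  simpa only [Function.comp_apply, normHom_apply, norm_sub_rev ζ] using h θ hθ

theorem Noncyclotomic.ne_zero {f : ℤ[X]} (hnc : Noncyclotomic f) : f ≠ 0 := by
  rintro rfl
  exact hnc 1 (map_zero _) 1 one_pos (one_pow 1)

theorem Noncyclotomic.eventually_exp_neg_mul_le_norm_aeval {f : ℤ[X]} (hnc : Noncyclotomic f)
    {ε : ℝ} (hε : 0 < ε) :
    ∀ᶠ k : ℕ in atTop, ∀ ζ : ℂ, ζ ^ k = 1 → exp (-ε * k) ≤ ‖aeval ζ f‖ := by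
  set m := (f.aroots ℂ).card
  have hroots : ∀ᶠ k : ℕ in atTop, ∀ θ ∈ (f.aroots ℂ).toFinset, ∀ ζ : ℂ, ζ ^ k = 1 →
      exp (-(ε / (m + 1)) * k) ≤ ‖θ - ζ‖ := by
    rw [Filter.eventually_all_finset]
    intro θ hθ
    have hθf : aeval θ f = 0 := (mem_aroots.mp (Multiset.mem_toFinset.mp hθ)).2
    exact eventually_exp_neg_mul_le_norm_sub ⟨f, hnc.ne_zero, hθf⟩ (hnc θ hθf) (by positivity)
  filter_upwards [hroots] with k hk ζ hζ
  calc exp (-ε * k) ≤ exp (-(ε / (m + 1)) * k) ^ m := by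
        rw [← Real.exp_nat_mul]
        refine Real.exp_le_exp.mpr ?_
        calc -ε * k = (m + 1) * (-(ε / (m + 1)) * k) := by field_simp
          _ ≤ m * (-(ε / (m + 1)) * k) := by
            have : 0 ≤ ε / (m + 1) * k := by positivity
            linarith
    _ ≤ ‖aeval ζ f‖ := pow_card_aroots_le_norm_aeval (Real.exp_pos _).le hnc.ne_zero
        fun θ hθ => hk θ (Multiset.mem_toFinset.mpr hθ) ζ hζ

end Gelfond

section CyclicOperator

theorem norm_stdAddChar {k : ℕ} [NeZero k] (t : ZMod k) : ‖(ZMod.stdAddChar t : ℂ)‖ = 1 := by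
  rw [ZMod.stdAddChar_apply]
  exact Circle.norm_coe _

theorem norm_dft_le {k : ℕ} [NeZero k] {z : ZMod k → ℂ} {b : ℝ} (hz : ∀ j, ‖z j‖ ≤ b)
    (t : ZMod k) : ‖ZMod.dft z t‖ ≤ k * b := by
  calc ‖ZMod.dft z t‖ ≤ ∑ _ : ZMod k, b := by
        rw [ZMod.dft_apply]
        refine norm_sum_le_of_le _ fun j _ => ?_
        rw [norm_smul, norm_stdAddChar, one_mul]
        exact hz j
    _ = k * b := by simp [ZMod.card]

theorem norm_le_of_norm_dft_le {k : ℕ} [NeZero k] {z : ZMod k → ℂ} {b : ℝ}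
    (hz : ∀ t, ‖ZMod.dft z t‖ ≤ b) (j : ZMod k) : ‖z j‖ ≤ b := by
  have hk : (0 : ℝ) < k := by exact_mod_cast NeZero.pos k
  have hinv : z j = (k : ℂ)⁻¹ • ∑ t : ZMod k, (ZMod.stdAddChar (t * j) : ℂ) • ZMod.dft z t := by
    rw [← ZMod.invDFT_apply, LinearEquiv.symm_apply_apply]
  rw [hinv, norm_smul, norm_inv, Complex.norm_natCast, inv_mul_le_iff₀ hk]
  calc _ ≤ ∑ _ : ZMod k, b := by
        refine norm_sum_le_of_le _ fun t _ => ?_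
        rw [norm_smul, norm_stdAddChar, one_mul]
        exact hz t
    _ = k * b := by simp [ZMod.card]

theorem stdAddChar_pow_eq_one {k : ℕ} [NeZero k] (t : ZMod k) :
    (ZMod.stdAddChar t : ℂ) ^ k = 1 := by
  rw [← AddChar.map_nsmul_eq_pow, nsmul_eq_mul, CharP.cast_eq_zero, zero_mul,
    AddChar.map_zero_eq_one]

/-- The operator `f(σ)` on real sequences of period `k`, encoded as functions on `ℤ/kℤ`. -/
def cyclicOp (f : ℤ[X]) (k : ℕ) : (ZMod k → ℝ) →ₗ[ℝ] (ZMod k → ℝ) where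
  toFun z j := ∑ i ∈ Finset.range (f.natDegree + 1), (f.coeff i : ℝ) * z (j + i)
  map_add' z w := by
    ext j
    simp [mul_add, Finset.sum_add_distrib]
  map_smul' r z := by
    ext j
    simp only [Pi.smul_apply, smul_eq_mul, RingHom.id_apply, Finset.mul_sum]
    exact Finset.sum_congr rfl fun i _ => by ring

theorem cyclicOp_apply (f : ℤ[X]) (k : ℕ) (z : ZMod k → ℝ) (j : ZMod k) :
    cyclicOp f k z j = ∑ i ∈ Finset.range (f.natDegree + 1), (f.coeff i : ℝ) * z (j + i) := rfl

theorem abs_cyclicOp_le (f : ℤ[X]) {k : ℕ} {z : ZMod k → ℝ} {b : ℝ} (hz : ∀ j, |z j| ≤ b)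
    (j : ZMod k) : |cyclicOp f k z j| ≤ l1Norm f * b := by
  rw [cyclicOp_apply, l1Norm_eq_sum_range (Nat.lt_succ_self _), Finset.sum_mul]
  refine (Finset.abs_sum_le_sum_abs _ _).trans (Finset.sum_le_sum fun i _ => ?_)
  rw [abs_mul]
  gcongr
  exact hz _

theorem dft_cyclicOp (f : ℤ[X]) {k : ℕ} [NeZero k] (z : ZMod k → ℝ) (t : ZMod k) :
    ZMod.dft (fun j => (cyclicOp f k z j : ℂ)) t =
      aeval (ZMod.stdAddChar t) f * ZMod.dft (fun j => (z j : ℂ)) t := by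
  simp only [ZMod.dft_apply, cyclicOp_apply, smul_eq_mul, Complex.ofReal_sum, Complex.ofReal_mul,
    Complex.ofReal_intCast, Finset.mul_sum (Finset.range _)]
  rw [Finset.sum_comm, aeval_eq_sum_range, Finset.sum_mul]
  refine Finset.sum_congr rfl fun i _ => ?_
  rw [Finset.mul_sum, ← Equiv.sum_comp (Equiv.addRight (i : ZMod k)) fun j =>
    f.coeff i • (ZMod.stdAddChar t : ℂ) ^ i * (ZMod.stdAddChar (-(j * t)) * (z j : ℂ))]
  refine Finset.sum_congr rfl fun j _ => ?_
  have hshift : (ZMod.stdAddChar (-(j * t)) : ℂ) =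
      ZMod.stdAddChar t ^ i * ZMod.stdAddChar (-((j + (i : ZMod k)) * t)) := by
    rw [← AddChar.map_nsmul_eq_pow, ← AddChar.map_add_eq_mul]
    congr 1
    rw [nsmul_eq_mul]
    ring
  rw [hshift, Equiv.coe_addRight, zsmul_eq_mul]
  ring

theorem abs_le_of_abs_cyclicOp_le {f : ℤ[X]} {k : ℕ} [NeZero k] {c : ℝ} (hc : 0 < c)
    (hf : ∀ ζ : ℂ, ζ ^ k = 1 → c ≤ ‖aeval ζ f‖) {z : ZMod k → ℝ} {b : ℝ}
    (hz : ∀ j, |cyclicOp f k z j| ≤ b) (j : ZMod k) : |z j| ≤ k * b / c := by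
  rw [← Real.norm_eq_abs, ← Complex.norm_real]
  refine norm_le_of_norm_dft_le (z := fun j => (z j : ℂ)) (fun t => ?_) j
  rw [le_div_iff₀ hc]
  calc _ ≤ ‖ZMod.dft (fun j => (z j : ℂ)) t‖ * ‖aeval (ZMod.stdAddChar t : ℂ) f‖ := by
        gcongr
        exact hf _ (stdAddChar_pow_eq_one t)
    _ = ‖ZMod.dft (fun j => (cyclicOp f k z j : ℂ)) t‖ := by
        rw [dft_cyclicOp, norm_mul, mul_comm]
    _ ≤ k * b := norm_dft_le (fun j => (Complex.norm_real _).trans_le (hz j)) t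

theorem cyclicOp_injective_of_aeval_ne_zero {f : ℤ[X]} {k : ℕ} [NeZero k]
    (hf : ∀ ζ : ℂ, ζ ^ k = 1 → aeval ζ f ≠ 0) : Function.Injective (cyclicOp f k) := by
  rw [injective_iff_map_eq_zero]
  intro z hz
  have hdft : ZMod.dft (fun j => (z j : ℂ)) = 0 := by
    ext t
    have h := dft_cyclicOp f z t
    simp only [hz, Pi.zero_apply, Complex.ofReal_zero] at h
    rw [← Pi.zero_def, map_zero, Pi.zero_apply, eq_comm, mul_eq_zero] at h
    exact h.resolve_left (hf _ (stdAddChar_pow_eq_one t))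
  ext j
  simpa using congrFun ((LinearEquiv.map_eq_zero_iff _).mp hdft) j

end CyclicOperator

section PeriodicPoints

variable {f : ℤ[X]} {k : ℕ}

theorem Noncyclotomic.cyclicOp_injective (hnc : Noncyclotomic f) (k : ℕ) [NeZero k] :
    Function.Injective (cyclicOp f k) :=
  cyclicOp_injective_of_aeval_ne_zero fun ζ hζ h => hnc ζ h k (NeZero.pos k) hζ

theorem torus_coe_eq_zero_iff {r : ℝ} : (r : Torus) = 0 ↔ ∃ a : ℤ, (a : ℝ) = r := by
  rw [AddCircle.coe_eq_zero_iff]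
  simp

/-- The representative in `[-1/2, 1/2)` of a point of the circle. -/
def centeredLift (t : Torus) : ℝ := AddCircle.equivIco 1 (-1 / 2) t

@[simp]
theorem coe_centeredLift (t : Torus) : (centeredLift t : Torus) = t := AddCircle.coe_equivIco

theorem abs_centeredLift_le_half (t : Torus) : |centeredLift t| ≤ 1 / 2 := by
  obtain ⟨h1, h2⟩ := (AddCircle.equivIco 1 (-1 / 2) t).2
  exact abs_le.mpr ⟨by rw [centeredLift]; linarith, by rw [centeredLift]; linarith⟩

theorem abs_centeredLift (t : Torus) : |centeredLift t| = ‖t‖ := by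
  have h := (AddCircle.norm_coe_eq_abs_iff 1 one_ne_zero).mpr
    ((abs_centeredLift_le_half t).trans_eq (by rw [abs_one]))
  rw [← h, coe_centeredLift]

theorem coe_cyclicOp (f : ℤ[X]) (k : ℕ) (z : ZMod k → ℝ) (j : ZMod k) :
    (cyclicOp f k z j : Torus) =
      ∑ i ∈ Finset.range (f.natDegree + 1), f.coeff i • (z (j + i) : Torus) := by
  rw [cyclicOp_apply, ← QuotientAddGroup.mk'_apply, map_sum]
  refine Finset.sum_congr rfl fun i _ => ?_
  rw [← zsmul_eq_mul, map_zsmul]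
  rfl

/-- The point of `𝕋^ℤ` of period `k` obtained by reducing a real function on `ℤ/kℤ` modulo `1`. -/
def periodicPoint (k : ℕ) (z : ZMod k → ℝ) : ℤ → Torus := fun n => (z (n : ZMod k) : Torus)

theorem fsT_periodicPoint (f : ℤ[X]) (k : ℕ) (z : ZMod k → ℝ) (n : ℤ) :
    fsT f (periodicPoint k z) n = (cyclicOp f k z n : Torus) := by
  simp only [fsT, periodicPoint, coe_cyclicOp, Int.cast_add, Int.cast_natCast]

theorem periodicPoint_mem_Pk_iff {z : ZMod k → ℝ} :
    periodicPoint k z ∈ Pk f k ↔ ∀ j, ∃ a : ℤ, (a : ℝ) = cyclicOp f k z j := by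
  have hper : ∀ n : ℤ, periodicPoint k z (n + k) = periodicPoint k z n := fun n => by
    simp [periodicPoint]
  simp only [Pk, Xf, Set.mem_ofPred_eq, fsT_periodicPoint, torus_coe_eq_zero_iff, hper,
    implies_true, and_true]
  exact (ZMod.intCast_surjective.forall (p := fun j => ∃ a : ℤ, (a : ℝ) = cyclicOp f k z j)).symm

/-- The real function on `ℤ/kℤ` lifting the coordinates `x 0, …, x (k - 1)` of a point of `𝕋^ℤ`. -/
def windowLift (k : ℕ) (x : ℤ → Torus) : ZMod k → ℝ := fun j => centeredLift (x j.val)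

theorem windowLift_natCast (x : ℤ → Torus) {n : ℕ} (hn : n < k) :
    windowLift k x n = centeredLift (x n) := by
  rw [windowLift, ZMod.val_cast_of_lt hn]

theorem periodicPoint_windowLift [NeZero k] {x : ℤ → Torus} (hx : ∀ n : ℤ, x (n + k) = x n) :
    periodicPoint k (windowLift k x) = x := by
  ext n
  rw [periodicPoint, windowLift, coe_centeredLift, ZMod.val_intCast, Int.emod_def, mul_comm]
  exact Function.Periodic.sub_zsmul_eq hx (n / k)

theorem coe_cyclicOp_windowLift (f : ℤ[X]) (x : ℤ → Torus) {j : ZMod k}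
    (hj : j.val + f.natDegree < k) :
    (cyclicOp f k (windowLift k x) j : Torus) = fsT f x j.val := by
  have : NeZero k := ⟨by omega⟩
  rw [coe_cyclicOp, fsT]
  refine Finset.sum_congr rfl fun i hi => ?_
  have hi' : j.val + i < k := by
    rw [Finset.mem_range] at hi
    omega
  rw [← ZMod.natCast_zmod_val j, ← Nat.cast_add, windowLift_natCast x hi', coe_centeredLift,
    ZMod.natCast_zmod_val, Nat.cast_add]

theorem fract_cyclicOp_windowLift_eq_zero {x : ℤ → Torus} (hx : x ∈ Xf f) {j : ZMod k}
    (hj : j.val + f.natDegree < k) : Int.fract (cyclicOp f k (windowLift k x) j) = 0 := by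
  have h := coe_cyclicOp_windowLift f x hj
  rw [hx, torus_coe_eq_zero_iff] at h
  exact Int.fract_eq_zero_iff.mpr h

theorem exists_intCast_eq_cyclicOp_windowLift [NeZero k] {x : ℤ → Torus} (hx : x ∈ Pk f k)
    (j : ZMod k) : ∃ a : ℤ, (a : ℝ) = cyclicOp f k (windowLift k x) j :=
  periodicPoint_mem_Pk_iff.mp (by rwa [periodicPoint_windowLift hx.2]) j

theorem Noncyclotomic.finite_Pk (hnc : Noncyclotomic f) (k : ℕ) [NeZero k] : (Pk f k).Finite := by
  refine Set.Finite.of_injOn (f := fun x => cyclicOp f k (windowLift k x))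
    (t := {v | ∀ j, v j ∈ Int.cast '' Set.Icc (-⌈l1Norm f⌉) ⌈l1Norm f⌉}) (fun x hx j => ?_)
    (fun x hx y hy hxy => ?_) (Set.Finite.pi' fun _ => (Set.finite_Icc _ _).image _)
  · obtain ⟨a, ha⟩ := exists_intCast_eq_cyclicOp_windowLift hx j
    have hbound : |(a : ℝ)| ≤ ⌈l1Norm f⌉ := by
      have hlift (j : ZMod k) : |windowLift k x j| ≤ 1 :=
        (abs_centeredLift_le_half _).trans (by norm_num)
      rw [ha]
      exact (abs_cyclicOp_le f hlift j).trans ((mul_one _).trans_le (Int.le_ceil _))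
    exact ⟨a, abs_le.mp (by exact_mod_cast hbound), ha⟩
  · rw [← periodicPoint_windowLift hx.2, hnc.cyclicOp_injective k hxy,
      periodicPoint_windowLift hy.2]

theorem fsT_sub (f : ℤ[X]) (x y : ℤ → Torus) : fsT f (x - y) = fsT f x - fsT f y := by
  ext n
  simp only [fsT, Pi.sub_apply, smul_sub, Finset.sum_sub_distrib]

theorem sub_mem_Pk {x y : ℤ → Torus} (hx : x ∈ Pk f k) (hy : y ∈ Pk f k) : x - y ∈ Pk f k := by
  refine ⟨fun n => ?_, fun n => ?_⟩
  · rw [fsT_sub, Pi.sub_apply, hx.1, hy.1, sub_zero]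
  · rw [Pi.sub_apply, Pi.sub_apply, hx.2, hy.2]

theorem zero_mem_Pk (f : ℤ[X]) (k : ℕ) : 0 ∈ Pk f k :=
  ⟨fun n => by simp [fsT], fun _ => rfl⟩

theorem Noncyclotomic.eq_zero_of_mem_Pk (hnc : Noncyclotomic f) [NeZero k] {δ : ℝ}
    (hδ : l1Norm f * δ < 1) {x : ℤ → Torus} (hx : x ∈ Pk f k)
    (hxδ : ∀ n : ℕ, n < k → ‖x n‖ ≤ δ) : x = 0 := by
  have hzero : cyclicOp f k (windowLift k x) = 0 := by
    ext j
    obtain ⟨a, ha⟩ := exists_intCast_eq_cyclicOp_windowLift hx j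
    have hlift (j : ZMod k) : |windowLift k x j| ≤ δ :=
      (abs_centeredLift _).trans_le (hxδ _ (ZMod.val_lt j))
    have ha1 : |(a : ℝ)| < 1 := ha ▸ (abs_cyclicOp_le f hlift j).trans_lt hδ
    have ha0 : a = 0 := Int.abs_lt_one_iff.mp (by exact_mod_cast ha1)
    rw [← ha, ha0, Int.cast_zero, Pi.zero_apply]
  have hlift0 : windowLift k x = 0 := hnc.cyclicOp_injective k (hzero.trans (map_zero _).symm)
  rw [← periodicPoint_windowLift hx.2, hlift0]
  ext
  simp [periodicPoint]

theorem Noncyclotomic.card_Pk_pos (hnc : Noncyclotomic f) (k : ℕ) [NeZero k] :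
    0 < Nat.card (Pk f k) := by
  have : Finite (Pk f k) := hnc.finite_Pk k
  have : Nonempty (Pk f k) := ⟨0, zero_mem_Pk f k⟩
  exact Nat.card_pos

end PeriodicPoints

section Coding

variable {f : ℤ[X]} {k : ℕ} [NeZero k]

/-- The operator `f(σ)` on real sequences of period `k`, as an isomorphism. -/
def cyclicEquiv (hnc : Noncyclotomic f) (k : ℕ) [NeZero k] : (ZMod k → ℝ) ≃ₗ[ℝ] (ZMod k → ℝ) :=
  LinearEquiv.ofInjectiveEndo (cyclicOp f k) (hnc.cyclicOp_injective k)

theorem cyclicOp_cyclicEquiv_symm (hnc : Noncyclotomic f) (v : ZMod k → ℝ) :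
    cyclicOp f k ((cyclicEquiv hnc k).symm v) = v :=
  (cyclicEquiv hnc k).apply_symm_apply v

/-- The point of period `k` whose lift has as image under `f(σ)` that of the lifted window
`x 0, …, x (k - 1)`, rounded down to integers. -/
def closingPoint (hnc : Noncyclotomic f) (k : ℕ) [NeZero k] (x : ℤ → Torus) : ℤ → Torus :=
  periodicPoint k <| (cyclicEquiv hnc k).symm fun j => ⌊cyclicOp f k (windowLift k x) j⌋

theorem closingPoint_mem_Pk (hnc : Noncyclotomic f) (x : ℤ → Torus) :
    closingPoint hnc k x ∈ Pk f k :=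
  periodicPoint_mem_Pk_iff.mpr fun j => ⟨⌊cyclicOp f k (windowLift k x) j⌋, by
    rw [cyclicOp_cyclicEquiv_symm]⟩

theorem exists_closingPoint_eq_sub (hnc : Noncyclotomic f) (x : ℤ → Torus) :
    ∃ r : ZMod k → ℝ, (∀ j, cyclicOp f k r j = Int.fract (cyclicOp f k (windowLift k x) j)) ∧
      ∀ n : ℕ, n < k → closingPoint hnc k x n = x n - (r n : Torus) := by
  refine ⟨windowLift k x - (cyclicEquiv hnc k).symm fun j => ⌊cyclicOp f k (windowLift k x) j⌋,
    fun j => ?_, fun n hn => ?_⟩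
  · rw [map_sub, cyclicOp_cyclicEquiv_symm]
    rfl
  · rw [Pi.sub_apply, AddCircle.coe_sub, windowLift_natCast x hn, coe_centeredLift, sub_sub_cancel,
      closingPoint, periodicPoint, Int.cast_natCast]

theorem dist_le_of_closingPoint_eq (hnc : Noncyclotomic f) {c : ℝ} (hc : 0 < c)
    (hf : ∀ ζ : ℂ, ζ ^ k = 1 → c ≤ ‖aeval ζ f‖) {x y : ℤ → Torus} {η : ℝ}
    (hxy : closingPoint hnc k x = closingPoint hnc k y)
    (hη : ∀ j, |Int.fract (cyclicOp f k (windowLift k x) j) -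
      Int.fract (cyclicOp f k (windowLift k y) j)| ≤ η) {n : ℕ} (hn : n < k) :
    dist (x n) (y n) ≤ k * η / c := by
  obtain ⟨r, hr, hxr⟩ := exists_closingPoint_eq_sub (k := k) hnc x
  obtain ⟨s, hs, hys⟩ := exists_closingPoint_eq_sub (k := k) hnc y
  have hsub : x n - y n = ((r n - s n : ℝ) : Torus) := by
    have h := congrFun hxy n
    rw [hxr n hn, hys n hn, sub_eq_sub_iff_add_eq_add] at h
    rw [AddCircle.coe_sub, sub_eq_sub_iff_add_eq_add, h, add_comm]
  calc dist (x n) (y n) = ‖((r n - s n : ℝ) : Torus)‖ := by rw [dist_eq_norm, hsub]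
    _ ≤ |(r - s) n| := QuotientAddGroup.norm_mk_le_norm
    _ ≤ k * η / c := abs_le_of_abs_cyclicOp_le hc hf (fun j => by
        rw [map_sub, Pi.sub_apply, hr, hs]
        exact hη j) n

theorem abs_sub_le_of_natFloor_mul_eq {q : ℕ} (hq : 0 < q) {s t : ℝ} (hs : 0 ≤ s) (ht : 0 ≤ t)
    (h : ⌊q * s⌋₊ = ⌊q * t⌋₊) : |s - t| ≤ 1 / q := by
  have hq' : (0 : ℝ) < q := by exact_mod_cast hq
  have hs1 := Nat.floor_le (mul_nonneg hq'.le hs)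
  have ht1 := Nat.floor_le (mul_nonneg hq'.le ht)
  have hs2 := Nat.lt_floor_add_one (q * s)
  have ht2 := Nat.lt_floor_add_one (q * t)
  rw [h] at hs1 hs2
  calc |s - t| = |q * s - q * t| / q := by
        rw [← mul_sub, abs_mul, abs_of_pos hq', mul_div_cancel_left₀ _ hq'.ne']
    _ ≤ 1 / q := by
        gcongr
        exact abs_le.mpr ⟨by linarith, by linarith⟩

/-- The last `d` residues modulo `k`, at which `f(σ)` for `f` of degree `d` sees the jump created
by continuing a window of length `k` periodically. -/
abbrev BoundaryIndex (k d : ℕ) : Type := {j : ZMod k // k ≤ j.val + d}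

theorem card_boundaryIndex_le (k d : ℕ) [NeZero k] : Fintype.card (BoundaryIndex k d) ≤ d := by
  have hinj : Function.Injective fun j : BoundaryIndex k d =>
      (⟨k - 1 - j.1.val, by have := j.1.val_lt; have := j.2; omega⟩ : Fin d) := fun i j hij => by
    have hi := i.1.val_lt
    have hj := j.1.val_lt
    rw [Fin.mk.injEq] at hij
    exact Subtype.ext (ZMod.val_injective k (by omega))
  simpa using Fintype.card_le_of_injective _ hinj

/-- Away from the last `d` residues `f(σ)` of a window is integral, so a point of `X_f` is
determined up to a small error by its closing point and `d` quantized fractional parts. -/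
theorem Noncyclotomic.exists_code (hnc : Noncyclotomic f) {c : ℝ} (hc : 0 < c)
    (hf : ∀ ζ : ℂ, ζ ^ k = 1 → c ≤ ‖aeval ζ f‖) {q : ℕ} (hq : 0 < q) :
    ∃ κ : (ℤ → Torus) → Pk f k × (BoundaryIndex k f.natDegree → Fin q),
      ∀ x ∈ Xf f, ∀ y ∈ Xf f, κ x = κ y →
        ∀ n : ℕ, n < k → dist (x n) (y n) ≤ k / (q * c) := by
  have hlt (t : ℝ) : ⌊q * Int.fract t⌋₊ < q := by
    have hq' : (0 : ℝ) < q := by exact_mod_cast hq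
    rw [Nat.floor_lt (mul_nonneg hq'.le (Int.fract_nonneg _))]
    exact mul_lt_of_lt_one_right hq' (Int.fract_lt_one _)
  refine ⟨fun x => ⟨⟨closingPoint hnc k x, closingPoint_mem_Pk hnc x⟩,
    fun j => ⟨_, hlt (cyclicOp f k (windowLift k x) j)⟩⟩, fun x hx y hy hxy n hn => ?_⟩
  simp only [Prod.mk.injEq, Subtype.mk.injEq, funext_iff (α := BoundaryIndex k f.natDegree),
    Fin.mk.injEq] at hxy
  refine (dist_le_of_closingPoint_eq hnc hc hf hxy.1 (η := 1 / q) (fun j => ?_) hn).trans_eq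
    (by field_simp)
  rcases lt_or_ge (j.val + f.natDegree) k with hj | hj
  · rw [fract_cyclicOp_windowLift_eq_zero hx hj, fract_cyclicOp_windowLift_eq_zero hy hj, sub_zero,
      abs_zero]
    positivity
  · exact abs_sub_le_of_natFloor_mul_eq hq (Int.fract_nonneg _) (Int.fract_nonneg _)
      (hxy.2 ⟨j, hj⟩)

end Coding

section Entropy

open Uniformity Dynamics

theorem log_ofReal_exp (r : ℝ) : ENNReal.log (ENNReal.ofReal (Real.exp r)) = r := by
  rw [ENNReal.log_ofReal_of_pos (Real.exp_pos r), Real.log_exp]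

theorem log_natCast_div_le {a m : ℕ} {r : ℝ} (h : a ≤ Real.exp r) :
    ENNReal.log a / m ≤ ((r / m : ℝ) : EReal) := by
  have ha : ENNReal.log a ≤ r := by
    rw [← log_ofReal_exp, ← ENNReal.ofReal_natCast]
    exact ENNReal.log_monotone (ENNReal.ofReal_le_ofReal h)
  rw [EReal.coe_div]
  exact EReal.monotone_div_right_of_nonneg m.cast_nonneg' ha

theorem log_natCast_div {a : ℕ} (ha : 0 < a) (m : ℕ) :
    ENNReal.log a / m = ((Real.log a / m : ℝ) : EReal) := by
  rw [EReal.coe_div, ← ENNReal.ofReal_natCast, ENNReal.log_ofReal_of_pos (by exact_mod_cast ha)]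
  rfl

theorem tendsto_mul_natCast_div_natCast_sub (b : ℝ) (m : ℕ) :
    Tendsto (fun k : ℕ => b * k / (k - m : ℕ)) atTop (𝓝 b) := by
  have h := (tendsto_natCast_div_add_atTop (-(m : ℝ))).const_mul b
  rw [mul_one] at h
  refine h.congr' ?_
  filter_upwards [eventually_ge_atTop m] with k hk
  rw [Nat.cast_sub hk, mul_div_assoc, sub_eq_add_neg]

theorem coverEntropyEntourage_comp_le_of_frequently {X : Type*} {T : X → X} {F : Set X}
    {U : SetRel X X} [U.IsSymm] (hT : Set.MapsTo T F F) {m : ℕ} {b : ℝ}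
    (h : ∃ᶠ k : ℕ in atTop, ∃ s : Finset X,
      IsDynCoverOf T F U (k - m) (s : Set X) ∧ s.card ≤ Real.exp (b * k)) :
    coverEntropyEntourage T F (U.comp U) ≤ b := by
  refine ge_of_tendsto_of_frequently ((continuous_coe_real_ereal.tendsto b).comp
    (tendsto_mul_natCast_div_natCast_sub b m)) ?_
  refine (h.and_eventually (eventually_gt_atTop m)).mono ?_
  rintro k ⟨⟨s, hs, hcard⟩, hk⟩
  exact (hs.coverEntropyEntourage_le_log_card_div hT (Nat.sub_ne_zero_of_lt hk)).trans
    (log_natCast_div_le hcard)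

variable {f : ℤ[X]}

theorem shiftT_iterate_apply (i : ℕ) (x : ℤ → Torus) (n : ℤ) : shiftT^[i] x n = x (n + i) := by
  induction i generalizing x with
  | zero => simp
  | succ i ih =>
    rw [Function.iterate_succ_apply, ih, shiftT]
    push_cast
    rw [add_assoc]

theorem translate_mem_Xf {x : ℤ → Torus} (hx : x ∈ Xf f) (p : ℤ) :
    (fun n => x (n + p)) ∈ Xf f := fun n => by
  rw [← hx (n + p)]
  exact Finset.sum_congr rfl fun i _ => by rw [add_right_comm]

theorem mapsTo_shiftT_Xf (f : ℤ[X]) : Set.MapsTo shiftT (Xf f) (Xf f) :=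
  fun _ hx => translate_mem_Xf hx 1

theorem exists_window_of_mem_uniformity {U : SetRel (ℤ → Torus) (ℤ → Torus)}
    (hU : U ∈ 𝓤 (ℤ → Torus)) : ∃ p : ℕ, ∃ δ > 0, ∀ x y : ℤ → Torus,
      (∀ j : ℤ, |j| ≤ p → dist (x j) (y j) < δ) → (x, y) ∈ U := by
  rw [Pi.uniformity, mem_iInf] at hU
  obtain ⟨I, hI, V, hV, rfl⟩ := hU
  have hball (i : I) : ∃ δ > 0, ∀ x y : ℤ → Torus, dist (x i) (y i) < δ → (x, y) ∈ V i := by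
    obtain ⟨W, hW, hWV⟩ := mem_comap.mp (hV i)
    obtain ⟨δ, hδ, hδW⟩ := Metric.mem_uniformity_dist.mp hW
    exact ⟨δ, hδ, fun x y hxy => hWV (hδW hxy)⟩
  choose δ hδ hδV using hball
  have := hI.to_subtype
  obtain ⟨δ₀, hδ₀, hδ₀_pos⟩ : ∃ δ₀ : ℝ, (∀ i : I, δ₀ < δ i) ∧ 0 < δ₀ :=
    ((eventually_all.mpr fun i : I => eventually_nhdsWithin_of_eventually_nhds
      (eventually_lt_nhds (hδ i))).and (self_mem_nhdsWithin (a := 0) (s := Set.Ioi 0))).exists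
  obtain ⟨p, hp⟩ := (hI.image Int.natAbs).bddAbove
  refine ⟨p, δ₀, hδ₀_pos, fun x y hxy => Set.mem_iInter.mpr fun i => hδV i x y ?_⟩
  refine (hxy i ?_).trans (hδ₀ i)
  rw [Int.abs_eq_natAbs]
  exact_mod_cast hp ⟨i, i.2, rfl⟩

theorem Noncyclotomic.exists_isDynCoverOf (hnc : Noncyclotomic f) {k : ℕ} [NeZero k]
    {c : ℝ} (hc : 0 < c) (hf : ∀ ζ : ℂ, ζ ^ k = 1 → c ≤ ‖aeval ζ f‖) {q : ℕ} (hq : 0 < q)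
    {U : SetRel (ℤ → Torus) (ℤ → Torus)} {p : ℕ} {δ : ℝ} (hδ : k / (q * c) < δ)
    (hU : ∀ x y : ℤ → Torus, (∀ j : ℤ, |j| ≤ p → dist (x j) (y j) < δ) → (x, y) ∈ U) :
    ∃ s : Finset (ℤ → Torus), IsDynCoverOf shiftT (Xf f) U (k - 2 * p) (s : Set (ℤ → Torus)) ∧
      s.card ≤ Nat.card (Pk f k) * q ^ f.natDegree := by
  obtain ⟨κ, hκ⟩ := hnc.exists_code hc hf hq
  have : Finite (Pk f k) := hnc.finite_Pk k
  have := Fintype.ofFinite (Pk f k)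
  let κp : (ℤ → Torus) → _ := fun x => κ fun n => x (n - p)
  obtain ⟨s, hsX, hs⟩ := Set.exists_subset_bijOn (Xf f) κp
  have hsfin : s.Finite := Set.Finite.of_injOn hs.mapsTo hs.injOn (Set.toFinite _)
  refine ⟨hsfin.toFinset, fun x hx => ?_, ?_⟩
  · obtain ⟨y, hys, hy⟩ := hs.surjOn ⟨x, hx, rfl⟩
    refine ⟨y, by simpa using hys, mem_dynEntourage.mpr fun i hi => hU _ _ fun j hj => ?_⟩
    rw [abs_le] at hj
    obtain ⟨n, hn⟩ := Int.eq_ofNat_of_zero_le (show 0 ≤ j + i + p by omega)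
    rw [shiftT_iterate_apply, shiftT_iterate_apply, show j + i = n - p by omega]
    exact (hκ _ (translate_mem_Xf hx (-p)) _ (translate_mem_Xf (hsX hys) (-p)) hy.symm n
      (by omega)).trans_lt hδ
  · calc hsfin.toFinset.card
        ≤ Fintype.card (Pk f k × (BoundaryIndex k f.natDegree → Fin q)) :=
          Finset.card_le_card_of_injOn κp (fun _ _ => Finset.mem_univ _) (by simpa using hs.injOn)
      _ = Nat.card (Pk f k) * q ^ Fintype.card (BoundaryIndex k f.natDegree) := by
          simp [Nat.card_eq_fintype_card]
      _ ≤ Nat.card (Pk f k) * q ^ f.natDegree := by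
          gcongr
          exact card_boundaryIndex_le k _

theorem eventually_exists_quantization {ε δ : ℝ} (hε : 0 < ε) (hδ : 0 < δ) :
    ∀ᶠ k : ℕ in atTop, ∃ q : ℕ, 0 < q ∧ q ≤ Real.exp (3 * ε * k) ∧
      k / (q * Real.exp (-ε * k)) < δ := by
  have hdecay : Tendsto (fun k : ℕ => (k : ℝ) * Real.exp (-ε * k)) atTop (𝓝 0) := by
    simpa [Function.comp_def] using (tendsto_rpow_mul_exp_neg_mul_atTop_nhds_zero 1 ε hε).comp
      tendsto_natCast_atTop_atTop
  have hgrowth : ∀ᶠ k : ℕ in atTop, 2 ≤ Real.exp (ε * k) :=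
    (Real.tendsto_exp_atTop.comp
      (tendsto_natCast_atTop_atTop.const_mul_atTop hε)).eventually_ge_atTop 2
  filter_upwards [hdecay.eventually_lt_const hδ, hgrowth] with k hkδ hk2
  refine ⟨⌈Real.exp (2 * ε * k)⌉₊, Nat.ceil_pos.mpr (Real.exp_pos _), ?_, lt_of_le_of_lt ?_ hkδ⟩
  · have hceil := Nat.ceil_lt_add_one (Real.exp_pos (2 * ε * k)).le
    have hone : 1 ≤ Real.exp (2 * ε * k) := Real.one_le_exp (by positivity)
    rw [show 3 * ε * k = ε * k + 2 * ε * k by ring, Real.exp_add]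
    nlinarith
  · calc k / (⌈Real.exp (2 * ε * k)⌉₊ * Real.exp (-ε * k))
        ≤ k / (Real.exp (2 * ε * k) * Real.exp (-ε * k)) := by
          gcongr
          exact Nat.le_ceil _
      _ = k * Real.exp (-ε * k) := by
          rw [← Real.exp_add, div_eq_mul_inv, ← Real.exp_neg]
          ring_nf

theorem Noncyclotomic.eventually_exists_isDynCoverOf (hnc : Noncyclotomic f)
    {U : SetRel (ℤ → Torus) (ℤ → Torus)} (hU : U ∈ 𝓤 (ℤ → Torus)) {ε : ℝ} (hε : 0 < ε) :
    ∃ m : ℕ, ∀ᶠ k : ℕ in atTop, ∃ s : Finset (ℤ → Torus),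
      IsDynCoverOf shiftT (Xf f) U (k - m) (s : Set (ℤ → Torus)) ∧
      s.card ≤ Nat.card (Pk f k) * Real.exp (ε * k) := by
  obtain ⟨p, δ, hδ, hUδ⟩ := exists_window_of_mem_uniformity hU
  have hε' : 0 < ε / (3 * (f.natDegree + 1)) := by positivity
  refine ⟨2 * p, ?_⟩
  filter_upwards [hnc.eventually_exp_neg_mul_le_norm_aeval hε',
    eventually_exists_quantization hε' hδ, eventually_gt_atTop 0] with k hf ⟨q, hq, hqε, hqδ⟩ hk
  have : NeZero k := ⟨hk.ne'⟩
  obtain ⟨s, hs, hcard⟩ := hnc.exists_isDynCoverOf (Real.exp_pos _) hf hq hqδ hUδ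
  refine ⟨s, hs, ?_⟩
  calc (s.card : ℝ) ≤ Nat.card (Pk f k) * (q : ℝ) ^ f.natDegree := by exact_mod_cast hcard
    _ ≤ Nat.card (Pk f k) * Real.exp (ε * k) := by
      gcongr
      calc (q : ℝ) ^ f.natDegree ≤ (q : ℝ) ^ (f.natDegree + 1) :=
            pow_le_pow_right₀ (by exact_mod_cast hq) f.natDegree.le_succ
        _ ≤ Real.exp (3 * (ε / (3 * (f.natDegree + 1))) * k) ^ (f.natDegree + 1) := by gcongr
        _ = Real.exp (ε * k) := by
          rw [← Real.exp_nat_mul]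
          push_cast
          congr 1
          field_simp

theorem Noncyclotomic.coverEntropy_le_of_frequently (hnc : Noncyclotomic f) {a b : ℝ} (hab : a < b)
    (ha : ∃ᶠ k : ℕ in atTop, Real.log (Nat.card (Pk f k)) / (k : ℝ) < a) :
    coverEntropy shiftT (Xf f) ≤ b := by
  refine iSup₂_le fun U hU => ?_
  obtain ⟨V, hV, hVsymm, hVU⟩ := comp_symm_mem_uniformity_sets hU
  refine (coverEntropyEntourage_antitone _ _ hVU).trans ?_
  obtain ⟨m, hm⟩ := hnc.eventually_exists_isDynCoverOf hV (sub_pos.mpr hab)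
  refine coverEntropyEntourage_comp_le_of_frequently (mapsTo_shiftT_Xf f) (m := m) ?_
  refine (ha.and_eventually (hm.and (eventually_gt_atTop 0))).mono ?_
  rintro k ⟨hka, ⟨s, hs, hcard⟩, hk⟩
  have : NeZero k := ⟨hk.ne'⟩
  rw [div_lt_iff₀ (by exact_mod_cast hk)] at hka
  refine ⟨s, hs, hcard.trans ?_⟩
  calc Nat.card (Pk f k) * Real.exp ((b - a) * k) ≤ Real.exp (a * k) * Real.exp ((b - a) * k) := by
        gcongr
        exact (Real.log_le_iff_le_exp (by exact_mod_cast hnc.card_Pk_pos k)).mp hka.le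
    _ = Real.exp (b * k) := by
        rw [← Real.exp_add]
        ring_nf

theorem Noncyclotomic.coverEntropy_le_liminf (hnc : Noncyclotomic f) :
    coverEntropy shiftT (Xf f) ≤
      liminf (fun k : ℕ => ((Real.log (Nat.card (Pk f k)) / (k : ℝ) : ℝ) : EReal)) atTop := by
  refine le_of_forall_gt fun c hc => ?_
  obtain ⟨b, hb, hbc⟩ := EReal.lt_iff_exists_real_btwn.mp hc
  obtain ⟨a, ha, hab⟩ := EReal.lt_iff_exists_real_btwn.mp hb
  refine (hnc.coverEntropy_le_of_frequently (EReal.coe_lt_coe_iff.mp hab) ?_).trans_lt hbc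
  exact (frequently_lt_of_liminf_lt (by isBoundedDefault) ha).mono
    fun k hk => EReal.coe_lt_coe_iff.mp hk

/-- The entourage of `𝕋^ℤ` of pairs of points whose coordinates at `0` are `δ`-close. -/
def zeroCoordEntourage (δ : ℝ) : SetRel (ℤ → Torus) (ℤ → Torus) :=
  {xy | dist (xy.1 0) (xy.2 0) < δ}

theorem zeroCoordEntourage_mem_uniformity {δ : ℝ} (hδ : 0 < δ) :
    zeroCoordEntourage δ ∈ 𝓤 (ℤ → Torus) :=
  Pi.uniformContinuous_proj (fun _ : ℤ => Torus) 0 (Metric.dist_mem_uniformity hδ)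

theorem dist_lt_of_mem_ball_dynEntourage {δ : ℝ} {k : ℕ} {x y : ℤ → Torus}
    (h : y ∈ UniformSpace.ball x (dynEntourage shiftT (zeroCoordEntourage δ) k)) {n : ℕ}
    (hn : n < k) : dist (x n) (y n) < δ := by
  simpa [zeroCoordEntourage, UniformSpace.ball, shiftT_iterate_apply] using
    mem_ball_dynEntourage.mp h n hn

theorem Noncyclotomic.isDynNetIn_Pk (hnc : Noncyclotomic f) (k : ℕ) [NeZero k] {δ : ℝ}
    (hδ : l1Norm f * (δ + δ) < 1) :
    IsDynNetIn shiftT (Xf f) (zeroCoordEntourage δ) k (Pk f k) := by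
  refine ⟨fun x hx => hx.1, fun x hx y hy hxy => Set.disjoint_left.mpr fun w hxw hyw => hxy ?_⟩
  refine sub_eq_zero.mp (hnc.eq_zero_of_mem_Pk hδ (sub_mem_Pk hx hy) fun n hn => ?_)
  rw [Pi.sub_apply, ← dist_eq_norm]
  exact (dist_triangle_right _ _ (w n)).trans (add_le_add
    (dist_lt_of_mem_ball_dynEntourage hxw hn).le (dist_lt_of_mem_ball_dynEntourage hyw hn).le)

theorem Noncyclotomic.limsup_le_coverEntropy (hnc : Noncyclotomic f) :
    limsup (fun k : ℕ => ((Real.log (Nat.card (Pk f k)) / (k : ℝ) : ℝ) : EReal)) atTop ≤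
      coverEntropy shiftT (Xf f) := by
  have hf : 0 < l1Norm f := one_pos.trans_le (one_le_l1Norm hnc.ne_zero)
  have hδ : l1Norm f * (1 / (4 * l1Norm f) + 1 / (4 * l1Norm f)) < 1 := by
    field_simp
    norm_num
  refine le_trans (limsup_le_limsup ?_) (netEntropyEntourage_le_coverEntropy (T := shiftT)
    (F := Xf f) (zeroCoordEntourage_mem_uniformity (δ := 1 / (4 * l1Norm f)) (by positivity)))
  filter_upwards [eventually_gt_atTop 0] with k hk
  have : NeZero k := ⟨hk.ne'⟩
  have hnet := hnc.isDynNetIn_Pk k hδ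
  rw [← (hnc.finite_Pk k).coe_toFinset] at hnet
  have hcard := hnet.card_le_netMaxcard
  rw [← Set.ncard_eq_toFinset_card _ (hnc.finite_Pk k), ← Nat.card_coe_set_eq] at hcard
  rw [← log_natCast_div (hnc.card_Pk_pos k)]
  refine EReal.monotone_div_right_of_nonneg k.cast_nonneg' (ENNReal.log_monotone ?_)
  exact_mod_cast ENat.toENNReal_mono hcard

end Entropy

theorem entropy_periodic_points_general (f : ℤ[X]) (hnc : Noncyclotomic f) :
    (∀ k : ℕ, 0 < k → (Pk f k).Finite) ∧
    Tendsto (fun k : ℕ => ((Real.log (Nat.card (Pk f k)) / (k : ℝ) : ℝ) : EReal)) atTop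
      (nhds (Dynamics.coverEntropy shiftT (Xf f))) :=
  ⟨fun k hk => have : NeZero k := ⟨hk.ne'⟩; hnc.finite_Pk k,
    tendsto_of_le_liminf_of_limsup_le hnc.coverEntropy_le_liminf hnc.limsup_le_coverEntropy⟩

/-- if `f` is irreducible in `ℤ[u^{±1}]` and noncyclotomic, then for every
`k ≥ 1` the set `P_k(α_f)` of points of period `k` is finite, and
`h(α_f) = lim_{k→∞} (1/k) log |P_k(α_f)|`. -/
theorem entropy_periodic_points (f : Polynomial ℤ) (hm : 1 ≤ f.natDegree)
    (hlead : 0 < f.leadingCoeff) (h0 : f.coeff 0 ≠ 0)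
    (hirr : Irreducible (Polynomial.toLaurent f)) (hnc : Noncyclotomic f) :
    (∀ k : ℕ, 0 < k → (Pk f k).Finite) ∧
    Tendsto (fun k : ℕ => ((Real.log (Nat.card (Pk f k)) / (k : ℝ) : ℝ) : EReal)) atTop
      (nhds (Dynamics.coverEntropy shiftT (Xf f))) :=
  entropy_periodic_points_general f hnc

end
end

section
/- Suppose f is irreducible in ℤ[u^{±1}] and noncyclotomic. Then there exists a unique bounded real sequence w⁺ ∈ ℓ^∞(ℤ,ℝ) with f(σ̄)(w⁺) = v^Δ and lim_{n→+∞} w⁺_n = 0; moreover the convergence is exponentially fast, i.e. there exist C > 0 and 0 < λ < 1 with |w⁺_n| ≤ C·λ^n for all n ≥ 1. Symmetrically, there is a unique w⁻ ∈ ℓ^∞(ℤ,ℝ) with f(σ̄)(w⁻) = v^Δ and lim_{n→−∞} w⁻_n = 0, with exponentially fast decay as n → −∞. -/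
open Filter Topology Polynomial

noncomputable section

/-- The shift on real sequences, `(σ̄ w)_n = w_{n+1}`. -/
def shiftR (w : ℤ → ℝ) : ℤ → ℝ := fun n => w (n + 1)

/-- `f(σ̄)` on real sequences. -/
def fsR (f : Polynomial ℤ) (w : ℤ → ℝ) : ℤ → ℝ :=
  fun n => ∑ k ∈ Finset.range (f.natDegree + 1), (f.coeff k : ℝ) * w (n + (k : ℤ))

/-- Bounded real sequences, i.e. membership in `ℓ^∞(ℤ,ℝ)`. -/
def Bdd (w : ℤ → ℝ) : Prop := ∃ B : ℝ, ∀ n, |w n| ≤ B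

/-- The sequence `v^Δ` with `v^Δ_0 = 1` and `v^Δ_n = 0` otherwise. -/
def vDelta : ℤ → ℝ := fun n => if n = 0 then 1 else 0

/-- `w⁺`: bounded, `f(σ̄) w = v^Δ`, `w_n → 0` as `n → +∞`. -/
def IsWplus (f : Polynomial ℤ) (w : ℤ → ℝ) : Prop :=
  Bdd w ∧ fsR f w = vDelta ∧ Tendsto w atTop (nhds 0)

/-- `w⁻`: bounded, `f(σ̄) w = v^Δ`, `w_n → 0` as `n → −∞`. -/
def IsWminus (f : Polynomial ℤ) (w : ℤ → ℝ) : Prop :=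
  Bdd w ∧ fsR f w = vDelta ∧ Tendsto w atBot (nhds 0)

/-!
An equation `w_{n+1} - α w_n = v^Δ_n` has two one-sided solutions: the forward one is `O(r^n)` on
`ℤ` when `|α| ≤ r`, the backward one when `r ≤ |α|`. If no root `α` of `f` has modulus strictly
between `1` and `r`, then for each root one of the two is at once bounded and `O(r^n)`. An
irreducible `f` is separable over `ℚ`, so partial fractions combine these into a bounded solution
of `f(σ̄) w = v^Δ` that is `O(r^n)`. As `f` has finitely many roots, `r` can be taken slightly
below `1`, which gives `w⁺`, or slightly above `1`, which gives `w⁻`.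

For uniqueness, if `f(σ̄)` killed a nonzero bounded sequence vanishing at one end, then so would
some `σ̄ - α`; but a nonzero geometric sequence on `ℤ` is bounded only if `|α| = 1`, and then its
modulus is constant.
-/

section Irreducible

variable {R : Type*} [CommRing R] [IsDomain R]

theorem isUnit_of_isUnit_toLaurent {p : R[X]} (h0 : p.coeff 0 ≠ 0) (hp : IsUnit (toLaurent p)) :
    IsUnit p := by
  obtain ⟨q, hq⟩ := hp.exists_right_inv
  obtain ⟨n, r, hr⟩ := LaurentPolynomial.exists_T_pow q
  have hdvd : p ∣ X ^ n := ⟨r, toLaurent_injective <| by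
    rw [map_mul, hr, ← mul_assoc, hq, one_mul, toLaurent_X_pow]⟩
  obtain ⟨i, -, hi⟩ := (dvd_prime_pow prime_X n).1 hdvd
  obtain rfl : i = 0 := by
    by_contra hi0
    exact h0 (X_dvd_iff.1 ((dvd_pow_self X hi0).trans hi.symm.dvd))
  simpa using hi

theorem irreducible_of_irreducible_toLaurent {p : R[X]} (h0 : p.coeff 0 ≠ 0)
    (hp : Irreducible (toLaurent p)) : Irreducible p := by
  refine ⟨fun h => hp.not_isUnit (h.map toLaurent), fun a b hab => ?_⟩
  have hcoeff : a.coeff 0 * b.coeff 0 ≠ 0 := by rwa [← mul_coeff_zero, ← hab]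
  exact (hp.isUnit_or_isUnit (by rw [hab, map_mul])).imp
    (isUnit_of_isUnit_toLaurent (left_ne_zero_of_mul hcoeff))
    (isUnit_of_isUnit_toLaurent (right_ne_zero_of_mul hcoeff))

end Irreducible

theorem separable_map_rat_of_irreducible {f : ℤ[X]} (hdeg : f.natDegree ≠ 0)
    (hf : Irreducible f) : (f.map (Int.castRingHom ℚ)).Separable :=
  ((IsPrimitive.Int.irreducible_iff_irreducible_map_cast (hf.isPrimitive hdeg)).1 hf).separable

section Endomorphism

theorem aeval_apply_mem {R M : Type*} [CommSemiring R] [AddCommMonoid M] [Module R M]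
    {T : Module.End R M} {V : Submodule R M} (hV : V ∈ T.invtSubmodule) (p : R[X]) {x : M}
    (hx : x ∈ V) : aeval T p x ∈ V := by
  rw [aeval_eq_sum_range, LinearMap.sum_apply]
  exact V.sum_mem fun k _ => V.smul_mem _ (Module.End.pow_apply_mem_of_forall_mem k hV x hx)

variable {K : Type*} [Field K]

@[elab_as_elim]
theorem splits_induction {P : K[X] → Prop} {p : K[X]} (hp : p.Splits) (hp0 : p ≠ 0)
    (const : ∀ c : K, c ≠ 0 → P (C c)) (linear : ∀ α : K, P (X - C α))
    (mul : ∀ p q : K[X], P p → P q → P (p * q)) : P p := by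
  have hprod (s : Multiset K) : P (s.map (X - C ·)).prod := by
    induction s using Multiset.induction_on with
    | empty => simpa using const 1 one_ne_zero
    | cons α s ih => simpa using mul _ _ (linear α) ih
  rw [hp.eq_prod_roots]
  exact mul _ _ (const _ (leadingCoeff_ne_zero.2 hp0)) (hprod p.roots)

variable {M : Type*} [AddCommGroup M] [Module K M] {T : Module.End K M} {V : Submodule K M}

theorem aeval_X_sub_C_apply (α : K) (x : M) : aeval T (X - C α) x = T x - α • x := by
  simp [Module.algebraMap_end_apply]

theorem disjoint_ker_aeval_of_forall_disjoint_eigenspace (hV : V ∈ T.invtSubmodule)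
    (hT : ∀ α, Disjoint (T.eigenspace α) V) {p : K[X]} (hp : p.Splits) (hp0 : p ≠ 0) :
    Disjoint (LinearMap.ker (aeval T p)) V := by
  simp only [Submodule.disjoint_def, LinearMap.mem_ker, Module.End.mem_eigenspace_iff] at hT ⊢
  refine splits_induction hp hp0 (fun c hc => ?_) (fun α => ?_) fun p q ihp ihq => ?_
  · simp [Module.algebraMap_end_apply, hc]
  · simpa only [aeval_X_sub_C_apply, sub_eq_zero] using hT α
  · intro x hx hxV
    rw [map_mul, Module.End.mul_apply] at hx
    exact ihq x (ihp _ hx (aeval_apply_mem hV q hxV)) hxV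

theorem mem_map_aeval_mul_of_isCoprime (hV : V ∈ T.invtSubmodule) {p q : K[X]}
    (hpq : IsCoprime p q) {v : M} (hp : v ∈ V.map (aeval T p)) (hq : v ∈ V.map (aeval T q)) :
    v ∈ V.map (aeval T (p * q)) := by
  obtain ⟨a, b, hab⟩ := hpq
  obtain ⟨x, hx, hxv⟩ := hp
  obtain ⟨y, hy, hyv⟩ := hq
  -- `p(T) x = q(T) y = v` and `a p + b q = 1` give `(p q)(T) (b(T) x + a(T) y) = v`.
  refine ⟨aeval T b x + aeval T a y,
    V.add_mem (aeval_apply_mem hV b hx) (aeval_apply_mem hV a hy), ?_⟩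
  calc aeval T (p * q) (aeval T b x + aeval T a y)
      = aeval T (b * q) (aeval T p x) + aeval T (a * p) (aeval T q y) := by
        simp only [map_add, ← Module.End.mul_apply, ← map_mul]
        ring_nf
    _ = aeval T (a * p + b * q) v := by
        rw [hxv, hyv, map_add, LinearMap.add_apply, add_comm]
    _ = v := by rw [hab, map_one, Module.End.one_apply]

theorem mem_map_aeval_of_separable (hV : V ∈ T.invtSubmodule) {v : M} (hv : v ∈ V) {p : K[X]}
    (hp : p.Splits) (hsep : p.Separable)
    (hroots : ∀ α ∈ p.roots, v ∈ V.map (aeval T (X - C α))) : v ∈ V.map (aeval T p) := by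
  have hp0 := hsep.ne_zero
  revert hsep hroots
  refine splits_induction hp hp0 (fun c hc _ _ => ?_) (fun α _ hroots => ?_)
    fun p q ihp ihq hsep hroots => ?_
  · exact ⟨c⁻¹ • v, V.smul_mem _ hv, by simp [Module.algebraMap_end_apply, hc]⟩
  · exact hroots α (by simp)
  · have hroots_mul := roots_mul hsep.ne_zero
    exact mem_map_aeval_mul_of_isCoprime hV hsep.isCoprime
      (ihp hsep.of_mul_left fun α hα => hroots α (by simp [hroots_mul, hα]))
      (ihq hsep.of_mul_right fun α hα => hroots α (by simp [hroots_mul, hα]))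

end Endomorphism

section Shift

/-- The shift `(σ̄ w)_n = w_{n+1}` as a linear endomorphism of the space of complex sequences. -/
def shiftC : Module.End ℂ (ℤ → ℂ) := LinearMap.funLeft ℂ ℂ (· + 1)

theorem shiftC_apply (w : ℤ → ℂ) (n : ℤ) : shiftC w n = w (n + 1) := rfl

theorem shiftC_pow_apply (k : ℕ) (w : ℤ → ℂ) (n : ℤ) : (shiftC ^ k) w n = w (n + k) := by
  induction k generalizing n with
  | zero => simp
  | succ k ih =>
    rw [pow_succ', Module.End.mul_apply, shiftC_apply, ih, Nat.cast_succ, add_right_comm, add_assoc]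

theorem aeval_shiftC_apply (f : ℤ[X]) (w : ℤ → ℂ) (n : ℤ) :
    aeval shiftC f w n = ∑ k ∈ Finset.range (f.natDegree + 1), (f.coeff k : ℂ) * w (n + k) := by
  rw [aeval_eq_sum_range, LinearMap.sum_apply, Finset.sum_apply]
  simp [shiftC_pow_apply]

theorem fsR_re (f : ℤ[X]) (w : ℤ → ℂ) (n : ℤ) :
    fsR f (fun k => (w k).re) n = (aeval shiftC f w n).re := by
  simp [aeval_shiftC_apply, fsR]

theorem aeval_shiftC_ofReal (f : ℤ[X]) (w : ℤ → ℝ) (n : ℤ) :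
    aeval shiftC f (fun k => (w k : ℂ)) n = fsR f w n := by
  simp [aeval_shiftC_apply, fsR]

theorem re_single_zero_one_apply (n : ℤ) : ((Pi.single 0 1 : ℤ → ℂ) n).re = vDelta n := by
  by_cases hn : n = 0 <;> simp [vDelta, hn]

/-- The complex sequences `w` with `w_n = O(r^n)` uniformly in `n ∈ ℤ`. The case `r = 1` is
`ℓ^∞(ℤ,ℂ)`; a bounded sequence in this space decays exponentially as `n → +∞` if `r < 1` and as
`n → -∞` if `r > 1`. -/
def zpowBounded (r : ℝ) : Submodule ℂ (ℤ → ℂ) where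
  carrier := {w | ∃ B : ℝ, ∀ n, ‖w n‖ ≤ B * r ^ n}
  zero_mem' := ⟨0, by simp⟩
  add_mem' := by
    rintro v w ⟨A, hA⟩ ⟨B, hB⟩
    refine ⟨A + B, fun n => ?_⟩
    rw [add_mul]
    exact norm_add_le_of_le (hA n) (hB n)
  smul_mem' := by
    rintro c w ⟨B, hB⟩
    refine ⟨‖c‖ * B, fun n => ?_⟩
    rw [Pi.smul_apply, norm_smul, mul_assoc]
    exact mul_le_mul_of_nonneg_left (hB n) (norm_nonneg c)

theorem mem_zpowBounded {r : ℝ} {w : ℤ → ℂ} :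
    w ∈ zpowBounded r ↔ ∃ B : ℝ, ∀ n, ‖w n‖ ≤ B * r ^ n := Iff.rfl

theorem mem_zpowBounded_one {w : ℤ → ℂ} : w ∈ zpowBounded 1 ↔ ∃ B : ℝ, ∀ n, ‖w n‖ ≤ B := by
  simp [mem_zpowBounded]

theorem ofReal_mem_zpowBounded_one {w : ℤ → ℝ} :
    (fun n => (w n : ℂ)) ∈ zpowBounded 1 ↔ Bdd w := by
  simp [mem_zpowBounded_one, Bdd]

theorem single_mem_zpowBounded {r : ℝ} (hr : 0 < r) (c : ℂ) :
    Pi.single 0 c ∈ zpowBounded r := by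
  refine ⟨‖c‖, fun n => ?_⟩
  obtain rfl | hn := eq_or_ne n 0
  · simp
  · rw [Pi.single_eq_of_ne hn, norm_zero]
    positivity

theorem zpowBounded_mem_invtSubmodule {r : ℝ} (hr : r ≠ 0) :
    zpowBounded r ∈ shiftC.invtSubmodule := by
  rintro w ⟨B, hB⟩
  refine ⟨B * r, fun n => (hB (n + 1)).trans_eq ?_⟩
  rw [zpow_add_one₀ hr]
  ring

theorem zeroAtFilterSubmodule_mem_invtSubmodule {F : Filter ℤ} (hF : Tendsto (· + 1) F F) :
    zeroAtFilterSubmodule ℂ F ∈ shiftC.invtSubmodule :=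
  fun w (hw : Tendsto w F (𝓝 0)) => hw.comp hF

end Shift

section Eigenvector

variable {α : ℂ} {d : ℤ → ℂ}

theorem norm_apply_add_natCast_of_mem_eigenspace (hd : d ∈ shiftC.eigenspace α) (n : ℤ) (k : ℕ) :
    ‖d (n + k)‖ = ‖α‖ ^ k * ‖d n‖ := by
  have hpow : (shiftC ^ k) d = α ^ k • d := by
    simpa using Module.End.aeval_apply_of_mem_apply_eq_smul (p := X ^ k)
      (Module.End.mem_eigenspace_iff.1 hd)
  rw [← shiftC_pow_apply k d, hpow, Pi.smul_apply, norm_smul, norm_pow]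

theorem eq_zero_of_mem_eigenspace_of_norm_ne_one (hd : d ∈ shiftC.eigenspace α)
    (hα : ‖α‖ ≠ 1) (hbdd : d ∈ zpowBounded 1) : d = 0 := by
  obtain ⟨B, hB⟩ := mem_zpowBounded_one.1 hbdd
  suffices h : ∃ r : ℝ, 0 ≤ r ∧ r < 1 ∧ ∀ n k, ‖d n‖ ≤ r ^ k * B by
    obtain ⟨r, hr0, hr1, hr⟩ := h
    ext n
    have hlim : Tendsto (fun k : ℕ => r ^ k * B) atTop (𝓝 0) := by
      simpa using (tendsto_pow_atTop_nhds_zero_of_lt_one hr0 hr1).mul_const B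
    exact norm_le_zero_iff.1 (ge_of_tendsto' hlim (hr n))
  obtain hlt | hgt := hα.lt_or_gt
  · refine ⟨‖α‖, norm_nonneg α, hlt, fun n k => ?_⟩
    calc ‖d n‖ = ‖α‖ ^ k * ‖d (n - k)‖ := by
          rw [← norm_apply_add_natCast_of_mem_eigenspace hd, sub_add_cancel]
      _ ≤ ‖α‖ ^ k * B := by gcongr; exact hB _
  · refine ⟨‖α‖⁻¹, by positivity, inv_lt_one_of_one_lt₀ hgt, fun n k => ?_⟩
    calc ‖d n‖ = ‖α‖⁻¹ ^ k * ‖d (n + k)‖ := by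
          rw [norm_apply_add_natCast_of_mem_eigenspace hd, inv_pow, inv_mul_cancel_left₀]
          positivity
      _ ≤ ‖α‖⁻¹ ^ k * B := by gcongr; exact hB _

theorem eq_zero_of_mem_eigenspace_of_norm_eq_one {F : Filter ℤ} [F.NeBot]
    (hd : d ∈ shiftC.eigenspace α) (hα : ‖α‖ = 1) (hzero : ZeroAtFilter F d) : d = 0 := by
  have hadd (n : ℤ) (k : ℕ) : ‖d (n + k)‖ = ‖d n‖ := by
    simp [norm_apply_add_natCast_of_mem_eigenspace hd, hα]
  have hconst (m n : ℤ) : ‖d m‖ = ‖d n‖ := by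
    obtain hmn | hnm := le_total m n
    · obtain ⟨k, rfl⟩ := Int.le.dest hmn
      exact (hadd m k).symm
    · obtain ⟨k, rfl⟩ := Int.le.dest hnm
      exact hadd n k
  ext n
  have hlim : Tendsto (fun _ : ℤ => ‖d n‖) F (𝓝 0) := by
    simpa [hconst _ n] using Tendsto.norm hzero
  exact norm_eq_zero.1 (tendsto_nhds_unique tendsto_const_nhds hlim)

theorem disjoint_eigenspace_shiftC (α : ℂ) (F : Filter ℤ) [F.NeBot] :
    Disjoint (shiftC.eigenspace α) (zpowBounded 1 ⊓ zeroAtFilterSubmodule ℂ F) := by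
  rw [Submodule.disjoint_def]
  rintro d hd ⟨hbdd, hzero⟩
  obtain hα | hα := eq_or_ne ‖α‖ 1
  · exact eq_zero_of_mem_eigenspace_of_norm_eq_one hd hα hzero
  · exact eq_zero_of_mem_eigenspace_of_norm_ne_one hd hα hbdd

end Eigenvector

section FundamentalSolution

variable {α : ℂ} {r : ℝ}

/-- The solution of `w_{n+1} - α w_n = v^Δ_n` supported on `n ≥ 1`. For `α = 0` the convention
`0 ^ 0 = 1` gives the correct value at `n = 1`. -/
def forwardSolution (α : ℂ) : ℤ → ℂ := fun n => if 1 ≤ n then α ^ (n - 1) else 0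

/-- The solution of `w_{n+1} - α w_n = v^Δ_n`, for `α ≠ 0`, supported on `n ≤ 0`. -/
def backwardSolution (α : ℂ) : ℤ → ℂ := fun n => if 1 ≤ n then 0 else -α ^ (n - 1)

theorem aeval_shiftC_forwardSolution (α : ℂ) :
    aeval shiftC (X - C α) (forwardSolution α) = Pi.single 0 1 := by
  ext n
  rw [aeval_X_sub_C_apply, Pi.sub_apply, Pi.smul_apply, shiftC_apply, smul_eq_mul]
  obtain hn | rfl | hn := lt_trichotomy n 0
  · simp [forwardSolution, hn.ne, show ¬ 0 ≤ n by lia, show ¬ 1 ≤ n by lia]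
  · simp [forwardSolution]
  · have hpow : α * α ^ (n - 1) = α ^ n := by
      simpa using (zpow_add' (a := α) (m := 1) (n := n - 1) (.inr (.inl (by lia)))).symm
    simp [forwardSolution, hn.ne', hn.le, show 1 ≤ n by lia, hpow]

theorem aeval_shiftC_backwardSolution (hα : α ≠ 0) :
    aeval shiftC (X - C α) (backwardSolution α) = Pi.single 0 1 := by
  ext n
  rw [aeval_X_sub_C_apply, Pi.sub_apply, Pi.smul_apply, shiftC_apply, smul_eq_mul]
  have hpow : α * α ^ (n - 1) = α ^ n := by rw [← zpow_one_add₀ hα, add_sub_cancel]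
  obtain hn | rfl | hn := lt_trichotomy n 0
  · simp [backwardSolution, hn.ne, show ¬ 0 ≤ n by lia, show ¬ 1 ≤ n by lia, hpow]
  · simp [backwardSolution, hα]
  · simp [backwardSolution, hn.ne', hn.le, show 1 ≤ n by lia]

theorem forwardSolution_mem_zpowBounded (hr : 0 < r) (h : ‖α‖ ≤ r) :
    forwardSolution α ∈ zpowBounded r := by
  refine ⟨r⁻¹, fun n => ?_⟩
  rw [mul_comm, ← zpow_sub_one₀ hr.ne', forwardSolution]
  split_ifs with hn
  · rw [norm_zpow]
    exact zpow_le_zpow_left₀ (by lia) (norm_nonneg α) h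
  · rw [norm_zero]
    positivity

theorem backwardSolution_mem_zpowBounded (hr : 0 < r) (h : r ≤ ‖α‖) :
    backwardSolution α ∈ zpowBounded r := by
  refine ⟨r⁻¹, fun n => ?_⟩
  rw [mul_comm, ← zpow_sub_one₀ hr.ne', backwardSolution]
  split_ifs with hn
  · rw [norm_zero]
    positivity
  · rw [norm_neg, norm_zpow]
    simpa only [inv_zpow', neg_sub] using
      zpow_le_zpow_left₀ (n := 1 - n) (by lia) (by positivity) (inv_anti₀ hr h)

theorem single_mem_map_aeval_X_sub_C (hr : 0 < r) (h : ‖α‖ ∉ Set.uIoo 1 r) :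
    Pi.single 0 1 ∈ (zpowBounded 1 ⊓ zpowBounded r).map (aeval shiftC (X - C α)) := by
  obtain ⟨h1, hr'⟩ | ⟨h1, hr'⟩ : (‖α‖ ≤ 1 ∧ ‖α‖ ≤ r) ∨ (1 ≤ ‖α‖ ∧ r ≤ ‖α‖) := by
    simpa [Set.uIoo, -not_and, not_and_or] using h
  · exact ⟨forwardSolution α, ⟨forwardSolution_mem_zpowBounded one_pos h1,
      forwardSolution_mem_zpowBounded hr hr'⟩, aeval_shiftC_forwardSolution α⟩
  · exact ⟨backwardSolution α, ⟨backwardSolution_mem_zpowBounded one_pos h1,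
      backwardSolution_mem_zpowBounded hr hr'⟩,
      aeval_shiftC_backwardSolution (norm_pos_iff.1 (hr.trans_le hr'))⟩

end FundamentalSolution

section Recurrence

variable {f : ℤ[X]}

theorem exists_fsR_eq_vDelta (hf : (f.map (Int.castRingHom ℚ)).Separable) {r : ℝ} (hr : 0 < r)
    (hroots : ∀ α ∈ f.aroots ℂ, ‖α‖ ∉ Set.uIoo 1 r) :
    ∃ w : ℤ → ℝ, Bdd w ∧ fsR f w = vDelta ∧ ∃ B : ℝ, ∀ n, |w n| ≤ B * r ^ n := by
  have hsep : (f.map (algebraMap ℤ ℂ)).Separable := by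
    rwa [IsScalarTower.algebraMap_eq ℤ ℚ ℂ, ← Polynomial.map_map, separable_map]
  have hV : zpowBounded 1 ⊓ zpowBounded r ∈ shiftC.invtSubmodule :=
    Module.End.invtSubmodule.inf_mem (zpowBounded_mem_invtSubmodule one_ne_zero)
      (zpowBounded_mem_invtSubmodule hr.ne')
  obtain ⟨z, ⟨hz1, B, hB⟩, hz⟩ := mem_map_aeval_of_separable hV
    ⟨single_mem_zpowBounded one_pos 1, single_mem_zpowBounded hr 1⟩ (IsAlgClosed.splits _) hsep
    fun α hα => single_mem_map_aeval_X_sub_C hr (hroots α hα)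
  obtain ⟨A, hA⟩ := mem_zpowBounded_one.1 hz1
  rw [aeval_map_algebraMap] at hz
  refine ⟨fun n => (z n).re, ⟨A, fun n => (Complex.abs_re_le_norm _).trans (hA n)⟩, ?_,
    B, fun n => (Complex.abs_re_le_norm _).trans (hB n)⟩
  ext n
  rw [fsR_re, hz, re_single_zero_one_apply]

theorem eq_of_fsR_eq (hf : f ≠ 0) {F : Filter ℤ} [F.NeBot] (hF : Tendsto (· + 1) F F)
    {v w : ℤ → ℝ} (hv : Bdd v) (hw : Bdd w) (hv0 : Tendsto v F (𝓝 0)) (hw0 : Tendsto w F (𝓝 0))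
    (h : fsR f v = fsR f w) : v = w := by
  set V : Submodule ℂ (ℤ → ℂ) := zpowBounded 1 ⊓ zeroAtFilterSubmodule ℂ F
  have hV : V ∈ shiftC.invtSubmodule :=
    Module.End.invtSubmodule.inf_mem (zpowBounded_mem_invtSubmodule one_ne_zero)
      (zeroAtFilterSubmodule_mem_invtSubmodule hF)
  have hofReal {u : ℤ → ℝ} (hu : Bdd u) (hu0 : Tendsto u F (𝓝 0)) : (fun n => (u n : ℂ)) ∈ V :=
    ⟨ofReal_mem_zpowBounded_one.2 hu, (Complex.continuous_ofReal.tendsto' 0 0 rfl).comp hu0⟩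
  have hker : aeval shiftC (f.map (algebraMap ℤ ℂ))
      ((fun n => (v n : ℂ)) - fun n => (w n : ℂ)) = 0 := by
    ext n
    rw [aeval_map_algebraMap, map_sub, Pi.sub_apply, aeval_shiftC_ofReal, aeval_shiftC_ofReal, h,
      sub_self, Pi.zero_apply]
  have hp0 : f.map (algebraMap ℤ ℂ) ≠ 0 :=
    (Polynomial.map_ne_zero_iff (FaithfulSMul.algebraMap_injective ℤ ℂ)).2 hf
  have hdisj := disjoint_ker_aeval_of_forall_disjoint_eigenspace hV
    (fun α => disjoint_eigenspace_shiftC α F) (IsAlgClosed.splits _) hp0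
  have hsub := Submodule.disjoint_def.1 hdisj _ hker (V.sub_mem (hofReal hv hv0) (hofReal hw hw0))
  ext n
  simpa [sub_eq_zero] using congrFun hsub n

/-- `w` is a bounded solution of `f(σ̄) w = v^Δ` with `w_n → 0` along `F`. The cases `F = atTop`
and `F = atBot` are, definitionally, `IsWplus` and `IsWminus`. -/
def IsVanishingSolution (F : Filter ℤ) (f : ℤ[X]) (w : ℤ → ℝ) : Prop :=
  Bdd w ∧ fsR f w = vDelta ∧ Tendsto w F (𝓝 0)

theorem existsUnique_isVanishingSolution (hf : (f.map (Int.castRingHom ℚ)).Separable)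
    {F : Filter ℤ} [F.NeBot] (hF : Tendsto (· + 1) F F) {r : ℝ} (hr : 0 < r)
    (hrF : Tendsto (fun n : ℤ => r ^ n) F (𝓝 0))
    (hroots : ∀ α ∈ f.aroots ℂ, ‖α‖ ∉ Set.uIoo 1 r) :
    (∃! w, IsVanishingSolution F f w) ∧
      ∀ w, IsVanishingSolution F f w → ∃ B > 0, ∀ n, |w n| ≤ B * r ^ n := by
  obtain ⟨z, hz1, hz, B, hB⟩ := exists_fsR_eq_vDelta hf hr hroots
  have hz0 : Tendsto z F (𝓝 0) :=
    squeeze_zero_norm hB (by simpa using hrF.const_mul B)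
  have hf0 : f ≠ 0 := by
    rintro rfl
    exact hf.ne_zero (Polynomial.map_zero _)
  have hunique (w) (hw : IsVanishingSolution F f w) : w = z :=
    eq_of_fsR_eq hf0 hF hw.1 hz1 hw.2.2 hz0 (hw.2.1.trans hz.symm)
  refine ⟨⟨z, ⟨hz1, hz, hz0⟩, hunique⟩, fun w hw => ⟨max B 1, by positivity, fun n => ?_⟩⟩
  rw [hunique w hw]
  exact (hB n).trans (by gcongr; exact le_max_left B 1)

end Recurrence

section Rate

theorem eventually_forall_notMem_uIoo (a : ℝ) (s : Finset ℝ) :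
    ∀ᶠ r in 𝓝 a, ∀ x ∈ s, x ∉ Set.uIoo a r := by
  rw [eventually_all_finset]
  intro x _
  obtain hx | rfl | hx := lt_trichotomy x a
  · filter_upwards [lt_mem_nhds hx] with r hr h
    exact (le_min hx.le hr.le).not_gt h.1
  · exact .of_forall fun r h =>
      (le_total x r).elim (inf_lt_left.1 h.1) (left_lt_sup.1 h.2)
  · filter_upwards [gt_mem_nhds hx] with r hr h
    exact (max_le hx.le hr.le).not_gt h.2

theorem tendsto_zpow_atTop_zero_of_lt_one {r : ℝ} (hr0 : 0 ≤ r) (hr1 : r < 1) :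
    Tendsto (fun n : ℤ => r ^ n) atTop (𝓝 0) := by
  rw [← Nat.map_cast_int_atTop, tendsto_map'_iff]
  simpa [Function.comp_def] using tendsto_pow_atTop_nhds_zero_of_lt_one hr0 hr1

theorem tendsto_zpow_atBot_zero_of_one_lt {r : ℝ} (hr : 1 < r) :
    Tendsto (fun n : ℤ => r ^ n) atBot (𝓝 0) := by
  have hr0 : 0 ≤ r⁻¹ := by positivity
  simpa [Function.comp_def] using
    (tendsto_zpow_atTop_zero_of_lt_one hr0 (inv_lt_one_of_one_lt₀ hr)).comp tendsto_neg_atBot_atTop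

theorem eventually_forall_aroots_norm_notMem_uIoo (f : ℤ[X]) :
    ∀ᶠ r in 𝓝 (1 : ℝ), ∀ α ∈ f.aroots ℂ, ‖α‖ ∉ Set.uIoo 1 r := by
  simpa only [Finset.forall_mem_image, Multiset.mem_toFinset] using
    eventually_forall_notMem_uIoo 1 ((f.aroots ℂ).toFinset.image norm)

end Rate

theorem exists_unique_wplus_wminus_general (f : Polynomial ℤ)
    (hf : (f.map (Int.castRingHom ℚ)).Separable) :
    (∃! w : ℤ → ℝ, IsWplus f w) ∧
    (∀ w : ℤ → ℝ, IsWplus f w →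
      ∃ C > (0:ℝ), ∃ l : ℝ, 0 < l ∧ l < 1 ∧ ∀ n : ℤ, 1 ≤ n → |w n| ≤ C * l ^ n) ∧
    (∃! w : ℤ → ℝ, IsWminus f w) ∧
    (∀ w : ℤ → ℝ, IsWminus f w →
      ∃ C > (0:ℝ), ∃ l : ℝ, 0 < l ∧ l < 1 ∧ ∀ n : ℤ, n ≤ -1 → |w n| ≤ C * l ^ (-n)) := by
  have hroots := eventually_forall_aroots_norm_notMem_uIoo f
  obtain ⟨a, ha, ha0, ha1⟩ :=
    ((hroots.filter_mono nhdsWithin_le_nhds).and (Ioo_mem_nhdsLT zero_lt_one)).exists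
  obtain ⟨b, hb, hb1, -⟩ :=
    ((hroots.filter_mono nhdsWithin_le_nhds).and (Ioo_mem_nhdsGT one_lt_two)).exists
  have hb0 : 0 < b := one_pos.trans hb1
  obtain ⟨hplus, hplus_decay⟩ := existsUnique_isVanishingSolution hf (F := atTop)
    (tendsto_atTop_add_const_right _ 1 tendsto_id) ha0
    (tendsto_zpow_atTop_zero_of_lt_one ha0.le ha1) ha
  obtain ⟨hminus, hminus_decay⟩ := existsUnique_isVanishingSolution hf (F := atBot)
    (tendsto_atBot_add_const_right _ 1 tendsto_id) hb0 (tendsto_zpow_atBot_zero_of_one_lt hb1) hb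
  refine ⟨hplus, fun w hw => ?_, hminus, fun w hw => ?_⟩
  · obtain ⟨C, hC, hle⟩ := hplus_decay w hw
    exact ⟨C, hC, a, ha0, ha1, fun n _ => hle n⟩
  · obtain ⟨C, hC, hle⟩ := hminus_decay w hw
    exact ⟨C, hC, b⁻¹, inv_pos.2 hb0, inv_lt_one_of_one_lt₀ hb1,
      fun n _ => by simpa only [inv_zpow', neg_neg] using hle n⟩

/-- if `f` is irreducible in `ℤ[u^{±1}]` and noncyclotomic, there is a unique
bounded real sequence `w⁺` with `f(σ̄)(w⁺) = v^Δ` and `w⁺_n → 0` as `n → +∞`, and the decay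
is exponentially fast; symmetrically for `w⁻` as `n → −∞`. -/
theorem exists_unique_wplus_wminus (f : Polynomial ℤ) (hm : 1 ≤ f.natDegree)
    (hlead : 0 < f.leadingCoeff) (h0 : f.coeff 0 ≠ 0)
    (hirr : Irreducible (Polynomial.toLaurent f)) (hnc : Noncyclotomic f) :
    (∃! w : ℤ → ℝ, IsWplus f w) ∧
    (∀ w : ℤ → ℝ, IsWplus f w →
      ∃ C > (0:ℝ), ∃ l : ℝ, 0 < l ∧ l < 1 ∧ ∀ n : ℤ, 1 ≤ n → |w n| ≤ C * l ^ n) ∧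
    (∃! w : ℤ → ℝ, IsWminus f w) ∧
    (∀ w : ℤ → ℝ, IsWminus f w →
      ∃ C > (0:ℝ), ∃ l : ℝ, 0 < l ∧ l < 1 ∧ ∀ n : ℤ, n ≤ -1 → |w n| ≤ C * l ^ (-n)) := by
  exact exists_unique_wplus_wminus_general f (separable_map_rat_of_irreducible (by lia)
    (irreducible_of_irreducible_toLaurent h0 hirr))

end
end

section
/- Suppose f is irreducible in ℤ[u^{±1}] and noncyclotomic. Then for every v ∈ ℓ^∞(ℤ,ℤ), the sequence ξ̄*(v) satisfies f(σ̄)(ξ̄*(v)) = v, and for every w ∈ W_f one has ξ̄*(f(σ̄)(w)) − w ∈ W_f^∘ = ker f(σ̄). -/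
open Filter Topology Polynomial

noncomputable section

/-- Bounded integer sequences. -/
def BddZ (v : ℤ → ℤ) : Prop := ∃ B : ℤ, ∀ n, |v n| ≤ B

/-- `ξ̄*(v)_k = ∑_{n≥0} v_n w⁻_{k-n} + ∑_{n<0} v_n w⁺_{k-n}`. -/
def xiStar (wp wm : ℤ → ℝ) (v : ℤ → ℤ) : ℤ → ℝ :=
  fun k => ∑' n : ℤ, (v n : ℝ) * (if 0 ≤ n then wm (k - n) else wp (k - n))

/-- Membership in `W_f = f(σ̄)^{-1}(ℓ^∞(ℤ,ℤ)) ⊆ ℓ^∞(ℤ,ℝ)`. -/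
def InWf (f : Polynomial ℤ) (w : ℤ → ℝ) : Prop :=
  Bdd w ∧ ∀ n, ∃ z : ℤ, fsR f w n = (z : ℝ)

/-- Membership in `V_f = f(σ̄)(W_f)` for an integer sequence. -/
def InVf (f : Polynomial ℤ) (v : ℤ → ℤ) : Prop :=
  ∃ w : ℤ → ℝ, Bdd w ∧ ∀ n, fsR f w n = (v n : ℝ)

/-!
Let `σ` be the shift and let `ξ` convolve the nonnegative half of a sequence with `w⁻` and the
negative half with `w⁺`. Since `f(σ)` sends both `w⁺` and `w⁻` to `v^Δ`, the composite `f(σ) ∘ ξ` is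
the identity on bounded sequences. Shifting moves the junction between the two halves by a single
index, so `ξ (σ x) - σ (ξ x) = x 0 • σ (w⁺ - w⁻)` is bounded: modulo bounded sequences `ξ` commutes
with `σ`, hence with `f(σ)`, and `ξ (f(σ) w) ≡ f(σ) (ξ w) = w`.

The series defining `ξ` converge because a null sequence eventually annihilated by a nonzero
polynomial in the shift decays geometrically, as one sees by splitting off the roots one at a time.
-/

open scoped ENNReal
open Asymptotics

lemma memℓp_infty_comp {ι κ E : Type*} [NormedAddCommGroup E] {w : ι → E} (hw : Memℓp w ∞)
    (g : κ → ι) : Memℓp (fun k => w (g k)) ∞ :=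
  memℓp_infty (hw.bddAbove.mono (Set.range_comp_subset_range g (‖w ·‖)))

section Shift

variable {𝕜 ι : Type*} [NormedField 𝕜] [AddMonoidWithOne ι]

/-- The shift `(σ w) n = w (n + 1)` on sequences indexed by `ι` (such as `ℕ` or `ℤ`). It is
continuous for the topology of pointwise convergence, so that `aeval (shift 𝕜 ι) P`, the operator
`P(σ)`, commutes with pointwise convergent sums. -/
def shift (𝕜 ι : Type*) [NormedField 𝕜] [AddMonoidWithOne ι] : (ι → 𝕜) →L[𝕜] (ι → 𝕜) :=
  .pi fun n => .proj (n + 1)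

@[simp]
lemma shift_apply (w : ι → 𝕜) (n : ι) : shift 𝕜 ι w n = w (n + 1) := rfl

lemma shift_pow_apply (j : ℕ) (w : ι → 𝕜) (n : ι) : (shift 𝕜 ι ^ j) w n = w (n + j) := by
  induction j generalizing w with
  | zero => simp
  | succ j ih => rw [pow_succ, mul_apply_eq_comp, ih, shift_apply, add_assoc, Nat.cast_succ]

lemma aeval_shift_apply_of_natDegree_lt {P : 𝕜[X]} {N : ℕ} (hN : P.natDegree < N) (w : ι → 𝕜)
    (n : ι) : aeval (shift 𝕜 ι) P w n = ∑ j ∈ Finset.range N, P.coeff j * w (n + j) := by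
  simp only [aeval_eq_sum_range' hN, sum_apply, smul_apply,
    Finset.sum_apply, Pi.smul_apply, shift_pow_apply, smul_eq_mul]

lemma aeval_shift_apply (P : 𝕜[X]) (w : ι → 𝕜) (n : ι) :
    aeval (shift 𝕜 ι) P w n = ∑ j ∈ Finset.range (P.natDegree + 1), P.coeff j * w (n + j) :=
  aeval_shift_apply_of_natDegree_lt P.natDegree.lt_succ_self w n

lemma aeval_shift_mul_X (P : 𝕜[X]) (w : ι → 𝕜) :
    aeval (shift 𝕜 ι) (P * X) w = aeval (shift 𝕜 ι) P (shift 𝕜 ι w) := by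
  rw [map_mul, aeval_X, mul_apply_eq_comp]

lemma memℓp_infty_shift {w : ι → 𝕜} (hw : Memℓp w ∞) : Memℓp (shift 𝕜 ι w) ∞ :=
  memℓp_infty_comp hw (· + 1)

lemma memℓp_infty_aeval_shift (P : 𝕜[X]) {w : ι → 𝕜} (hw : Memℓp w ∞) :
    Memℓp (aeval (shift 𝕜 ι) P w) ∞ := by
  induction P using Polynomial.induction_on generalizing w with
  | C c => simpa using hw.const_smul c
  | add P Q hP hQ => simpa using (hP hw).add (hQ hw)
  | monomial n c ih =>
    rw [pow_succ, ← mul_assoc, aeval_shift_mul_X]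
    exact ih (memℓp_infty_shift hw)

end Shift

section GeometricDecay

/-- The sequence `a` is `O(r ^ n)` for some ratio `0 < r < 1`. -/
def DecaysGeometrically {E : Type*} [Norm E] (a : ℕ → E) : Prop :=
  ∃ r ∈ Set.Ioo (0 : ℝ) 1, a =O[atTop] (r ^ · : ℕ → ℝ)

namespace DecaysGeometrically

variable {𝕜 E : Type*} [NormedField 𝕜] [SeminormedAddCommGroup E]
  {a : ℕ → E} {θ : 𝕜}

lemma exists_norm_le (h : DecaysGeometrically a) :
    ∃ r ∈ Set.Ioo (0 : ℝ) 1, ∃ C > 0, ∀ n, ‖a n‖ ≤ C * r ^ n := by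
  obtain ⟨r, hr, h⟩ := h
  obtain ⟨C, hC, h⟩ := bound_of_isBigO_nat_atTop h
  refine ⟨r, hr, C, hC, fun n => ?_⟩
  simpa [abs_of_pos hr.1] using h (pow_ne_zero n hr.1.ne')

lemma of_norm_le {r C : ℝ} (hr : r ∈ Set.Ioo (0 : ℝ) 1) (h : ∀ n, ‖a n‖ ≤ C * r ^ n) :
    DecaysGeometrically a :=
  ⟨r, hr, .of_bound C <| .of_forall fun n => by simpa [abs_of_pos hr.1] using h n⟩

lemma of_eventually_eq_zero (h : ∀ᶠ n in atTop, a n = 0) : DecaysGeometrically a :=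
  ⟨1 / 2, by norm_num, .of_bound 0 <| h.mono fun n hn => by simp [hn]⟩

lemma summable_norm (h : DecaysGeometrically a) : Summable fun n => ‖a n‖ := by
  obtain ⟨r, hr, h⟩ := h
  exact summable_of_isBigO_nat (summable_geometric_of_lt_one hr.1.le hr.2) h.norm_left

variable [NormedSpace 𝕜 E]

lemma of_sub_smul_of_norm_lt_one (hθ : ‖θ‖ < 1)
    (h : DecaysGeometrically fun n => a (n + 1) - θ • a n) : DecaysGeometrically a := by
  obtain ⟨r, ⟨hr0, hr1⟩, C, hC, h⟩ := h.exists_norm_le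
  obtain ⟨s, hs, hs1⟩ := exists_between (max_lt hr1 hθ)
  obtain ⟨hrs, hθs⟩ := max_lt_iff.1 hs
  have hs0 : 0 < s := hr0.trans hrs
  set D := max ‖a 0‖ (C / (s - ‖θ‖)) with hD
  have hCD : C ≤ D * (s - ‖θ‖) := (div_le_iff₀ (sub_pos.2 hθs)).1 (le_max_right _ _)
  refine of_norm_le (C := D) ⟨hs0, hs1⟩ fun n => ?_
  induction n with
  | zero => simp [hD]
  | succ n ih =>
    calc ‖a (n + 1)‖ = ‖(a (n + 1) - θ • a n) + θ • a n‖ := by rw [sub_add_cancel]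
      _ ≤ ‖a (n + 1) - θ • a n‖ + ‖θ‖ * ‖a n‖ := norm_smul θ (a n) ▸ norm_add_le _ _
      _ ≤ C * s ^ n + ‖θ‖ * (D * s ^ n) := by
        gcongr
        exact (h n).trans (by gcongr)
      _ ≤ D * (s - ‖θ‖) * s ^ n + ‖θ‖ * (D * s ^ n) := by gcongr
      _ = D * s ^ (n + 1) := by ring

lemma of_sub_smul_of_one_le_norm (hθ : 1 ≤ ‖θ‖) (ha : Tendsto a atTop (𝓝 0))
    (h : DecaysGeometrically fun n => a (n + 1) - θ • a n) : DecaysGeometrically a := by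
  obtain ⟨r, hr, C, -, h⟩ := h.exists_norm_le
  have hr' : 1 - r ≠ 0 := (sub_pos.2 hr.2).ne'
  -- `C / (1 - r) * r ^ n` is the tail `∑ k ≥ n, C * r ^ k`, which bounds the decrease of `‖a ·‖`.
  have hmono : Monotone fun n => ‖a n‖ - C / (1 - r) * r ^ n := by
    refine monotone_nat_of_le_succ fun n => ?_
    have hgrow : ‖a n‖ ≤ ‖a (n + 1)‖ + C * r ^ n :=
      calc ‖a n‖ ≤ ‖θ • a n‖ := norm_smul θ (a n) ▸ le_mul_of_one_le_left (norm_nonneg _) hθ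
        _ ≤ ‖a (n + 1)‖ + ‖a (n + 1) - θ • a n‖ := by
          simpa using norm_sub_le (a (n + 1)) (a (n + 1) - θ • a n)
        _ ≤ ‖a (n + 1)‖ + C * r ^ n := by gcongr; exact h n
    have htail : C / (1 - r) * r ^ n - C / (1 - r) * r ^ (n + 1) = C * r ^ n := by
      field_simp
      ring
    linarith
  have hlim : Tendsto (fun n => ‖a n‖ - C / (1 - r) * r ^ n) atTop (𝓝 0) := by
    simpa using ha.norm.sub
      ((tendsto_pow_atTop_nhds_zero_of_lt_one hr.1.le hr.2).const_mul (C / (1 - r)))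
  exact of_norm_le hr fun n => sub_nonpos.1 (hmono.ge_of_tendsto hlim n)

lemma of_sub_smul (ha : Tendsto a atTop (𝓝 0))
    (h : DecaysGeometrically fun n => a (n + 1) - θ • a n) : DecaysGeometrically a :=
  (lt_or_ge ‖θ‖ 1).elim (of_sub_smul_of_norm_lt_one · h) (of_sub_smul_of_one_le_norm · ha h)

lemma of_aeval_shift_multiset_prod (s : Multiset 𝕜) {a : ℕ → 𝕜} (ha : Tendsto a atTop (𝓝 0))
    (h : DecaysGeometrically (aeval (shift 𝕜 ℕ) (s.map fun θ => X - C θ).prod a)) :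
    DecaysGeometrically a := by
  induction s using Multiset.induction_on generalizing a with
  | empty => simpa using h
  | cons θ s ih =>
    have hfactor : aeval (shift 𝕜 ℕ) (X - C θ) a = fun n => a (n + 1) - θ • a n := by
      ext n
      simp
    rw [Multiset.map_cons, Multiset.prod_cons, mul_comm, map_mul, mul_apply_eq_comp,
      hfactor] at h
    refine of_sub_smul ha (ih ?_ h)
    simpa using ((tendsto_add_atTop_iff_nat 1).2 ha).sub (ha.const_smul θ)

lemma of_aeval_shift_of_splits {P : 𝕜[X]} (hP : P ≠ 0) (hsplits : P.Splits) {a : ℕ → 𝕜}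
    (ha : Tendsto a atTop (𝓝 0)) (h : DecaysGeometrically (aeval (shift 𝕜 ℕ) P a)) :
    DecaysGeometrically a := by
  refine of_aeval_shift_multiset_prod P.roots ha ?_
  obtain ⟨r, hr, h⟩ := h
  refine ⟨r, hr, (isBigO_const_smul_left (leadingCoeff_ne_zero.2 hP)).1 ?_⟩
  rw [hsplits.eq_prod_roots, map_mul, mul_apply_eq_comp] at h
  simpa [Pi.smul_def] using h

lemma of_aeval_shift_real {P : ℝ[X]} (hP : P ≠ 0) {a : ℕ → ℝ} (ha : Tendsto a atTop (𝓝 0))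
    (h : DecaysGeometrically (aeval (shift ℝ ℕ) P a)) : DecaysGeometrically a := by
  have hcast (n : ℕ) : aeval (shift ℂ ℕ) (P.map Complex.ofRealHom) (fun n => (a n : ℂ)) n =
      (aeval (shift ℝ ℕ) P a n : ℝ) := by
    simp [aeval_shift_apply]
  have hnorm {b : ℕ → ℝ} {c : ℕ → ℂ} (hbc : ∀ n, c n = b n) :
      DecaysGeometrically c ↔ DecaysGeometrically b := by
    simp only [DecaysGeometrically, ← isBigO_norm_left (f' := c), hbc, Complex.norm_real,
      isBigO_norm_left]
  refine (hnorm fun _ => rfl).1 (of_aeval_shift_of_splits (P := P.map Complex.ofRealHom)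
    ?_ (IsAlgClosed.splits _) ?_ ((hnorm hcast).2 h))
  · exact (Polynomial.map_ne_zero_iff Complex.ofRealHom.injective).2 hP
  · exact Complex.continuous_ofReal.tendsto' 0 0 Complex.ofReal_zero |>.comp ha

end DecaysGeometrically

end GeometricDecay

/-- `w` is a bounded fundamental solution of `P(σ)` that vanishes at infinity along `l`. The
sequences `w⁺` and `w⁻` are the cases `l = atTop` and `l = atBot`. -/
structure IsFundamentalSolution (P : ℝ[X]) (l : Filter ℤ) (w : ℤ → ℝ) : Prop where
  memℓp : Memℓp w ∞
  aeval_shift_eq : aeval (shift ℝ ℤ) P w = Pi.single 0 1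
  tendsto : Tendsto w l (𝓝 0)

namespace IsFundamentalSolution

variable {P : ℝ[X]} {l : Filter ℤ} {w : ℤ → ℝ}

lemma ne_zero (h : IsFundamentalSolution P l w) : P ≠ 0 := by
  rintro rfl
  simpa using congrFun h.aeval_shift_eq 0

lemma aeval_shift_translate (h : IsFundamentalSolution P l w) (n : ℤ) :
    aeval (shift ℝ ℤ) P (fun k => w (k - n)) = Pi.single n 1 := by
  ext k
  calc aeval (shift ℝ ℤ) P (fun k => w (k - n)) k = aeval (shift ℝ ℤ) P w (k - n) := by
        simp only [aeval_shift_apply, sub_add_eq_add_sub]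
    _ = Pi.single (M := fun _ => ℝ) n 1 k := by
        simp [h.aeval_shift_eq, Pi.single_apply, sub_eq_zero]

lemma reverse (h : IsFundamentalSolution P atBot w) :
    IsFundamentalSolution P.reverse atTop fun k => w (P.natDegree - k) where
  memℓp := memℓp_infty_comp h.memℓp (P.natDegree - ·)
  aeval_shift_eq := by
    ext k
    calc aeval (shift ℝ ℤ) P.reverse (fun k => w (P.natDegree - k)) k
        = aeval (shift ℝ ℤ) P w (-k) := by
          rw [aeval_shift_apply_of_natDegree_lt (Nat.lt_add_one_of_le P.reverse_natDegree_le),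
            aeval_shift_apply, ← Finset.sum_range_reflect]
          refine Finset.sum_congr rfl fun j hj => ?_
          have hj : j ≤ P.natDegree := Finset.mem_range_succ_iff.1 hj
          rw [Nat.add_sub_cancel, coeff_reverse, revAt_le (Nat.sub_le _ _), Nat.sub_sub_self hj,
            Nat.cast_sub hj]
          congr 2
          ring
      _ = Pi.single (M := fun _ => ℝ) 0 1 k := by simp [h.aeval_shift_eq, Pi.single_apply]
  tendsto := h.tendsto.comp (tendsto_atBot_add_const_left _ _ tendsto_neg_atTop_atBot)

lemma summable_norm_atTop (h : IsFundamentalSolution P atTop w) (k : ℤ) :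
    Summable fun n : ℕ => ‖w (k + n)‖ := by
  refine (DecaysGeometrically.of_aeval_shift_real h.ne_zero
    (h.tendsto.comp (tendsto_atTop_add_const_left _ k tendsto_natCast_atTop_atTop))
    (.of_eventually_eq_zero ?_)).summable_norm
  filter_upwards [eventually_gt_atTop (-k).toNat] with n hn
  calc aeval (shift ℝ ℕ) P (w ∘ fun n : ℕ => k + n) n = aeval (shift ℝ ℤ) P w (k + n) := by
        simp [aeval_shift_apply, add_assoc]
    _ = 0 := by rw [h.aeval_shift_eq, Pi.single_eq_of_ne (by lia)]

lemma summable_norm_atBot (h : IsFundamentalSolution P atBot w) (k : ℤ) :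
    Summable fun n : ℕ => ‖w (k - n)‖ := by
  refine (h.reverse.summable_norm_atTop (P.natDegree - k)).congr fun n => ?_
  congr 2
  ring

end IsFundamentalSolution

/-- The `n`-th column of the kernel of `ξ̄*`: the translate to `n` of `w⁻` if `n` is nonnegative,
and of `w⁺` otherwise. -/
def gluedKernel (wp wm : ℤ → ℝ) (n : ℤ) : ℤ → ℝ :=
  fun k => if 0 ≤ n then wm (k - n) else wp (k - n)

/-- The extension of `ξ̄*` from bounded integer sequences to bounded real sequences `x`. -/
def gluedConv (wp wm x : ℤ → ℝ) : ℤ → ℝ :=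
  fun k => ∑' n : ℤ, x n * gluedKernel wp wm n k

section GluedConvolution

variable {P : ℝ[X]} {wp wm x y : ℤ → ℝ}

lemma aeval_shift_gluedKernel (hwp : IsFundamentalSolution P atTop wp)
    (hwm : IsFundamentalSolution P atBot wm) (n : ℤ) :
    aeval (shift ℝ ℤ) P (gluedKernel wp wm n) = Pi.single n 1 := by
  unfold gluedKernel
  split_ifs
  · exact hwm.aeval_shift_translate n
  · exact hwp.aeval_shift_translate n

lemma gluedKernel_sub_one_sub_shift (wp wm : ℤ → ℝ) (n : ℤ) :
    gluedKernel wp wm (n - 1) - shift ℝ ℤ (gluedKernel wp wm n) =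
      if n = 0 then shift ℝ ℤ (wp - wm) else 0 := by
  ext k
  rcases lt_trichotomy n 0 with hn | rfl | hn
  · simp [gluedKernel, hn.ne, hn.not_ge, show ¬1 ≤ n by lia, add_sub_right_comm, sub_sub_eq_add_sub]
  · simp [gluedKernel]
  · simp [gluedKernel, hn.ne', hn.le, show 1 ≤ n by lia, add_sub_right_comm, sub_sub_eq_add_sub]

lemma summable_norm_gluedKernel (hwp : IsFundamentalSolution P atTop wp)
    (hwm : IsFundamentalSolution P atBot wm) (k : ℤ) :
    Summable fun n => ‖gluedKernel wp wm n k‖ := by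
  refine .of_nat_of_neg_add_one ?_ ?_
  · simpa [gluedKernel] using hwm.summable_norm_atBot k
  · refine (hwp.summable_norm_atTop (k + 1)).congr fun n => ?_
    rw [gluedKernel, if_neg (by lia)]
    congr 2
    ring

lemma summable_norm_mul_gluedKernel (hwp : IsFundamentalSolution P atTop wp)
    (hwm : IsFundamentalSolution P atBot wm) (hx : Memℓp x ∞) (k : ℤ) :
    Summable fun n => ‖x n * gluedKernel wp wm n k‖ := by
  obtain ⟨B, hB⟩ := hx.bddAbove
  refine .of_nonneg_of_le (fun _ => norm_nonneg _) (fun n => ?_)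
    ((summable_norm_gluedKernel hwp hwm k).mul_left B)
  rw [norm_mul]
  gcongr
  exact hB ⟨n, rfl⟩

lemma hasSum_gluedConv (hwp : IsFundamentalSolution P atTop wp)
    (hwm : IsFundamentalSolution P atBot wm) (hx : Memℓp x ∞) :
    HasSum (fun n => x n • gluedKernel wp wm n) (gluedConv wp wm x) :=
  Pi.hasSum.2 fun k => (summable_norm_mul_gluedKernel hwp hwm hx k).of_norm.hasSum

lemma gluedConv_add (hwp : IsFundamentalSolution P atTop wp)
    (hwm : IsFundamentalSolution P atBot wm) (hx : Memℓp x ∞) (hy : Memℓp y ∞) :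
    gluedConv wp wm (x + y) = gluedConv wp wm x + gluedConv wp wm y := by
  refine (hasSum_gluedConv hwp hwm (hx.add hy)).unique ?_
  simpa [add_smul] using (hasSum_gluedConv hwp hwm hx).add (hasSum_gluedConv hwp hwm hy)

lemma gluedConv_smul (wp wm : ℤ → ℝ) (c : ℝ) (x : ℤ → ℝ) :
    gluedConv wp wm (c • x) = c • gluedConv wp wm x := by
  ext k
  simp [gluedConv, mul_assoc, tsum_mul_left]

lemma aeval_shift_gluedConv (hwp : IsFundamentalSolution P atTop wp)
    (hwm : IsFundamentalSolution P atBot wm) (hx : Memℓp x ∞) :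
    aeval (shift ℝ ℤ) P (gluedConv wp wm x) = x := by
  have hsum := (aeval (shift ℝ ℤ) P).hasSum (hasSum_gluedConv hwp hwm hx)
  simp only [map_smul, aeval_shift_gluedKernel hwp hwm] at hsum
  refine hsum.unique (Pi.hasSum.2 fun k => ?_)
  simpa using hasSum_single (f := fun n => (x n • Pi.single (M := fun _ => ℝ) n 1) k) k
    fun n hn => by simp [hn.symm]

lemma gluedConv_shift_sub_shift_gluedConv (hwp : IsFundamentalSolution P atTop wp)
    (hwm : IsFundamentalSolution P atBot wm) (hx : Memℓp x ∞) :
    gluedConv wp wm (shift ℝ ℤ x) - shift ℝ ℤ (gluedConv wp wm x) =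
      x 0 • shift ℝ ℤ (wp - wm) := by
  have hshift : HasSum (fun n => x n • gluedKernel wp wm (n - 1))
      (gluedConv wp wm (shift ℝ ℤ x)) := by
    rw [← (Equiv.addRight (1 : ℤ)).hasSum_iff]
    simpa [Function.comp_def] using hasSum_gluedConv hwp hwm (memℓp_infty_shift hx)
  have hdiff := hshift.sub ((shift ℝ ℤ).hasSum (hasSum_gluedConv hwp hwm hx))
  simp only [map_smul, ← smul_sub, gluedKernel_sub_one_sub_shift] at hdiff
  refine hdiff.unique ?_
  simpa using hasSum_single (f := fun n => x n • if n = 0 then shift ℝ ℤ (wp - wm) else 0) 0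
    fun n hn => by simp [hn]

lemma memℓp_infty_gluedConv_aeval_shift_sub (hwp : IsFundamentalSolution P atTop wp)
    (hwm : IsFundamentalSolution P atBot wm) (Q : ℝ[X]) (hx : Memℓp x ∞) :
    Memℓp (gluedConv wp wm (aeval (shift ℝ ℤ) Q x) -
      aeval (shift ℝ ℤ) Q (gluedConv wp wm x)) ∞ := by
  induction Q using Polynomial.induction_on generalizing x with
  | C c => simpa [gluedConv_smul] using zero_memℓp
  | add Q R hQ hR =>
    simpa [gluedConv_add hwp hwm (memℓp_infty_aeval_shift Q hx) (memℓp_infty_aeval_shift R hx),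
      add_sub_add_comm] using (hQ hx).add (hR hx)
  | monomial n c ih =>
    have hcomm : Memℓp (gluedConv wp wm (shift ℝ ℤ x) - shift ℝ ℤ (gluedConv wp wm x)) ∞ := by
      rw [gluedConv_shift_sub_shift_gluedConv hwp hwm hx]
      exact (memℓp_infty_shift (hwp.memℓp.sub hwm.memℓp)).const_smul (x 0)
    have hadd := (ih (memℓp_infty_shift hx)).add (memℓp_infty_aeval_shift (C c * X ^ n) hcomm)
    rw [map_sub, sub_add_sub_cancel] at hadd
    rwa [pow_succ, ← mul_assoc, aeval_shift_mul_X, aeval_shift_mul_X]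

theorem xiStar_section_general (hwp : IsFundamentalSolution P atTop wp)
    (hwm : IsFundamentalSolution P atBot wm) :
    (∀ x, Memℓp x ∞ → ∀ k, Summable fun n => ‖x n * gluedKernel wp wm n k‖) ∧
    (∀ x, Memℓp x ∞ → aeval (shift ℝ ℤ) P (gluedConv wp wm x) = x) ∧
    (∀ w, Memℓp w ∞ →
      Memℓp (gluedConv wp wm (aeval (shift ℝ ℤ) P w) - w) ∞ ∧
      aeval (shift ℝ ℤ) P (gluedConv wp wm (aeval (shift ℝ ℤ) P w) - w) = 0) := by
  refine ⟨fun x hx => summable_norm_mul_gluedKernel hwp hwm hx,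
    fun x hx => aeval_shift_gluedConv hwp hwm hx, fun w hw => ⟨?_, ?_⟩⟩
  · simpa [aeval_shift_gluedConv hwp hwm hw] using
      memℓp_infty_gluedConv_aeval_shift_sub hwp hwm P hw
  · rw [map_sub, aeval_shift_gluedConv hwp hwm (memℓp_infty_aeval_shift P hw), sub_self]

end GluedConvolution

section IntegerPolynomial

variable {f : ℤ[X]} {w : ℤ → ℝ}

lemma bdd_iff_memℓp_infty : Bdd w ↔ Memℓp w ∞ := by
  simp [Bdd, memℓp_infty_iff, bddAbove_def]

lemma BddZ.memℓp_infty_intCast {v : ℤ → ℤ} (hv : BddZ v) : Memℓp (fun n => (v n : ℝ)) ∞ := by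
  obtain ⟨B, hB⟩ := hv
  exact bdd_iff_memℓp_infty.1 ⟨B, fun n => by beta_reduce; exact_mod_cast hB n⟩

lemma fsR_eq_aeval_shift (f : ℤ[X]) (w : ℤ → ℝ) :
    fsR f w = aeval (shift ℝ ℤ) (f.map (Int.castRingHom ℝ)) w := by
  ext n
  simp [fsR, aeval_shift_apply, natDegree_map_eq_of_injective (Int.castRingHom ℝ).injective_int]

lemma xiStar_eq_gluedConv (wp wm : ℤ → ℝ) (v : ℤ → ℤ) :
    xiStar wp wm v = gluedConv wp wm (fun n => (v n : ℝ)) := rfl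

lemma vDelta_eq_single : vDelta = Pi.single 0 1 := by
  ext n
  simp [vDelta, Pi.single_apply]

lemma IsWplus.isFundamentalSolution (h : IsWplus f w) :
    IsFundamentalSolution (f.map (Int.castRingHom ℝ)) atTop w :=
  ⟨bdd_iff_memℓp_infty.1 h.1, by rw [← fsR_eq_aeval_shift, h.2.1, vDelta_eq_single], h.2.2⟩

lemma IsWminus.isFundamentalSolution (h : IsWminus f w) :
    IsFundamentalSolution (f.map (Int.castRingHom ℝ)) atBot w :=
  ⟨bdd_iff_memℓp_infty.1 h.1, by rw [← fsR_eq_aeval_shift, h.2.1, vDelta_eq_single], h.2.2⟩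

end IntegerPolynomial

/-- `f(σ̄)(ξ̄*(v)) = v` for every `v ∈ ℓ^∞(ℤ,ℤ)`, and
`ξ̄*(f(σ̄)(w)) − w ∈ W_f^∘ = ker f(σ̄)` for every `w ∈ W_f`. -/
theorem xiStar_section (f : Polynomial ℤ) (hm : 1 ≤ f.natDegree)
    (hlead : 0 < f.leadingCoeff) (h0 : f.coeff 0 ≠ 0)
    (hirr : Irreducible (Polynomial.toLaurent f)) (hnc : Noncyclotomic f)
    (wp wm : ℤ → ℝ) (hwp : IsWplus f wp) (hwm : IsWminus f wm) :
    -- the defining series converges absolutely in each coordinate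
    (∀ v : ℤ → ℤ, BddZ v → ∀ k : ℤ,
      Summable fun n : ℤ => |(v n : ℝ) * (if 0 ≤ n then wm (k - n) else wp (k - n))|) ∧
    -- (1) `f(σ̄) ∘ ξ̄* = Id` on `ℓ^∞(ℤ,ℤ)`
    (∀ v : ℤ → ℤ, BddZ v → ∀ n : ℤ, fsR f (xiStar wp wm v) n = (v n : ℝ)) ∧
    -- (2) `ξ̄*(f(σ̄)(w)) − w ∈ W_f^∘` for every `w ∈ W_f`
    (∀ w : ℤ → ℝ, InWf f w → ∀ v : ℤ → ℤ, (∀ n, (v n : ℝ) = fsR f w n) →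
      Bdd (fun k => xiStar wp wm v k - w k) ∧
      ∀ n, fsR f (fun k => xiStar wp wm v k - w k) n = 0) := by
  obtain ⟨hsummable, hinverse, hsub⟩ :=
    xiStar_section_general hwp.isFundamentalSolution hwm.isFundamentalSolution
  simp only [bdd_iff_memℓp_infty, fsR_eq_aeval_shift, xiStar_eq_gluedConv]
  refine ⟨fun v hv => hsummable _ hv.memℓp_infty_intCast,
    fun v hv => congrFun (hinverse _ hv.memℓp_infty_intCast), fun w hw v hv => ?_⟩
  obtain ⟨hbdd, hker⟩ := hsub w (bdd_iff_memℓp_infty.1 hw.1)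
  rw [← funext hv] at hbdd hker
  exact ⟨hbdd, congrFun hker⟩

end
end

section
/- Suppose f is irreducible in ℤ[u^{±1}] and noncyclotomic. Then there exists r > 0 such that ξ*(Z̄_f) + ρ(B̄_r(W_f^∘)) = X_f, where B̄_r(W_f^∘) = {w ∈ W_f^∘ : ‖w‖_∞ ≤ r}; in particular ξ*(Z̄_f) + X_f^∘ = X_f. -/
open Filter Topology Polynomial

noncomputable section

/-- `σ̄^k` on real sequences. -/
def shiftIterR (k : ℤ) (w : ℤ → ℝ) : ℤ → ℝ := fun n => w (n + k)

/-- `Y_f = W_f ∩ [0,1)^ℤ`. -/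
def YfSet (f : Polynomial ℤ) : Set (ℤ → ℝ) :=
  {w | InWf f w ∧ ∀ n, w n ∈ Set.Ico (0:ℝ) 1}

/-- `Z̄_f = f(σ̄)(Ȳ_f)`, where `Ȳ_f` is the closure of `Y_f` in the topology of
coordinatewise convergence. -/
def ZbarR (f : Polynomial ℤ) : Set (ℤ → ℝ) := fsR f '' closure (YfSet f)

/-- `ξ*(v) = ρ(ξ̄*(v)) ∈ 𝕋^ℤ`. -/
def xiStarT (wp wm : ℤ → ℝ) (v : ℤ → ℤ) : ℤ → Torus :=
  fun k => (xiStar wp wm v k : Torus)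

/-!
`w⁺` and `w⁻` are null sequences satisfying a linear recurrence on a half-line, hence decay
exponentially there, so the series `ξ̄*(v)` converges for every bounded `v` and `f(σ̄) ∘ ξ̄* = id`.
In the other order, `ξ̄*` commutes with `σ̄` up to the rank-one error `y ↦ y₀ σ̄(w⁻ - w⁺)`, so
`y - ξ̄*(f(σ̄) y)` is a finite combination of shifts of `w⁻ - w⁺`, with coefficients depending only
on `f` and `y₀, …, y_{m-1}`. Applied to the lift `y ∈ [0, 1)^ℤ` of a point of `X_f`, this writes
the point as `ξ*(f(σ̄) y)` plus the reduction of an element of `W_f^∘` of uniformly bounded norm.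
-/

section OneSidedShift

/-- The left shift on one-sided sequences. A linear recurrence with characteristic polynomial `p`
is the equation `aeval (seqShift R M) p a = 0`. -/
def seqShift (R M : Type*) [Semiring R] [AddCommMonoid M] [Module R M] : Module.End R (ℕ → M) :=
  LinearMap.funLeft R M (· + 1)

variable {R M : Type*} [CommSemiring R] [AddCommMonoid M] [Module R M]

lemma seqShift_pow_apply (k : ℕ) (a : ℕ → M) (n : ℕ) : (seqShift R M ^ k) a n = a (n + k) := by
  induction k generalizing n with
  | zero => rfl
  | succ k ih =>
    rw [pow_succ', Module.End.mul_apply, seqShift, LinearMap.funLeft_apply, ← seqShift, ih,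
      add_right_comm, add_assoc]

lemma aeval_seqShift_apply {p : R[X]} {N : ℕ} (hN : p.natDegree < N) (a : ℕ → M) (n : ℕ) :
    aeval (seqShift R M) p a n = ∑ k ∈ Finset.range N, p.coeff k • a (n + k) := by
  simp only [aeval_eq_sum_range' hN, LinearMap.sum_apply, LinearMap.smul_apply, Finset.sum_apply,
    Pi.smul_apply, seqShift_pow_apply]

end OneSidedShift

section RecurrenceDecay

lemma le_max_mul_pow_of_le_mul_add {u : ℕ → ℝ} {q s K : ℝ} (hq : 0 ≤ q) (hqs : q < s)
    (hu : ∀ n, u (n + 1) ≤ q * u n + K * s ^ n) (n : ℕ) :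
    u n ≤ max (u 0) (K / (s - q)) * s ^ n := by
  set D := max (u 0) (K / (s - q))
  have hKD : K ≤ D * (s - q) := (div_le_iff₀ (sub_pos.2 hqs)).1 (le_max_right _ _)
  have hs : 0 ≤ s := hq.trans hqs.le
  induction n with
  | zero => simp [D]
  | succ n ih =>
    calc u (n + 1) ≤ q * u n + K * s ^ n := hu n
      _ ≤ q * (D * s ^ n) + D * (s - q) * s ^ n := by gcongr
      _ = D * s ^ (n + 1) := by ring

lemma le_div_mul_pow_of_le_add {u : ℕ → ℝ} {r K : ℝ} (hr : 0 ≤ r) (hr1 : r < 1)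
    (hu0 : Tendsto u atTop (𝓝 0)) (hu : ∀ n, u n ≤ u (n + 1) + K * r ^ n) (n : ℕ) :
    u n ≤ K / (1 - r) * r ^ n := by
  have hmono : Monotone fun n ↦ u n - K / (1 - r) * r ^ n := monotone_nat_of_le_succ fun n ↦ by
    have hK : K / (1 - r) * r ^ n - K / (1 - r) * r ^ (n + 1) = K * r ^ n := by
      have : 1 - r ≠ 0 := (sub_pos.2 hr1).ne'
      field_simp
      ring
    linarith [hu n]
  have hlim : Tendsto (fun n ↦ u n - K / (1 - r) * r ^ n) atTop (𝓝 0) := by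
    simpa using hu0.sub ((tendsto_pow_atTop_nhds_zero_of_lt_one hr hr1).const_mul (K / (1 - r)))
  exact sub_nonpos.1 (hmono.ge_of_tendsto hlim n)

variable {𝕜 E : Type*} [NormedField 𝕜] [SeminormedAddCommGroup E] [NormedSpace 𝕜 E]

lemma exists_isBigO_pow_of_first_order (θ : 𝕜) {a : ℕ → E} (ha : Tendsto a atTop (𝓝 0))
    {r : ℝ} (hr : r ∈ Set.Ioo 0 1) (hb : (fun n ↦ a (n + 1) - θ • a n) =O[atTop] (r ^ ·)) :
    ∃ s ∈ Set.Ioo (0 : ℝ) 1, a =O[atTop] (s ^ ·) := by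
  obtain ⟨s, hrs, hs1, hθs⟩ : ∃ s, r ≤ s ∧ s < 1 ∧ (‖θ‖ < s ∨ 1 ≤ ‖θ‖) := by
    rcases lt_or_ge ‖θ‖ 1 with hθ | hθ
    · obtain ⟨s, hs, hs1⟩ := exists_between (max_lt hr.2 hθ)
      exact ⟨s, (le_max_left _ _).trans hs.le, hs1, .inl ((le_max_right _ _).trans_lt hs)⟩
    · exact ⟨r, le_rfl, hr.2, .inr hθ⟩
  have hs0 : 0 < s := hr.1.trans_le hrs
  obtain ⟨K, hK⟩ : ∃ K, ∀ n, ‖a (n + 1) - θ • a n‖ ≤ K * s ^ n := by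
    obtain ⟨K, hK0, hK⟩ := Asymptotics.bound_of_isBigO_nat_atTop hb
    refine ⟨K, fun n ↦ (hK (pow_pos hr.1 n).ne').trans ?_⟩
    rw [norm_pow, Real.norm_of_nonneg hr.1.le]
    have := hr.1.le
    gcongr
  obtain ⟨D, hD⟩ : ∃ D, ∀ n, ‖a n‖ ≤ D * s ^ n := by
    rcases hθs with hθ | hθ
    · refine ⟨_, le_max_mul_pow_of_le_mul_add (u := (‖a ·‖)) (K := K) (norm_nonneg θ) hθ
        fun n ↦ ?_⟩
      calc ‖a (n + 1)‖ = ‖θ • a n + (a (n + 1) - θ • a n)‖ := by rw [add_sub_cancel]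
        _ ≤ ‖θ‖ * ‖a n‖ + K * s ^ n := norm_add_le_of_le (norm_smul_le θ _) (hK n)
    · have hanorm : Tendsto (‖a ·‖) atTop (𝓝 0) := by simpa using ha.norm
      refine ⟨_, le_div_mul_pow_of_le_add (K := K) hs0.le hs1 hanorm fun n ↦ ?_⟩
      calc ‖a n‖ ≤ ‖θ‖ * ‖a n‖ := le_mul_of_one_le_left (norm_nonneg _) hθ
        _ = ‖a (n + 1) - (a (n + 1) - θ • a n)‖ := by rw [sub_sub_cancel, norm_smul]
        _ ≤ ‖a (n + 1)‖ + K * s ^ n := norm_sub_le_of_le le_rfl (hK n)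
  refine ⟨s, ⟨hs0, hs1⟩, .of_bound D (.of_forall fun n ↦ ?_)⟩
  rw [norm_pow, Real.norm_of_nonneg hs0.le]
  exact hD n

lemma exists_isBigO_pow_of_aeval_prod_eq_zero (t : Multiset 𝕜) {a : ℕ → E}
    (ha : Tendsto a atTop (𝓝 0))
    (h : aeval (seqShift 𝕜 E) (t.map fun θ ↦ X - C θ).prod a = 0) :
    ∃ s ∈ Set.Ioo (0 : ℝ) 1, a =O[atTop] (s ^ ·) := by
  induction t using Multiset.induction generalizing a with
  | empty =>
    obtain rfl : a = 0 := by simpa using h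
    exact ⟨1 / 2, by norm_num, Asymptotics.isBigO_zero _ _⟩
  | cons θ t ih =>
    let b : ℕ → E := fun n ↦ a (n + 1) - θ • a n
    have hb : aeval (seqShift 𝕜 E) (X - C θ) a = b := by
      ext n
      simp [b, seqShift, LinearMap.funLeft_apply]
    rw [Multiset.map_cons, Multiset.prod_cons, mul_comm, map_mul, Module.End.mul_apply, hb] at h
    have hblim : Tendsto b atTop (𝓝 0) := by
      simpa using (ha.comp (tendsto_add_atTop_nat 1)).sub (ha.const_smul θ)
    obtain ⟨r, hr, hbr⟩ := ih hblim h
    exact exists_isBigO_pow_of_first_order θ ha hr hbr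

theorem exists_isBigO_pow_of_aeval_eq_zero {p : 𝕜[X]} (hp : p.Splits) (hp0 : p ≠ 0) {a : ℕ → E}
    (ha : Tendsto a atTop (𝓝 0)) (h : aeval (seqShift 𝕜 E) p a = 0) :
    ∃ s ∈ Set.Ioo (0 : ℝ) 1, a =O[atTop] (s ^ ·) := by
  refine exists_isBigO_pow_of_aeval_prod_eq_zero p.roots ha ?_
  rw [hp.eq_prod_roots, map_mul, Module.End.mul_apply, aeval_C, Module.algebraMap_end_apply] at h
  exact (smul_eq_zero_iff_right (leadingCoeff_ne_zero.2 hp0)).1 h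

theorem summable_of_eventually_recurrence {p : ℝ[X]} (hp : p ≠ 0) {N : ℕ} (hN : p.natDegree < N)
    {a : ℕ → ℝ} (ha : Tendsto a atTop (𝓝 0))
    (hrec : ∀ᶠ n in atTop, ∑ k ∈ Finset.range N, p.coeff k * a (n + k) = 0) : Summable a := by
  obtain ⟨n₀, hn₀⟩ := eventually_atTop.1 hrec
  let b : ℕ → ℂ := fun n ↦ (a (n + n₀) : ℂ)
  have hb : aeval (seqShift ℂ ℂ) (p.map (algebraMap ℝ ℂ)) b = 0 := by
    ext n
    rw [aeval_seqShift_apply (by rwa [natDegree_map]), Pi.zero_apply, ← Complex.ofReal_zero,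
      ← hn₀ (n + n₀) (Nat.le_add_left _ _)]
    push_cast
    exact Finset.sum_congr rfl fun k _ ↦ by simp [b, add_right_comm]
  have hblim : Tendsto b atTop (𝓝 0) := by
    simpa [b, Function.comp_def] using
      (Complex.continuous_ofReal.tendsto 0).comp (ha.comp (tendsto_add_atTop_nat n₀))
  obtain ⟨s, hs, hbs⟩ := exists_isBigO_pow_of_aeval_eq_zero
    (IsAlgClosed.splits _) ((Polynomial.map_ne_zero_iff (algebraMap ℝ ℂ).injective).2 hp) hblim hb
  refine (summable_nat_add_iff n₀).1 (Complex.summable_ofReal.1 ?_)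
  exact summable_of_isBigO_nat (summable_geometric_of_lt_one hs.1.le hs.2) hbs

end RecurrenceDecay

section ShiftPolynomial

variable {f : ℤ[X]}

lemma fsR_add (f : ℤ[X]) (w w' : ℤ → ℝ) : fsR f (w + w') = fsR f w + fsR f w' := by
  ext n
  simp only [fsR, Pi.add_apply, mul_add, Finset.sum_add_distrib]

lemma fsR_sub (f : ℤ[X]) (w w' : ℤ → ℝ) : fsR f (w - w') = fsR f w - fsR f w' := by
  ext n
  simp only [fsR, Pi.sub_apply, mul_sub, Finset.sum_sub_distrib]

lemma Bdd.shiftIterR {y : ℤ → ℝ} (hy : Bdd y) (k : ℤ) : Bdd (shiftIterR k y) :=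
  hy.imp fun _ hB n ↦ hB (n + k)

lemma Bdd.fsR {y : ℤ → ℝ} (hy : Bdd y) : Bdd (fsR f y) := by
  obtain ⟨B, hB⟩ := hy
  refine ⟨∑ k ∈ Finset.range (f.natDegree + 1), |(f.coeff k : ℝ)| * B, fun n ↦ ?_⟩
  refine (Finset.abs_sum_le_sum_abs _ _).trans (Finset.sum_le_sum fun k _ ↦ ?_)
  rw [abs_mul]
  gcongr
  exact hB _

lemma fsT_coe (f : ℤ[X]) (w : ℤ → ℝ) (n : ℤ) :
    fsT f (fun k ↦ (w k : Torus)) n = (fsR f w n : Torus) := by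
  simp only [fsT, fsR, ← zsmul_eq_mul, ← AddCircle.coe_zsmul]
  exact (map_sum (QuotientAddGroup.mk' (AddSubgroup.zmultiples (1 : ℝ))) _ _).symm

lemma coe_mem_Xf_iff {w : ℤ → ℝ} :
    (fun k ↦ (w k : Torus)) ∈ Xf f ↔ ∀ n, ∃ z : ℤ, fsR f w n = z := by
  simp only [Xf, Set.mem_ofPred_eq, fsT_coe, AddCircle.coe_eq_zero_iff, zsmul_one,
    @eq_comm _ (fsR f w _)]

lemma exists_mem_Ico_lift (x : ℤ → Torus) :
    ∃ y : ℤ → ℝ, (∀ n, y n ∈ Set.Ico (0 : ℝ) 1) ∧ (fun n ↦ (y n : Torus)) = x :=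
  ⟨fun n ↦ AddCircle.equivIco 1 0 (x n),
    fun n ↦ by simpa using (AddCircle.equivIco (1 : ℝ) 0 (x n)).2,
    funext fun _ ↦ AddCircle.coe_equivIco⟩

lemma bdd_of_mem_closure_YfSet {y : ℤ → ℝ} (hy : y ∈ closure (YfSet f)) : Bdd y := by
  have hsub : YfSet f ⊆ Set.univ.pi fun _ ↦ Set.Icc (0 : ℝ) 1 :=
    fun w hw n _ ↦ Set.Ico_subset_Icc_self (hw.2 n)
  have hmem := closure_minimal hsub (isClosed_set_pi fun _ _ ↦ isClosed_Icc) hy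
  refine ⟨1, fun n ↦ ?_⟩
  rw [abs_of_nonneg (hmem n trivial).1]
  exact (hmem n trivial).2

lemma bdd_of_mem_ZbarR {v : ℤ → ℝ} (hv : v ∈ ZbarR f) : Bdd v := by
  obtain ⟨y, hy, rfl⟩ := hv
  exact (bdd_of_mem_closure_YfSet hy).fsR

end ShiftPolynomial

section FundamentalSolutions

variable {f : ℤ[X]} {w wp wm : ℤ → ℝ}

lemma ne_zero_of_fsR_eq_vDelta (hw : fsR f w = vDelta) : f ≠ 0 := by
  rintro rfl
  simpa [fsR, vDelta] using congrFun hw 0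

lemma IsWplus.summable (hwp : IsWplus f wp) (k : ℤ) : Summable fun n : ℕ ↦ wp (k + n) := by
  obtain ⟨-, hdelta, hlim⟩ := hwp
  refine summable_of_eventually_recurrence (p := f.map (Int.castRingHom ℝ))
    ((Polynomial.map_ne_zero_iff Int.cast_injective).2 (ne_zero_of_fsR_eq_vDelta hdelta))
    (natDegree_map_le.trans_lt f.natDegree.lt_succ_self)
    (hlim.comp (tendsto_atTop_add_const_left _ k tendsto_natCast_atTop_atTop)) ?_
  filter_upwards [eventually_gt_atTop k.natAbs] with n hn
  have h := congrFun hdelta (k + n)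
  rw [vDelta, if_neg (by omega)] at h
  simpa [fsR, add_assoc] using h

lemma IsWminus.summable (hwm : IsWminus f wm) (k : ℤ) : Summable fun n : ℕ ↦ wm (k - n) := by
  obtain ⟨-, hdelta, hlim⟩ := hwm
  have hlim' : Tendsto (fun n : ℕ ↦ k - n) atTop atBot := by
    simpa only [Function.comp_def, sub_eq_add_neg] using tendsto_atBot_add_const_left _ k
      (tendsto_neg_atTop_atBot.comp tendsto_natCast_atTop_atTop)
  refine summable_of_eventually_recurrence (p := f.reverse.map (Int.castRingHom ℝ))
    ((Polynomial.map_ne_zero_iff Int.cast_injective).2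
      (reverse_eq_zero.not.2 (ne_zero_of_fsR_eq_vDelta hdelta)))
    (natDegree_map_le.trans_lt (Nat.lt_succ_of_le (reverse_natDegree_le f)))
    (hlim.comp hlim') ?_
  filter_upwards [eventually_gt_atTop k.natAbs] with n hn
  have h := congrFun hdelta (k - n - f.natDegree)
  rw [vDelta, if_neg (by omega), fsR, ← Finset.sum_range_reflect] at h
  rw [← h]
  refine Finset.sum_congr rfl fun j hj ↦ ?_
  have hj' : j ≤ f.natDegree := Finset.mem_range_succ_iff.1 hj
  rw [coeff_map, coeff_reverse, revAt_le hj', Nat.add_sub_cancel]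
  push_cast [hj']
  congr 2
  ring

/-- The kernel of `ξ̄*`: `w⁻` when the source index `n` is nonnegative and `w⁺` otherwise. -/
def xiKernel (wp wm : ℤ → ℝ) (n i : ℤ) : ℝ := if 0 ≤ n then wm i else wp i

/-- `ξ̄*` on real sequences; `xiStar` is its restriction to integer sequences. -/
def xiStarReal (wp wm v : ℤ → ℝ) : ℤ → ℝ := fun k ↦ ∑' n : ℤ, v n * xiKernel wp wm n (k - n)

lemma xiStar_eq_xiStarReal (wp wm : ℤ → ℝ) (v : ℤ → ℤ) :
    xiStar wp wm v = xiStarReal wp wm fun n ↦ v n := rfl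

lemma summable_mul_xiKernel (hp : ∀ k : ℤ, Summable fun n : ℕ ↦ wp (k + n))
    (hm : ∀ k : ℤ, Summable fun n : ℕ ↦ wm (k - n)) {v : ℤ → ℝ} (hv : Bdd v) (k : ℤ) :
    Summable fun n : ℤ ↦ v n * xiKernel wp wm n (k - n) := by
  obtain ⟨B, hB⟩ := hv
  refine .of_nat_of_neg_add_one ?_ ?_
  · refine .of_norm_bounded ((hm k).abs.mul_left B) fun n ↦ ?_
    rw [xiKernel, if_pos (by omega), norm_mul]
    exact mul_le_mul_of_nonneg_right (hB _) (abs_nonneg _)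
  · refine .of_norm_bounded ((hp (k + 1)).abs.mul_left B) fun n ↦ ?_
    rw [xiKernel, if_neg (by omega), norm_mul, show k - -((n : ℤ) + 1) = k + 1 + n by ring]
    exact mul_le_mul_of_nonneg_right (hB _) (abs_nonneg _)

lemma fsR_xiKernel (hp : fsR f wp = vDelta) (hm : fsR f wm = vDelta) (n : ℤ) :
    fsR f (xiKernel wp wm n) = vDelta := by
  by_cases hn : 0 ≤ n
  · rwa [show xiKernel wp wm n = wm from funext fun _ ↦ if_pos hn]
  · rwa [show xiKernel wp wm n = wp from funext fun _ ↦ if_neg hn]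

lemma tsum_mul_vDelta (v : ℤ → ℝ) (k : ℤ) : ∑' n : ℤ, v n * vDelta (k - n) = v k := by
  rw [tsum_eq_single k fun n hn ↦ by rw [vDelta, if_neg (by omega), mul_zero]]
  simp [vDelta]

theorem fsR_xiStarReal (hwp : IsWplus f wp) (hwm : IsWminus f wm) {v : ℤ → ℝ} (hv : Bdd v) :
    fsR f (xiStarReal wp wm v) = v := by
  ext k
  have hs := summable_mul_xiKernel hwp.summable hwm.summable hv
  calc fsR f (xiStarReal wp wm v) k
      = ∑' n : ℤ, ∑ j ∈ Finset.range (f.natDegree + 1),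
          (f.coeff j : ℝ) * (v n * xiKernel wp wm n (k + j - n)) := by
        rw [Summable.tsum_finsetSum fun (j : ℕ) _ ↦ (hs (k + j)).mul_left (f.coeff j : ℝ)]
        simp only [fsR, xiStarReal, tsum_mul_left]
    _ = ∑' n : ℤ, v n * fsR f (xiKernel wp wm n) (k - n) := by
        simp only [fsR, Finset.mul_sum, add_sub_right_comm, mul_left_comm]
    _ = v k := by simp only [fsR_xiKernel hwp.2.1 hwm.2.1, tsum_mul_vDelta]

lemma xiStarReal_fsR (hp : ∀ k : ℤ, Summable fun n : ℕ ↦ wp (k + n))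
    (hm : ∀ k : ℤ, Summable fun n : ℕ ↦ wm (k - n)) {y : ℤ → ℝ} (hy : Bdd y) (k : ℤ) :
    xiStarReal wp wm (fsR f y) k = ∑ j ∈ Finset.range (f.natDegree + 1),
      (f.coeff j : ℝ) * xiStarReal wp wm (shiftIterR j y) k := by
  simp only [xiStarReal, ← tsum_mul_left]
  rw [← Summable.tsum_finsetSum fun (j : ℕ) _ ↦
    (summable_mul_xiKernel hp hm (hy.shiftIterR j) k).mul_left (f.coeff j : ℝ)]
  simp only [fsR, shiftIterR, Finset.sum_mul, mul_assoc]

lemma xiKernel_sub_xiKernel_pred (wp wm : ℤ → ℝ) (n i : ℤ) :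
    xiKernel wp wm n i - xiKernel wp wm (n - 1) i = if n = 0 then wm i - wp i else 0 := by
  unfold xiKernel
  split_ifs <;> first | omega | simp

lemma xiStarReal_add_one (hp : ∀ k : ℤ, Summable fun n : ℕ ↦ wp (k + n))
    (hm : ∀ k : ℤ, Summable fun n : ℕ ↦ wm (k - n)) {y : ℤ → ℝ} (hy : Bdd y) (k : ℤ) :
    xiStarReal wp wm y (k + 1) =
      xiStarReal wp wm (shiftIterR 1 y) k + y 0 * (wm (k + 1) - wp (k + 1)) := by
  have hindex (n : ℤ) : shiftIterR 1 y (n - 1) * xiKernel wp wm (n - 1) (k - (n - 1)) =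
      y n * xiKernel wp wm (n - 1) (k + 1 - n) := by
    rw [shiftIterR, sub_add_cancel, sub_sub_eq_add_sub]
  have hs := (Equiv.subRight (1 : ℤ)).summable_iff.2
    (summable_mul_xiKernel hp hm (hy.shiftIterR 1) k)
  have htsum := (Equiv.subRight (1 : ℤ)).tsum_eq
    fun n ↦ shiftIterR 1 y n * xiKernel wp wm n (k - n)
  simp only [Function.comp_def, Equiv.subRight_apply, hindex] at hs htsum
  rw [← sub_eq_iff_eq_add', xiStarReal, xiStarReal, ← htsum,
    ← (summable_mul_xiKernel hp hm hy (k + 1)).tsum_sub hs]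
  simp only [← mul_sub, xiKernel_sub_xiKernel_pred]
  rw [tsum_eq_single 0 fun n hn ↦ by rw [if_neg hn, mul_zero], if_pos rfl, sub_zero]

lemma xiStarReal_add_natCast (hp : ∀ k : ℤ, Summable fun n : ℕ ↦ wp (k + n))
    (hm : ∀ k : ℤ, Summable fun n : ℕ ↦ wm (k - n)) {y : ℤ → ℝ} (hy : Bdd y) (j : ℕ) (k : ℤ) :
    xiStarReal wp wm y (k + j) = xiStarReal wp wm (shiftIterR j y) k +
      ∑ i ∈ Finset.range j, y i * (wm (k + j - i) - wp (k + j - i)) := by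
  induction j generalizing k with
  | zero =>
    have hshift : shiftIterR 0 y = y := funext fun n ↦ by simp [shiftIterR]
    simp [hshift]
  | succ j ih =>
    have hshift : shiftIterR 1 (shiftIterR j y) = shiftIterR (j + 1 : ℕ) y := by
      ext n
      simp only [shiftIterR]
      push_cast
      ring_nf
    have hk : k + (j + 1 : ℕ) = k + 1 + j := by push_cast; ring
    rw [hk, ih, xiStarReal_add_one hp hm (hy.shiftIterR j), hshift, Finset.sum_range_succ,
      add_sub_cancel_right, shiftIterR, zero_add]
    ring

theorem sub_xiStarReal_fsR (hwp : IsWplus f wp) (hwm : IsWminus f wm) {y : ℤ → ℝ} (hy : Bdd y)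
    (k : ℤ) :
    y k - xiStarReal wp wm (fsR f y) k = ∑ j ∈ Finset.range (f.natDegree + 1),
      (f.coeff j : ℝ) * ∑ i ∈ Finset.range j, y i * (wm (k + j - i) - wp (k + j - i)) := by
  calc y k - xiStarReal wp wm (fsR f y) k
      = fsR f (xiStarReal wp wm y) k - xiStarReal wp wm (fsR f y) k := by
        rw [fsR_xiStarReal hwp hwm hy]
    _ = _ := by
        rw [xiStarReal_fsR hwp.summable hwm.summable hy, fsR, ← Finset.sum_sub_distrib]
        simp only [← mul_sub, xiStarReal_add_natCast hwp.summable hwm.summable hy,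
          add_sub_cancel_left]

lemma abs_sub_xiStarReal_fsR_le (hwp : IsWplus f wp) (hwm : IsWminus f wm) {A B : ℝ} {y : ℤ → ℝ}
    (hy : ∀ n, |y n| ≤ A) (hB : ∀ n, |wm n - wp n| ≤ B) (k : ℤ) :
    |y k - xiStarReal wp wm (fsR f y) k| ≤
      ∑ j ∈ Finset.range (f.natDegree + 1), |(f.coeff j : ℝ)| * (j * (A * B)) := by
  rw [sub_xiStarReal_fsR hwp hwm ⟨A, hy⟩]
  refine (Finset.abs_sum_le_sum_abs _ _).trans (Finset.sum_le_sum fun j _ ↦ ?_)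
  rw [abs_mul]
  refine mul_le_mul_of_nonneg_left ?_ (abs_nonneg _)
  calc |∑ i ∈ Finset.range j, y i * (wm (k + j - i) - wp (k + j - i))|
      ≤ ∑ i ∈ Finset.range j, |y i * (wm (k + j - i) - wp (k + j - i))| :=
        Finset.abs_sum_le_sum_abs _ _
    _ ≤ ∑ _i ∈ Finset.range j, A * B := Finset.sum_le_sum fun i _ ↦ by
        rw [abs_mul]
        exact mul_le_mul (hy _) (hB _) (abs_nonneg _) ((abs_nonneg _).trans (hy 0))
    _ = j * (A * B) := by rw [Finset.sum_const, Finset.card_range, nsmul_eq_mul]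

theorem exists_abs_sub_xiStarReal_fsR_le (hwp : IsWplus f wp) (hwm : IsWminus f wm) (A : ℝ) :
    ∃ r > (0 : ℝ), ∀ y : ℤ → ℝ, (∀ n, |y n| ≤ A) →
      ∀ k, |y k - xiStarReal wp wm (fsR f y) k| ≤ r := by
  obtain ⟨Bp, hBp⟩ := hwp.1
  obtain ⟨Bm, hBm⟩ := hwm.1
  have hB (n : ℤ) : |wm n - wp n| ≤ Bm + Bp := (abs_sub _ _).trans (add_le_add (hBm n) (hBp n))
  exact ⟨max _ 1, lt_max_of_lt_right one_pos, fun y hy k ↦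
    (abs_sub_xiStarReal_fsR_le hwp hwm hy hB k).trans (le_max_left _ _)⟩

end FundamentalSolutions

section Cover

variable {f : ℤ[X]} {wp wm : ℤ → ℝ}

lemma xiStarT_add_coe_mem_Xf (hwp : IsWplus f wp) (hwm : IsWminus f wm) {v : ℤ → ℤ}
    (hv : Bdd fun n ↦ (v n : ℝ)) {w : ℤ → ℝ} (hw : ∀ n, fsR f w n = 0) :
    (fun k ↦ xiStarT wp wm v k + (w k : Torus)) ∈ Xf f := by
  change (fun k ↦ ((xiStar wp wm v + w) k : Torus)) ∈ Xf f
  refine coe_mem_Xf_iff.2 fun n ↦ ⟨v n, ?_⟩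
  rw [fsR_add, Pi.add_apply, hw, add_zero, xiStar_eq_xiStarReal, fsR_xiStarReal hwp hwm hv]

theorem exists_eq_xiStarT_add_coe (hwp : IsWplus f wp) (hwm : IsWminus f wm) :
    ∃ r > (0 : ℝ), ∀ x ∈ Xf f, ∃ v : ℤ → ℤ, (fun n ↦ (v n : ℝ)) ∈ ZbarR f ∧
      ∃ w : ℤ → ℝ, (∀ n, fsR f w n = 0) ∧ (∀ n, |w n| ≤ r) ∧
        x = fun k ↦ xiStarT wp wm v k + (w k : Torus) := by
  obtain ⟨r, hr, hdefect⟩ := exists_abs_sub_xiStarReal_fsR_le hwp hwm 1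
  refine ⟨r, hr, fun x hx ↦ ?_⟩
  obtain ⟨y, hyIco, rfl⟩ := exists_mem_Ico_lift x
  have hy : ∀ n, |y n| ≤ 1 := fun n ↦ (abs_of_nonneg (hyIco n).1).trans_le (hyIco n).2.le
  choose v hv using coe_mem_Xf_iff.1 hx
  have hyv : fsR f y = fun n ↦ (v n : ℝ) := funext hv
  have hyY : y ∈ YfSet f := ⟨⟨⟨1, hy⟩, fun n ↦ ⟨v n, hv n⟩⟩, hyIco⟩
  refine ⟨v, ⟨y, subset_closure hyY, hyv⟩, y - xiStar wp wm v, fun n ↦ ?_, fun k ↦ ?_, ?_⟩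
  · rw [fsR_sub, xiStar_eq_xiStarReal, ← hyv, fsR_xiStarReal hwp hwm (Bdd.fsR ⟨1, hy⟩), sub_self,
      Pi.zero_apply]
  · rw [Pi.sub_apply, xiStar_eq_xiStarReal, ← hyv]
    exact hdefect y hy k
  · ext k
    rw [xiStarT, ← AddCircle.coe_add, Pi.sub_apply, add_sub_cancel]

end Cover

theorem xiStar_Zbar_cover_general (f : ℤ[X]) (wp wm : ℤ → ℝ) (hwp : IsWplus f wp)
    (hwm : IsWminus f wm) :
    ∃ r > (0:ℝ),
      {x : ℤ → Torus | ∃ v : ℤ → ℤ, (fun n => (v n : ℝ)) ∈ ZbarR f ∧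
        ∃ w : ℤ → ℝ, (∀ n, fsR f w n = 0) ∧ (∀ n, |w n| ≤ r) ∧
          x = fun k => xiStarT wp wm v k + ((w k : ℝ) : Torus)} = Xf f ∧
      {x : ℤ → Torus | ∃ v : ℤ → ℤ, (fun n => (v n : ℝ)) ∈ ZbarR f ∧
        ∃ w : ℤ → ℝ, (∀ n, fsR f w n = 0) ∧ Bdd w ∧
          x = fun k => xiStarT wp wm v k + ((w k : ℝ) : Torus)} = Xf f := by
  obtain ⟨r, hr, hcover⟩ := exists_eq_xiStarT_add_coe hwp hwm
  refine ⟨r, hr, Set.Subset.antisymm ?_ hcover, Set.Subset.antisymm ?_ fun x hx ↦ ?_⟩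
  · rintro _ ⟨v, hv, w, hw, -, rfl⟩
    exact xiStarT_add_coe_mem_Xf hwp hwm (bdd_of_mem_ZbarR hv) hw
  · rintro _ ⟨v, hv, w, hw, -, rfl⟩
    exact xiStarT_add_coe_mem_Xf hwp hwm (bdd_of_mem_ZbarR hv) hw
  · obtain ⟨v, hv, w, hw, hwr, hxw⟩ := hcover x hx
    exact ⟨v, hv, w, hw, ⟨r, hwr⟩, hxw⟩

/-- there is `r > 0` with `ξ*(Z̄_f) + ρ(B̄_r(W_f^∘)) = X_f`; in particular
`ξ*(Z̄_f) + X_f^∘ = X_f`. -/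
theorem xiStar_Zbar_cover (f : Polynomial ℤ) (hm : 1 ≤ f.natDegree)
    (hlead : 0 < f.leadingCoeff) (h0 : f.coeff 0 ≠ 0)
    (hirr : Irreducible (Polynomial.toLaurent f)) (hnc : Noncyclotomic f)
    (wp wm : ℤ → ℝ) (hwp : IsWplus f wp) (hwm : IsWminus f wm) :
    ∃ r > (0:ℝ),
      {x : ℤ → Torus | ∃ v : ℤ → ℤ, (fun n => (v n : ℝ)) ∈ ZbarR f ∧
        ∃ w : ℤ → ℝ, (∀ n, fsR f w n = 0) ∧ (∀ n, |w n| ≤ r) ∧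
          x = fun k => xiStarT wp wm v k + ((w k : ℝ) : Torus)} = Xf f ∧
      {x : ℤ → Torus | ∃ v : ℤ → ℤ, (fun n => (v n : ℝ)) ∈ ZbarR f ∧
        ∃ w : ℤ → ℝ, (∀ n, fsR f w n = 0) ∧ Bdd w ∧
          x = fun k => xiStarT wp wm v k + ((w k : ℝ) : Torus)} = Xf f :=
  xiStar_Zbar_cover_general f wp wm hwp hwm

end
end
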